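/- Let d : ℕ → ℕ satisfy d(n) ≤ n-1 and d(n)/log n → ∞ as n → ∞, and restrict to those n for which n·d(n) is even. Then for every ε > 0, with high probability the uniformly random d(n)-regular graph G ~ G(n, d(n)) has the following property: for every vertex r of G, there exist at least ⌊(1-ε)·d(n)⌋ independent spanning trees of G rooted at r. -/

import Mathlib

section
open Filter

/-- The spanning trees `T 0, …, T (t-1)` of `G` are independent spanning trees rooted at `r`:
each `T i` is a spanning tree of `G` (a tree on the whole vertex set, all of whose edges lie
in `G`), and for every vertex `v ≠ r`, the paths from `v` to `r` in any two distinct trees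
share only the vertices `v` and `r`. -/
def IsIST {n : ℕ} (G : SimpleGraph (Fin n)) (r : Fin n) {t : ℕ}
    (T : Fin t → SimpleGraph (Fin n)) : Prop :=
  (∀ i, T i ≤ G ∧ (T i).IsTree) ∧
  ∀ v : Fin n, v ≠ r → ∀ i j : Fin t, i ≠ j →
    ∀ p : (T i).Walk v r, ∀ q : (T j).Walk v r, p.IsPath → q.IsPath →
      ∀ x : Fin n, x ∈ p.support → x ∈ q.support → x = v ∨ x = r

/-- `G` contains (at least) `t` independent spanning trees rooted at `r`. -/
def HasISTs {n : ℕ} (G : SimpleGraph (Fin n)) (r : Fin n) (t : ℕ) : Prop :=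
  ∃ T : Fin t → SimpleGraph (Fin n), IsIST G r T


open Classical in
/-- Probability that the uniformly random `d`-regular graph `G(n,d)` satisfies the
property `A`: the uniform distribution over all `d`-regular simple graphs on `[n]`. -/
noncomputable def regProb (n d : ℕ) (A : SimpleGraph (Fin n) → Prop) : ℝ :=
  ((Finset.univ.filter (fun G : SimpleGraph (Fin n) =>
      (∀ v, Nat.card (G.neighborSet v) = d) ∧ A G)).card : ℝ) /
  ((Finset.univ.filter (fun G : SimpleGraph (Fin n) =>
      ∀ v, Nat.card (G.neighborSet v) = d)).card : ℝ)


end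


namespace ISTProof
open Finset
open scoped Classical

/-- Neighbourhood as a finset. -/
noncomputable def nb {n : ℕ} (G : SimpleGraph (Fin n)) (v : Fin n) : Finset (Fin n) :=
  Finset.univ.filter (fun u => G.Adj v u)

lemma mem_nb {n : ℕ} {G : SimpleGraph (Fin n)} {u v : Fin n} : u ∈ nb G v ↔ G.Adj v u := by
  simp [nb]

/-- The tree determined by a parent function. -/
def parTree {n : ℕ} (r : Fin n) (p : Fin n → Fin n) : SimpleGraph (Fin n) where
  Adj a b := a ≠ b ∧ ((a ≠ r ∧ p a = b) ∨ (b ≠ r ∧ p b = a))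
  symm := ⟨fun a b h => ⟨h.1.symm, h.2.symm⟩⟩
  loopless := ⟨fun a h => h.1 rfl⟩

lemma parTree_adj {n : ℕ} {r : Fin n} {p : Fin n → Fin n} {ρ : Fin n → ℕ}
    (hρ : ∀ v, v ≠ r → ρ (p v) < ρ v) {v : Fin n} (hv : v ≠ r) : (parTree r p).Adj v (p v) := by
  refine ⟨?_, Or.inl ⟨hv, rfl⟩⟩
  intro h
  have := hρ v hv
  rw [← h] at this
  exact lt_irrefl _ this

/-- walk to the root staying in a prescribed closed set -/
lemma parTree_walk {n : ℕ} {r : Fin n} {p : Fin n → Fin n} {ρ : Fin n → ℕ}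
    (hρ : ∀ v, v ≠ r → ρ (p v) < ρ v) (S : Set (Fin n))
    (hS : ∀ v ∈ S, v ≠ r → p v ∈ S) (v : Fin n) (hv : v ∈ S) :
    ∃ w : (parTree r p).Walk v r, ∀ x ∈ w.support, x ∈ S := by
  induction hk : ρ v using Nat.strong_induction_on generalizing v with
  | _ k ih =>
    by_cases h : v = r
    · subst h
      exact ⟨SimpleGraph.Walk.nil, by simpa using hv⟩
    · obtain ⟨w, hw⟩ := ih _ (hk ▸ hρ v h) (p v) (hS v hv h) rfl
      refine ⟨SimpleGraph.Walk.cons (parTree_adj hρ h) w, ?_⟩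
      intro x hx
      rw [SimpleGraph.Walk.support_cons, List.mem_cons] at hx
      rcases hx with rfl | hx
      · exact hv
      · exact hw x hx

lemma parTree_isTree {n : ℕ} {r : Fin n} {p : Fin n → Fin n} {ρ : Fin n → ℕ}
    (hρ : ∀ v, v ≠ r → ρ (p v) < ρ v) : (parTree r p).IsTree := by
  have hconn : (parTree r p).Connected := by
    haveI : Nonempty (Fin n) := ⟨r⟩
    refine ⟨?_⟩
    intro a b
    have key : ∀ a, (parTree r p).Reachable a r := fun a => by
      obtain ⟨w, -⟩ := parTree_walk hρ Set.univ (by simp) a (by simp)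
      exact ⟨w⟩
    exact (key a).trans (key b).symm
  rw [SimpleGraph.isTree_iff_connected_and_card]
  refine ⟨hconn, le_antisymm ?_ hconn.card_vert_le_card_edgeSet_add_one⟩
  have hsub : (parTree r p).edgeSet ⊆
      (((Finset.univ.erase r).image (fun v => s(v, p v)) : Finset (Sym2 (Fin n))) : Set _) := by
    intro e he
    induction e with
    | _ a b =>
      rw [SimpleGraph.mem_edgeSet] at he
      rcases he.2 with ⟨h1, h2⟩ | ⟨h1, h2⟩
      · simp only [Finset.coe_image, Set.mem_image, Finset.mem_coe, Finset.mem_erase]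
        exact ⟨a, ⟨h1, Finset.mem_univ _⟩, by rw [h2]⟩
      · simp only [Finset.coe_image, Set.mem_image, Finset.mem_coe, Finset.mem_erase]
        exact ⟨b, ⟨h1, Finset.mem_univ _⟩, by rw [h2, Sym2.eq_swap]⟩
  have h1 : Nat.card (parTree r p).edgeSet ≤ (Finset.univ.erase r).card := by
    rw [Nat.card_coe_set_eq]
    refine (Set.ncard_le_ncard hsub (Finset.finite_toSet _)).trans ?_
    rw [Set.ncard_coe_finset]
    exact Finset.card_image_le
  have h2 : (Finset.univ.erase r : Finset (Fin n)).card + 1 = n := by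
    rw [Finset.card_erase_of_mem (Finset.mem_univ _)]
    simp only [Finset.card_univ, Fintype.card_fin]
    have := r.pos
    omega
  simp only [Nat.card_eq_fintype_card, Fintype.card_fin] at *
  omega

/-- `G` restricted to the vertex set `S`. -/
def restr {n : ℕ} (G : SimpleGraph (Fin n)) (S : Finset (Fin n)) : SimpleGraph (Fin n) where
  Adj a b := G.Adj a b ∧ a ∈ S ∧ b ∈ S
  symm := ⟨fun _ _ h => ⟨h.1.symm, h.2.2, h.2.1⟩⟩
  loopless := ⟨fun _ h => G.loopless.irrefl _ h.1⟩

/-- `D` is connected to `r` inside `D ∪ {r}`. -/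
def ConnTo {n : ℕ} (G : SimpleGraph (Fin n)) (r : Fin n) (D : Finset (Fin n)) : Prop :=
  ∀ x ∈ D, (restr G (insert r D)).Reachable x r

lemma ConnTo.parent {n : ℕ} {G : SimpleGraph (Fin n)} {r : Fin n} {D : Finset (Fin n)}
    (h : ConnTo G r D) (hr : r ∉ D) (x : Fin n) (hx : x ∈ D) :
    ∃ y, G.Adj x y ∧ y ∈ insert r D ∧
      (restr G (insert r D)).dist y r < (restr G (insert r D)).dist x r := by
  obtain ⟨w, hw⟩ := (h x hx).exists_walk_length_eq_dist
  have hne : x ≠ r := fun e => hr (e ▸ hx)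
  cases w with
  | nil => exact absurd rfl hne
  | @cons _ y _ hadj w' =>
    refine ⟨y, hadj.1, hadj.2.2, ?_⟩
    rw [← hw, SimpleGraph.Walk.length_cons]
    have := SimpleGraph.dist_le w'
    omega

/-- index `i` is missing at `v`. -/
def Missing {n t : ℕ} (G : SimpleGraph (Fin n)) (D : Fin t → Finset (Fin n)) (v : Fin n)
    (i : Fin t) : Prop := v ∉ D i ∧ ∀ u ∈ D i, ¬ G.Adj v u

/-- Core construction of independent spanning trees. -/
lemma hasISTs_of_cores {n t : ℕ} (G : SimpleGraph (Fin n)) (r : Fin n)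
    (D : Fin t → Finset (Fin n))
    (hdisj : ∀ i j, i ≠ j → Disjoint (D i) (D j))
    (hr : ∀ i, r ∉ D i) (hconn : ∀ i, ConnTo G r (D i))
    (π : Fin n → Fin t → Fin n)
    (hπ1 : ∀ v, v ≠ r → ∀ i, Missing G D v i →
      G.Adj v (π v i) ∧ π v i ≠ r ∧ (∀ j, π v i ∉ D j) ∧ ∃ u ∈ D i, G.Adj (π v i) u)
    (hπ2 : ∀ v, v ≠ r → ∀ i j, Missing G D v i → Missing G D v j → π v i = π v j → i = j) :
    HasISTs G r t := by
  -- parents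
  have hpar : ∀ (i : Fin t) (v : Fin n), v ≠ r → ∃ y, G.Adj v y ∧
      (v ∈ D i → y ∈ insert r (D i) ∧
        (restr G (insert r (D i))).dist y r < (restr G (insert r (D i))).dist v r) ∧
      (v ∉ D i → ¬ Missing G D v i → y ∈ D i) ∧
      (Missing G D v i → y = π v i) := by
    intro i v hv
    by_cases h1 : v ∈ D i
    · obtain ⟨y, hy1, hy2, hy3⟩ := (hconn i).parent (hr i) v h1
      exact ⟨y, hy1, fun _ => ⟨hy2, hy3⟩, fun h => absurd h1 h, fun h => absurd h1 h.1⟩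
    · by_cases h2 : Missing G D v i
      · exact ⟨π v i, (hπ1 v hv i h2).1, fun h => absurd h h1, fun _ h => absurd h2 h, fun _ => rfl⟩
      · have : ∃ u ∈ D i, G.Adj v u := by
          by_contra hcon
          push Not at hcon
          exact h2 ⟨h1, hcon⟩
        obtain ⟨u, hu1, hu2⟩ := this
        exact ⟨u, hu2, fun h => absurd h h1, fun _ _ => hu1, fun h => absurd h h2⟩
  choose! p hpG hp1 hp2 hp3 using hpar
  let M : Fin t → ℕ := fun i => (Finset.univ.sup fun v => (restr G (insert r (D i))).dist v r)
  let ρ : Fin t → Fin n → ℕ := fun i v =>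
    if v = r then 0 else if v ∈ D i then (restr G (insert r (D i))).dist v r
    else if Missing G D v i then M i + 2 else M i + 1
  have hM : ∀ i v, (restr G (insert r (D i))).dist v r ≤ M i := fun i v =>
    Finset.le_sup (f := fun v => (restr G (insert r (D i))).dist v r) (Finset.mem_univ v)
  have hρ : ∀ i v, v ≠ r → ρ i (p i v) < ρ i v := by
    intro i v hv
    by_cases h1 : v ∈ D i
    · obtain ⟨h2, h3⟩ := hp1 i v hv h1
      simp only [ρ, if_neg hv, if_pos h1]
      rw [Finset.mem_insert] at h2
      rcases h2 with h2 | h2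
      · rw [if_pos h2]; omega
      · have : p i v ≠ r := fun e => hr i (e ▸ h2)
        rw [if_neg this, if_pos h2]; exact h3
    · by_cases h2 : Missing G D v i
      · have h3 := hp3 i v hv h2
        obtain ⟨-, h4, h5, u, hu, hadj⟩ := hπ1 v hv i h2
        have hnm : ¬ Missing G D (π v i) i := fun hm => hm.2 u hu hadj
        simp only [ρ, if_neg hv, if_neg h1, if_pos h2, h3, if_neg h4, if_neg (h5 i), if_neg hnm]
        omega
      · have h3 := hp2 i v hv h1 h2
        have : p i v ≠ r := fun e => hr i (e ▸ h3)
        simp only [ρ, if_neg hv, if_neg h1, if_neg h2, if_neg this, if_pos h3]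
        have := hM i (p i v)
        omega
  refine ⟨fun i => parTree r (p i), ⟨fun i => ⟨?_, parTree_isTree (hρ i)⟩, ?_⟩⟩
  · intro a b hab
    rcases hab.2 with ⟨h1, h2⟩ | ⟨h1, h2⟩
    · exact h2 ▸ hpG i a h1
    · exact (h2 ▸ hpG i b h1).symm
  · -- supports
    have hsupp : ∀ (v : Fin n) (i : Fin t), v ≠ r → ∀ q : (parTree r (p i)).Walk v r, q.IsPath →
        ∀ x ∈ q.support, x = v ∨ x = r ∨ x ∈ D i ∨ (Missing G D v i ∧ x = π v i) := by
      intro v i hv q hq x hx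
      let S : Set (Fin n) := {x | x = v ∨ x = r ∨ x ∈ D i ∨ (Missing G D v i ∧ x = π v i)}
      have hS : ∀ y ∈ S, y ≠ r → p i y ∈ S := by
        intro y hy hyr
        by_cases h1 : y ∈ D i
        · have := (hp1 i y hyr h1).1
          rw [Finset.mem_insert] at this
          rcases this with h | h
          · exact Or.inr (Or.inl h)
          · exact Or.inr (Or.inr (Or.inl h))
        · by_cases h2 : Missing G D y i
          · rcases hy with rfl | hy | hy | ⟨hy, rfl⟩
            · exact Or.inr (Or.inr (Or.inr ⟨h2, hp3 i y hyr h2⟩))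
            · exact absurd hy hyr
            · exact absurd hy h1
            · obtain ⟨-, -, -, u, hu, hadj⟩ := hπ1 v hv i hy
              exact absurd hadj (h2.2 u hu)
          · exact Or.inr (Or.inr (Or.inl (hp2 i y hyr h1 h2)))
      obtain ⟨w, hw⟩ := parTree_walk (hρ i) S hS v (Or.inl rfl)
      have hsub := (parTree_isTree (hρ i)).isAcyclic.subsingleton_path v r
      have heq : (⟨q, hq⟩ : (parTree r (p i)).Path v r) = w.toPath := Subsingleton.elim _ _
      have hq' : q = (w.toPath : (parTree r (p i)).Walk v r) := by rw [← heq]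
      rw [hq'] at hx
      exact hw x (SimpleGraph.Walk.support_toPath_subset w hx)
    intro v hv i j hij q1 q2 hq1 hq2 x hx1 hx2
    have h1 := hsupp v i hv q1 hq1 x hx1
    have h2 := hsupp v j hv q2 hq2 x hx2
    rcases h1 with h1 | h1 | h1 | ⟨h1, h1'⟩
    · exact Or.inl h1
    · exact Or.inr h1
    · rcases h2 with h2 | h2 | h2 | ⟨h2, h2'⟩
      · exact Or.inl h2
      · exact Or.inr h2
      · exact absurd h2 (Finset.disjoint_left.mp (hdisj i j hij) h1)
      · exact absurd (h2' ▸ h1) ((hπ1 v hv j h2).2.2.1 i)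
    · rcases h2 with h2 | h2 | h2 | ⟨h2, h2'⟩
      · exact Or.inl h2
      · exact Or.inr h2
      · exact absurd (h1' ▸ h2) ((hπ1 v hv i h1).2.2.1 j)
      · exact absurd (hπ2 v hv i j h1 h2 (h1'.symm.trans h2')) hij

/-- Hall criterion for the matchings. -/
lemma hasISTs_of_hall {n t : ℕ} (G : SimpleGraph (Fin n)) (r : Fin n)
    (D : Fin t → Finset (Fin n))
    (hdisj : ∀ i j, i ≠ j → Disjoint (D i) (D j))
    (hr : ∀ i, r ∉ D i) (hconn : ∀ i, ConnTo G r (D i)) (K : ℕ)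
    (U : Fin n → Finset (Fin n))
    (hU : ∀ v, v ≠ r → ∀ w ∈ U v, G.Adj v w ∧ w ≠ r ∧ ∀ j, w ∉ D j)
    (ha : ∀ v, v ≠ r → ∀ i, Missing G D v i →
      K ≤ ((U v).filter (fun w => ∃ u ∈ D i, G.Adj w u)).card)
    (hb : ∀ v, v ≠ r → ∀ S : Finset (Fin t), S.card = K → (∀ i ∈ S, Missing G D v i) →
      (Finset.univ.filter (fun i => Missing G D v i)).card ≤
        ((U v).filter (fun w => ∃ i ∈ S, ∃ u ∈ D i, G.Adj w u)).card) :
    HasISTs G r t := by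
  have key : ∀ v, v ≠ r → ∃ f : Fin t → Fin n,
      (∀ i, Missing G D v i → f i ∈ (U v).filter (fun w => ∃ u ∈ D i, G.Adj w u)) ∧
      (∀ i j, Missing G D v i → Missing G D v j → f i = f j → i = j) := by
    intro v hv
    let N : {i : Fin t // Missing G D v i} → Finset (Fin n) :=
      fun i => (U v).filter (fun w => ∃ u ∈ D i.1, G.Adj w u)
    have hall : ∀ S : Finset {i : Fin t // Missing G D v i}, S.card ≤ (S.biUnion N).card := by
      intro S
      rcases S.eq_empty_or_nonempty with rfl | ⟨i, hi⟩
      · simp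
      by_cases hSK : S.card ≤ K
      · refine hSK.trans ((ha v hv i.1 i.2).trans (Finset.card_le_card ?_))
        exact Finset.subset_biUnion_of_mem N hi
      · push Not at hSK
        obtain ⟨S', hS', hcard⟩ := Finset.exists_subset_card_eq hSK.le
        have := hb v hv (S'.map (Function.Embedding.subtype _)) (by simpa using hcard) (by
          intro i hi
          simp only [Finset.mem_map, Function.Embedding.coe_subtype] at hi
          obtain ⟨a, _, rfl⟩ := hi
          exact a.2)
        have h1 : S.card ≤ (Finset.univ.filter (fun i => Missing G D v i)).card := by
          rw [← Finset.card_map (Function.Embedding.subtype _)]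
          apply Finset.card_le_card
          intro i hi
          simp only [Finset.mem_map, Function.Embedding.coe_subtype] at hi
          obtain ⟨a, _, rfl⟩ := hi
          simpa using a.2
        refine h1.trans (this.trans (Finset.card_le_card ?_))
        intro w hw
        simp only [Finset.mem_filter, Finset.mem_map, Function.Embedding.coe_subtype] at hw
        obtain ⟨hw1, i, ⟨a, ha1, rfl⟩, u, hu, hadj⟩ := hw
        rw [Finset.mem_biUnion]
        exact ⟨a, hS' ha1, by simp only [N, Finset.mem_filter]; exact ⟨hw1, u, hu, hadj⟩⟩
    obtain ⟨f, hf1, hf2⟩ := (Finset.all_card_le_biUnion_card_iff_exists_injective N).mp hall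
    refine ⟨fun i => if h : Missing G D v i then f ⟨i, h⟩ else v, ?_, ?_⟩
    · intro i hi
      simp only [dif_pos hi]
      exact hf2 ⟨i, hi⟩
    · intro i j hi hj hij
      simp only [dif_pos hi, dif_pos hj] at hij
      have := hf1 hij
      simpa using this
  choose! π h1 h2 using key
  refine hasISTs_of_cores G r D hdisj hr hconn π ?_ h2
  intro v hv i hi
  have := h1 v hv i hi
  rw [Finset.mem_filter] at this
  obtain ⟨h3, h4⟩ := this
  obtain ⟨h5, h6, h7⟩ := hU v hv _ h3
  exact ⟨h5, h6, h7, h4⟩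

end ISTProof


namespace ISTProof
open Finset
open scoped Classical

/-- The pairs flipped by a switching. -/
def swC {n : ℕ} (w w' s z a b : Fin n) : Prop :=
  ((a = w ∨ a = w') ∧ (b = s ∨ b = z)) ∨ ((b = w ∨ b = w') ∧ (a = s ∨ a = z))

/-- Switching: flip all pairs between `{w,w'}` and `{s,z}`. -/
def sw {n : ℕ} (G : SimpleGraph (Fin n)) (w w' s z : Fin n) : SimpleGraph (Fin n) where
  Adj a b := a ≠ b ∧ ¬ (G.Adj a b ↔ swC w w' s z a b)
  symm := ⟨fun a b h => ⟨h.1.symm, by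
    have h2 := h.2
    rw [G.adj_comm] at h2
    have : swC w w' s z b a ↔ swC w w' s z a b := by unfold swC; tauto
    rw [this]; exact h2⟩⟩
  loopless := ⟨fun a h => h.1 rfl⟩

lemma sw_sw {n : ℕ} (G : SimpleGraph (Fin n)) (w w' s z : Fin n) :
    sw (sw G w w' s z) w w' s z = G := by
  ext a b
  by_cases h : a = b
  · subst h; simp [sw]
  · simp only [sw, ne_eq, h, not_false_eq_true, true_and]
    tauto

/-- A switching is valid if it removes `w's`, `wz` and adds `ws`, `w'z`. -/
structure Valid {n : ℕ} (G : SimpleGraph (Fin n)) (w w' s z : Fin n) : Prop where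
  ww : w ≠ w'
  sw' : G.Adj w' s
  nsw : ¬ G.Adj w s
  sne : s ≠ w
  zw : G.Adj w z
  nzw : ¬ G.Adj w' z
  zne : z ≠ w'

variable {n : ℕ} {G : SimpleGraph (Fin n)} {w w' s z : Fin n}

lemma Valid.ne (h : Valid G w w' s z) :
    w ≠ w' ∧ s ≠ w ∧ s ≠ w' ∧ z ≠ w ∧ z ≠ w' ∧ s ≠ z := by
  refine ⟨h.ww, h.sne, h.sw'.ne', h.zw.ne', h.zne, ?_⟩
  rintro rfl
  exact h.nsw h.zw

lemma Valid.adj_w (h : Valid G w w' s z) (x : Fin n) :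
    (sw G w w' s z).Adj w x ↔ x = s ∨ (G.Adj w x ∧ x ≠ z) := by
  have h1 := h.nsw
  have h2 := h.zw
  obtain ⟨a1, a2, a3, a4, a5, a6⟩ := h.ne
  have a7 : ¬ G.Adj w w := G.loopless.irrefl w
  simp only [sw, swC]
  grind

lemma Valid.adj_w' (h : Valid G w w' s z) (x : Fin n) :
    (sw G w w' s z).Adj w' x ↔ x = z ∨ (G.Adj w' x ∧ x ≠ s) := by
  have h1 := h.nzw
  have h2 := h.sw'
  obtain ⟨a1, a2, a3, a4, a5, a6⟩ := h.ne
  have a7 : ¬ G.Adj w' w' := G.loopless.irrefl w'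
  simp only [sw, swC]
  grind

lemma Valid.adj_s (h : Valid G w w' s z) (x : Fin n) :
    (sw G w w' s z).Adj s x ↔ x = w ∨ (G.Adj s x ∧ x ≠ w') := by
  have h1 : ¬ G.Adj s w := fun e => h.nsw e.symm
  have h2 := h.sw'.symm
  obtain ⟨a1, a2, a3, a4, a5, a6⟩ := h.ne
  have a7 : ¬ G.Adj s s := G.loopless.irrefl s
  simp only [sw, swC]
  grind

lemma Valid.adj_z (h : Valid G w w' s z) (x : Fin n) :
    (sw G w w' s z).Adj z x ↔ x = w' ∨ (G.Adj z x ∧ x ≠ w) := by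
  have h1 : ¬ G.Adj z w' := fun e => h.nzw e.symm
  have h2 := h.zw.symm
  obtain ⟨a1, a2, a3, a4, a5, a6⟩ := h.ne
  have a7 : ¬ G.Adj z z := G.loopless.irrefl z
  simp only [sw, swC]
  grind

lemma sw_adj_other {v : Fin n} (h1 : v ≠ w) (h2 : v ≠ w') (h3 : v ≠ s) (h4 : v ≠ z) (x : Fin n) :
    (sw G w w' s z).Adj v x ↔ G.Adj v x := by
  simp only [sw, swC, h1, h2, h3, h4]
  by_cases e : v = x
  · subst e; simp
  · simp [e]

lemma sw_adj_same {a b : Fin n} (h1 : ¬ swC w w' s z a b) :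
    (sw G w w' s z).Adj a b ↔ G.Adj a b := by
  simp only [sw, h1]
  by_cases e : a = b
  · subst e; simp
  · simp [e]

lemma Valid.nb_w (h : Valid G w w' s z) :
    nb (sw G w w' s z) w = insert s ((nb G w).erase z) := by
  ext x; simp only [mem_nb, h.adj_w, mem_insert, mem_erase]; tauto

lemma Valid.nb_w' (h : Valid G w w' s z) :
    nb (sw G w w' s z) w' = insert z ((nb G w').erase s) := by
  ext x; simp only [mem_nb, h.adj_w', mem_insert, mem_erase]; tauto

lemma Valid.nb_s (h : Valid G w w' s z) :
    nb (sw G w w' s z) s = insert w ((nb G s).erase w') := by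
  ext x; simp only [mem_nb, h.adj_s, mem_insert, mem_erase]; tauto

lemma Valid.nb_z (h : Valid G w w' s z) :
    nb (sw G w w' s z) z = insert w' ((nb G z).erase w) := by
  ext x; simp only [mem_nb, h.adj_z, mem_insert, mem_erase]; tauto

lemma sw_nb_other {v : Fin n} (h1 : v ≠ w) (h2 : v ≠ w') (h3 : v ≠ s) (h4 : v ≠ z) :
    nb (sw G w w' s z) v = nb G v := by
  ext x; simp only [mem_nb, sw_adj_other h1 h2 h3 h4]

lemma card_insert_erase' {α : Type*} [DecidableEq α] {A : Finset α} {a b : α} (ha : a ∉ A)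
    (hb : b ∈ A) : (insert a (A.erase b)).card = A.card := by
  rw [card_insert_of_notMem (by simp [ha]), card_erase_of_mem hb]
  have := card_pos.mpr ⟨b, hb⟩
  omega

lemma Valid.card_nb (h : Valid G w w' s z) (v : Fin n) :
    (nb (sw G w w' s z) v).card = (nb G v).card := by
  by_cases h1 : v = w
  · subst h1
    rw [h.nb_w, card_insert_erase' (by simpa [mem_nb] using h.nsw) (by simpa [mem_nb] using h.zw)]
  by_cases h2 : v = w'
  · subst h2
    rw [h.nb_w', card_insert_erase' (by simpa [mem_nb] using h.nzw) (by simpa [mem_nb] using h.sw')]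
  by_cases h3 : v = s
  · subst h3
    rw [h.nb_s, card_insert_erase' (by simpa [mem_nb] using fun e => h.nsw e.symm)
      (by simpa [mem_nb] using h.sw'.symm)]
  by_cases h4 : v = z
  · subst h4
    rw [h.nb_z, card_insert_erase' (by simpa [mem_nb] using fun e => h.nzw e.symm)
      (by simpa [mem_nb] using h.zw.symm)]
  rw [sw_nb_other h1 h2 h3 h4]

/-- The family of `d`-regular graphs. -/
noncomputable def Om (n d : ℕ) : Finset (SimpleGraph (Fin n)) :=
  univ.filter (fun G => ∀ v, (nb G v).card = d)

lemma mem_Om {d : ℕ} : G ∈ Om n d ↔ ∀ v, (nb G v).card = d := by simp [Om]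

lemma Valid.mem_Om (h : Valid G w w' s z) {d : ℕ} (hG : G ∈ Om n d) :
    sw G w w' s z ∈ Om n d := by
  rw [ISTProof.mem_Om] at *
  intro v; rw [h.card_nb, hG]

/-- regular graphs with a property -/
noncomputable def ev (n d : ℕ) (P : SimpleGraph (Fin n) → Prop) : Finset (SimpleGraph (Fin n)) :=
  (Om n d).filter P

lemma mem_ev {d : ℕ} {P : SimpleGraph (Fin n) → Prop} : G ∈ ev n d P ↔ G ∈ Om n d ∧ P G := by
  simp [ev]

/-- number of regular graphs with a property -/
noncomputable def cnt (n d : ℕ) (P : SimpleGraph (Fin n) → Prop) : ℝ := ((ev n d P).card : ℝ)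

lemma cnt_nonneg {d : ℕ} {P : SimpleGraph (Fin n) → Prop} : 0 ≤ cnt n d P := by
  unfold cnt; positivity

lemma cnt_mono {d : ℕ} {P Q : SimpleGraph (Fin n) → Prop} (h : ∀ G ∈ Om n d, P G → Q G) :
    cnt n d P ≤ cnt n d Q := by
  unfold cnt
  norm_cast
  apply card_le_card
  intro G hG
  rw [mem_ev] at *
  exact ⟨hG.1, h G hG.1 hG.2⟩

lemma cnt_le_Om {d : ℕ} {P : SimpleGraph (Fin n) → Prop} : cnt n d P ≤ (Om n d).card := by
  unfold cnt
  norm_cast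
  apply card_le_card
  intro G hG
  exact (mem_ev.1 hG).1

lemma cnt_or {d : ℕ} {P Q : SimpleGraph (Fin n) → Prop} :
    cnt n d (fun G => P G ∨ Q G) ≤ cnt n d P + cnt n d Q := by
  unfold cnt
  norm_cast
  refine le_trans (card_le_card ?_) (card_union_le _ _)
  intro G hG
  rw [mem_union, mem_ev, mem_ev]
  rw [mem_ev] at hG
  tauto

lemma cnt_exists {d : ℕ} {ι : Type*} (I : Finset ι) (P : ι → SimpleGraph (Fin n) → Prop) :
    cnt n d (fun G => ∃ i ∈ I, P i G) ≤ ∑ i ∈ I, cnt n d (P i) := by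
  unfold cnt
  norm_cast
  refine le_trans (card_le_card ?_) (card_biUnion_le (s := I) (t := fun i => ev n d (P i)))
  intro G hG
  rw [mem_ev] at hG
  obtain ⟨h1, i, hi, h2⟩ := hG
  rw [mem_biUnion]
  exact ⟨i, hi, by rw [mem_ev]; exact ⟨h1, h2⟩⟩

/-- Weighted double counting for switchings. -/
lemma sw_count_weight {ι : Type*} (𝒜 ℬ : Finset (SimpleGraph (Fin n)))
    (f : ι → Fin n × Fin n × Fin n × Fin n)
    (Fwd Rev : SimpleGraph (Fin n) → Finset ι) (ω : SimpleGraph (Fin n) → ι → ℝ)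
    (hω : ∀ G i, 0 ≤ ω G i)
    (h : ∀ G ∈ 𝒜, ∀ i ∈ Fwd G,
      sw G (f i).1 (f i).2.1 (f i).2.2.1 (f i).2.2.2 ∈ ℬ ∧
      i ∈ Rev (sw G (f i).1 (f i).2.1 (f i).2.2.1 (f i).2.2.2) ∧
      ω G i ≤ ω (sw G (f i).1 (f i).2.1 (f i).2.2.1 (f i).2.2.2) i) :
    ∑ G ∈ 𝒜, ∑ i ∈ Fwd G, ω G i ≤ ∑ G ∈ ℬ, ∑ i ∈ Rev G, ω G i := by
  rw [Finset.sum_sigma' 𝒜 Fwd, Finset.sum_sigma' ℬ Rev]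
  set g : (Σ _ : SimpleGraph (Fin n), ι) → (Σ _ : SimpleGraph (Fin n), ι) :=
    fun p => ⟨sw p.1 (f p.2).1 (f p.2).2.1 (f p.2).2.2.1 (f p.2).2.2.2, p.2⟩ with hg
  have hinj : Set.InjOn g (𝒜.sigma Fwd) := by
    intro p _ q _ hpq
    obtain ⟨G1, i⟩ := p
    obtain ⟨G2, j⟩ := q
    simp only [hg, Sigma.mk.injEq] at hpq
    obtain ⟨e1, e2⟩ := hpq
    have e2 := eq_of_heq e2
    subst e2
    have : G1 = G2 := by
      rw [← sw_sw G1 (f i).1 (f i).2.1 (f i).2.2.1 (f i).2.2.2, e1, sw_sw]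
    rw [this]
  calc ∑ p ∈ 𝒜.sigma Fwd, ω p.1 p.2 ≤ ∑ p ∈ 𝒜.sigma Fwd, ω (g p).1 (g p).2 := by
        apply sum_le_sum
        intro p hp
        rw [mem_sigma] at hp
        exact (h p.1 hp.1 p.2 hp.2).2.2
    _ = ∑ q ∈ (𝒜.sigma Fwd).image g, ω q.1 q.2 := by
        rw [sum_image hinj]
    _ ≤ ∑ q ∈ ℬ.sigma Rev, ω q.1 q.2 := by
        apply sum_le_sum_of_subset_of_nonneg
        · intro q hq
          rw [mem_image] at hq
          obtain ⟨p, hp, rfl⟩ := hq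
          rw [mem_sigma] at hp
          have := h p.1 hp.1 p.2 hp.2
          rw [mem_sigma]
          exact ⟨this.1, this.2.1⟩
        · intros; exact hω _ _

/-- Double counting for switchings. -/
lemma sw_count {ι : Type*} (𝒜 ℬ : Finset (SimpleGraph (Fin n)))
    (f : ι → Fin n × Fin n × Fin n × Fin n)
    (Fwd Rev : SimpleGraph (Fin n) → Finset ι)
    (h : ∀ G ∈ 𝒜, ∀ i ∈ Fwd G,
      sw G (f i).1 (f i).2.1 (f i).2.2.1 (f i).2.2.2 ∈ ℬ ∧
      i ∈ Rev (sw G (f i).1 (f i).2.1 (f i).2.2.1 (f i).2.2.2)) {F R : ℝ}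
    (hF : ∀ G ∈ 𝒜, F ≤ (Fwd G).card) (hR : ∀ G ∈ ℬ, ((Rev G).card : ℝ) ≤ R) :
    (𝒜.card : ℝ) * F ≤ ℬ.card * R := by
  have := sw_count_weight 𝒜 ℬ f Fwd Rev (fun _ _ => 1) (by simp)
    (fun G hG i hi => ⟨(h G hG i hi).1, (h G hG i hi).2, le_rfl⟩)
  simp only [sum_const, nsmul_eq_mul, mul_one] at this
  calc (𝒜.card : ℝ) * F = ∑ G ∈ 𝒜, F := by simp
    _ ≤ ∑ G ∈ 𝒜, ((Fwd G).card : ℝ) := sum_le_sum hF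
    _ ≤ _ := this
    _ ≤ ∑ G ∈ ℬ, R := sum_le_sum hR
    _ = _ := by simp

/-- dependent product of finsets -/
noncomputable def dp {α β : Type*} [Fintype α] [Fintype β] (A : Finset α) (B : α → Finset β) :
    Finset (α × β) := univ.filter (fun p => p.1 ∈ A ∧ p.2 ∈ B p.1)

lemma mem_dp {α β : Type*} [Fintype α] [Fintype β] {A : Finset α} {B : α → Finset β} {p : α × β} :
    p ∈ dp A B ↔ p.1 ∈ A ∧ p.2 ∈ B p.1 := by simp [dp]

lemma sum_dp {α β : Type*} [Fintype α] [Fintype β] {A : Finset α} {B : α → Finset β}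
    (f : α × β → ℝ) : ∑ p ∈ dp A B, f p = ∑ x ∈ A, ∑ y ∈ B x, f (x, y) :=
  Finset.sum_finset_product _ _ _ (fun _ => mem_dp)

lemma card_dp {α β : Type*} [Fintype α] [Fintype β] {A : Finset α} {B : α → Finset β} :
    ((dp A B).card : ℝ) = ∑ x ∈ A, ((B x).card : ℝ) := by
  have := sum_dp (A := A) (B := B) (fun _ => 1)
  simpa using this

lemma card_dp_ge {α β : Type*} [Fintype α] [Fintype β] {A : Finset α} {B : α → Finset β} {a b : ℝ}
    (ha : a ≤ A.card) (hb : ∀ x ∈ A, b ≤ (B x).card) (hb0 : 0 ≤ b) : a * b ≤ (dp A B).card := by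
  rw [card_dp]
  calc a * b ≤ A.card * b := by gcongr
    _ = ∑ x ∈ A, b := by simp
    _ ≤ _ := sum_le_sum hb

lemma card_dp_le {α β : Type*} [Fintype α] [Fintype β] {A : Finset α} {B : α → Finset β} {a b : ℝ}
    (ha : A.card ≤ a) (hb : ∀ x ∈ A, ((B x).card : ℝ) ≤ b) (hb0 : 0 ≤ b) :
    (dp A B).card ≤ a * b := by
  rw [card_dp]
  calc _ ≤ ∑ x ∈ A, b := sum_le_sum hb
    _ = A.card * b := by simp
    _ ≤ _ := by gcongr

/-- Chain lemma. -/
lemma chain_bound (e : ℕ → ℝ) (N T : ℝ) (k0 k1 : ℕ) (hk : k0 ≤ k1) (hN : ∀ k, e k ≤ N)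
    (hT : 0 ≤ T)
    (hstep : ∀ k, k0 ≤ k → k < k1 → 2 * (e k - T) ≤ e (k + 1)) :
    e k0 ≤ N / 2 ^ (k1 - k0) + 2 * T := by
  obtain ⟨j, rfl⟩ := Nat.exists_eq_add_of_le hk
  rw [Nat.add_sub_cancel_left]
  clear hk
  induction j generalizing k0 with
  | zero => simp; linarith [hN k0]
  | succ j ih =>
    have h1 := ih (k0 + 1) (fun k h h' => hstep k (by omega) (by omega))
    have h2 := hstep k0 le_rfl (by omega)
    have : N / 2 ^ (j + 1) = N / 2 ^ j / 2 := by rw [pow_succ]; field_simp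
    rw [this]
    linarith

end ISTProof


namespace ISTProof
open Finset
open scoped Classical

variable {n : ℕ} {G : SimpleGraph (Fin n)}

lemma diff_card_symm {d : ℕ} (hG : G ∈ Om n d) (a b : Fin n) :
    ((nb G a \ nb G b).erase b).card = ((nb G b \ nb G a).erase a).card := by
  rw [mem_Om] at hG
  have h1 := card_sdiff_add_card_inter (nb G a) (nb G b)
  have h2 := card_sdiff_add_card_inter (nb G b) (nb G a)
  rw [inter_comm, hG] at h1
  rw [hG] at h2
  by_cases h : G.Adj a b
  · have e1 : b ∈ nb G a \ nb G b := by simp [mem_nb, h]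
    have e2 : a ∈ nb G b \ nb G a := by simp [mem_nb, h.symm]
    rw [card_erase_of_mem e1, card_erase_of_mem e2]
    omega
  · have e1 : b ∉ nb G a \ nb G b := by simp [mem_nb, h]
    have e2 : a ∉ nb G b \ nb G a := by simp [mem_nb, h, G.adj_comm]
    rw [erase_eq_of_notMem e1, erase_eq_of_notMem e2]
    omega

/-- codegree -/
noncomputable def codeg (G : SimpleGraph (Fin n)) (u v : Fin n) : ℕ := (nb G u ∩ nb G v).card

lemma codeg_step {d : ℕ} {u v : Fin n} (huv : u ≠ v) (k : ℕ) (hkd : k ≤ d) :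
    cnt n d (fun G => codeg G u v = k + 1) * ((k + 1) * (n - 2 * d + k - 1))
      ≤ cnt n d (fun G => codeg G u v = k) * (d - k) ^ 2 := by
  set Z : SimpleGraph (Fin n) → Finset (Fin n) := fun G => nb G u ∩ nb G v with hZ
  set Y : SimpleGraph (Fin n) → Finset (Fin n) :=
    fun G => univ \ (insert u (insert v (nb G u ∪ nb G v))) with hY
  set Dd : SimpleGraph (Fin n) → Fin n → Fin n → Finset (Fin n) :=
    fun G a b => (nb G a \ nb G b).erase b with hD
  set Fwd : SimpleGraph (Fin n) → Finset ((Fin n × Fin n) × Fin n) :=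
    fun G => dp (Z G ×ˢ Y G) (fun p => Dd G p.2 p.1) with hFwd
  set Rev : SimpleGraph (Fin n) → Finset ((Fin n × Fin n) × Fin n) :=
    fun G => dp ((nb G v \ nb G u) ×ˢ (nb G u \ nb G v)) (fun p => Dd G p.1 p.2) with hRev
  set ω : SimpleGraph (Fin n) → ((Fin n × Fin n) × Fin n) → ℝ :=
    fun G p => ((Dd G p.1.2 p.1.1).card : ℝ)⁻¹ with hω
  have main := sw_count_weight (ev n d (fun G => codeg G u v = k + 1))
    (ev n d (fun G => codeg G u v = k)) (fun p => (p.1.2, p.1.1, u, p.2)) Fwd Rev ω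
    (fun G i => by simp only [hω]; positivity) ?_
  · -- lower and upper bounds
    have lower : ∀ G ∈ ev n d (fun G => codeg G u v = k + 1),
        ((k + 1 : ℝ) * (n - 2 * d + k - 1)) ≤ ∑ i ∈ Fwd G, ω G i := by
      intro G hG
      rw [mem_ev] at hG
      obtain ⟨hO, hc⟩ := hG
      have hO' := mem_Om.1 hO
      simp only [hFwd]
      rw [sum_dp]
      have : ∀ p ∈ Z G ×ˢ Y G, (1 : ℝ) ≤ ∑ q ∈ Dd G p.2 p.1, ω G (p, q) := by
        rintro ⟨z, y⟩ hp
        simp only [hω, sum_const, nsmul_eq_mul]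
        rw [mul_inv_cancel₀]
        simp only [hZ, hY, mem_product, mem_inter, mem_nb, mem_sdiff, mem_insert, mem_univ,
          true_and, mem_union, not_or] at hp
        have : 0 < (Dd G y z).card := by
          simp only [hD]
          rw [diff_card_symm hO, card_pos]
          refine ⟨u, ?_⟩
          simp only [mem_erase, mem_sdiff, mem_nb]
          exact ⟨fun e => hp.2.1 e.symm, hp.1.1.symm, fun e => hp.2.2.2.1 e.symm⟩
        positivity
      have h2 := sum_le_sum this
      refine le_trans ?_ h2
      simp only [sum_const, nsmul_eq_mul, mul_one, card_product]
      push_cast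
      have hZc : (Z G).card = k + 1 := hc
      rw [hZc]
      push_cast
      have hYc : (n : ℝ) - 2 * d + k - 1 ≤ (Y G).card := by
        have e1 : (Y G).card = n - (insert u (insert v (nb G u ∪ nb G v))).card := by
          simp only [hY]
          rw [card_univ_sdiff, Fintype.card_fin]
        have e2 := card_union_add_card_inter (nb G u) (nb G v)
        have e3 := card_insert_le u (insert v (nb G u ∪ nb G v))
        have e4 := card_insert_le v (nb G u ∪ nb G v)
        rw [hO', hO'] at e2
        have e5 : (nb G u ∩ nb G v).card = k + 1 := hc
        have : n + k ≤ (Y G).card + 2 * d + 1 := by omega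
        have : (n : ℝ) + k ≤ (Y G).card + 2 * d + 1 := by exact_mod_cast this
        linarith
      gcongr
    have upper : ∀ G ∈ ev n d (fun G => codeg G u v = k),
        ∑ i ∈ Rev G, ω G i ≤ ((d : ℝ) - k) ^ 2 := by
      intro G hG
      rw [mem_ev] at hG
      obtain ⟨hO, hc⟩ := hG
      have hO' := mem_Om.1 hO
      simp only [hRev]
      rw [sum_dp]
      have : ∀ p ∈ (nb G v \ nb G u) ×ˢ (nb G u \ nb G v),
          ∑ q ∈ Dd G p.1 p.2, ω G (p, q) ≤ (1 : ℝ) := by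
        rintro ⟨z, y⟩ hp
        simp only [hω, sum_const, nsmul_eq_mul]
        have : (Dd G z y).card = (Dd G y z).card := diff_card_symm hO z y
        rw [this]
        exact mul_inv_le_one
      refine le_trans (sum_le_sum this) ?_
      simp only [sum_const, nsmul_eq_mul, mul_one, card_product]
      have h1 := card_sdiff_add_card_inter (nb G u) (nb G v)
      have h2 := card_sdiff_add_card_inter (nb G v) (nb G u)
      have e5 : (nb G u ∩ nb G v).card = k := hc
      rw [hO', e5] at h1
      rw [hO', inter_comm, e5] at h2
      have h3 : (nb G u \ nb G v).card = d - k := by omega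
      have h4 : (nb G v \ nb G u).card = d - k := by omega
      rw [h3, h4]
      push_cast [Nat.cast_sub hkd]
      rw [sq]
    calc _ = ∑ G ∈ ev n d (fun G => codeg G u v = k + 1), ((k + 1 : ℝ) * (n - 2 * d + k - 1)) := by
          simp [cnt]
      _ ≤ _ := sum_le_sum lower
      _ ≤ _ := main
      _ ≤ _ := sum_le_sum upper
      _ = _ := by simp [cnt]
  · rintro G hG ⟨⟨z, y⟩, q⟩ hi
    rw [mem_ev] at hG
    obtain ⟨hO, hc⟩ := hG
    simp only [hFwd, hZ, hY, hD, mem_dp, mem_product, mem_inter, mem_nb, mem_sdiff, mem_insert,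
      mem_univ, true_and, mem_union, not_or, mem_erase] at hi
    obtain ⟨⟨⟨huz, hvz⟩, hyu, hyv, huy, hvy⟩, hqz, hyq, hzq⟩ := hi
    have hV : Valid G y z u q :=
      ⟨fun e => huy (e ▸ huz), huz.symm, fun e => huy e.symm, fun e => hyu e.symm, hyq, hzq, hqz⟩
    have hN := hV.ne
    have hvq : v ≠ q := by rintro rfl; exact hvy hyq.symm
    have hvz' : v ≠ z := by rintro rfl; exact G.loopless.irrefl _ hvz
    have nbu := hV.nb_s
    have nbv : nb (sw G y z u q) v = nb G v :=
      sw_nb_other (fun e => hyv e.symm) hvz' huv.symm hvq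
    refine ⟨?_, ?_, ?_⟩
    · rw [mem_ev]
      refine ⟨hV.mem_Om hO, ?_⟩
      unfold codeg at *
      rw [nbu, nbv, insert_inter_of_notMem (by simpa [mem_nb] using hvy), erase_inter,
        card_erase_of_mem (by simp [mem_nb, huz, hvz]), hc]
      rfl
    · simp only [hRev, mem_dp, mem_product, mem_sdiff, hD, mem_erase, nbu, nbv, hV.nb_w, hV.nb_w']
      simp only [mem_insert, mem_erase, mem_nb]
      have h1 : z ≠ y := hN.1.symm
      have h2 : q ≠ y := hyq.ne'
      have h3 : q ≠ u := hN.2.2.2.2.2.symm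
      tauto
    · simp only [hω, hD]
      apply le_of_eq
      congr 2
      rw [hV.nb_w, hV.nb_w']
      have : (insert u ((nb G y).erase q) \ insert q ((nb G z).erase u)).erase z
          = insert u (((nb G y \ nb G z).erase z).erase q) := by
        ext x
        simp only [mem_insert, mem_erase, mem_sdiff, mem_nb]
        have h3 : q ≠ u := hN.2.2.2.2.2.symm
        have h4 : u ≠ z := huz.ne
        grind
      rw [this, card_insert_erase']
      · simp [mem_nb, huz.symm]
      · simp [mem_nb, hyq, hzq, hqz]

lemma codeg_tail {d : ℕ} {u v : Fin n} (huv : u ≠ v) (k0 L : ℕ) (hdn : d < n)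
    (hk : ∀ k : ℕ, k0 ≤ k → k < d →
      2 * ((d : ℝ) - k) ^ 2 ≤ (k + 1) * (n - 2 * d + k - 1)) :
    cnt n d (fun G => k0 + L ≤ codeg G u v) ≤ n * ((Om n d).card / 2 ^ L) := by
  set a : ℕ → ℝ := fun k => cnt n d (fun G => codeg G u v = k) with ha
  have ha0 : ∀ k, 0 ≤ a k := fun k => cnt_nonneg
  have step : ∀ k, k0 ≤ k → k < d → 2 * a (k + 1) ≤ a k := by
    intro k h1 h2
    have h3 := codeg_step (d := d) huv k h2.le
    have h4 := hk k h1 h2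
    have h2' : (k : ℝ) < d := by exact_mod_cast h2
    have h5 : 0 < ((d : ℝ) - k) ^ 2 := by
      have : 0 < (d : ℝ) - k := by linarith
      positivity
    have h6 : a (k + 1) * (2 * ((d : ℝ) - k) ^ 2) ≤ a k * ((d : ℝ) - k) ^ 2 :=
      le_trans (mul_le_mul_of_nonneg_left h4 (ha0 _)) h3
    nlinarith
  have dec : ∀ j, k0 + j ≤ d → a (k0 + j) ≤ (Om n d).card / 2 ^ j := by
    intro j
    induction j with
    | zero => intro _; simpa using cnt_le_Om
    | succ j ih =>
      intro h
      have h1 := ih (by omega)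
      have h2 := step (k0 + j) (by omega) (by omega)
      have : ((Om n d).card : ℝ) / 2 ^ (j + 1) = (Om n d).card / 2 ^ j / 2 := by
        rw [pow_succ]; field_simp
      rw [this, ← add_assoc]
      linarith
  calc cnt n d (fun G => k0 + L ≤ codeg G u v)
      ≤ cnt n d (fun G => ∃ k ∈ (range n).filter (fun k => k0 + L ≤ k ∧ k ≤ d), codeg G u v = k) := by
        apply cnt_mono
        intro G hG h
        refine ⟨codeg G u v, ?_, rfl⟩
        have : codeg G u v ≤ d := by
          rw [← mem_Om.1 hG u]; exact card_le_card inter_subset_left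
        simp only [mem_filter, mem_range]
        omega
    _ ≤ ∑ k ∈ (range n).filter (fun k => k0 + L ≤ k ∧ k ≤ d), a k := cnt_exists _ _
    _ ≤ ∑ k ∈ (range n).filter (fun k => k0 + L ≤ k ∧ k ≤ d), ((Om n d).card / 2 ^ L : ℝ) := by
        apply sum_le_sum
        intro k hk
        simp only [mem_filter, mem_range] at hk
        obtain ⟨j, rfl⟩ := Nat.exists_eq_add_of_le (show k0 ≤ k by omega)
        refine (dec j (by omega)).trans ?_
        gcongr
        · norm_num
        · omega
    _ ≤ _ := by
        simp only [sum_const, nsmul_eq_mul]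
        have : ((range n).filter (fun k => k0 + L ≤ k ∧ k ≤ d)).card ≤ n := by
          simpa using card_filter_le (range n) (fun k => k0 + L ≤ k ∧ k ≤ d)
        gcongr

end ISTProof


namespace ISTProof
open Finset
open scoped Classical

variable {n : ℕ}

/-- Neighbours of `v` outside `Q` that have a neighbour in `X`. -/
noncomputable def Ys (G : SimpleGraph (Fin n)) (v : Fin n) (Q X : Finset (Fin n)) :
    Finset (Fin n) :=
  (nb G v \ Q).filter (fun w => ∃ s ∈ X, G.Adj w s)

lemma mem_Ys {G : SimpleGraph (Fin n)} {v w : Fin n} {Q X : Finset (Fin n)} :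
    w ∈ Ys G v Q X ↔ (G.Adj v w ∧ w ∉ Q) ∧ ∃ s ∈ X, G.Adj w s := by
  simp [Ys, mem_nb]

/-- base event of the main switching lemma -/
def Base (Q X : SimpleGraph (Fin n) → Finset (Fin n)) (v : Fin n) (m0 b : ℕ)
    (G : SimpleGraph (Fin n)) : Prop :=
  v ∉ X G ∧ (∀ s ∈ X G, ¬ G.Adj v s) ∧ b ≤ (X G).card ∧ (nb G v \ Q G).card = m0

lemma main_switch {d : ℕ} (hd0 : 0 < d) (Q X : SimpleGraph (Fin n) → Finset (Fin n))
    (v : Fin n) (m0 b k0 k1 : ℕ)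
    (hXQ : ∀ G, X G ⊆ Q G)
    (hinv : ∀ G ∈ Om n d, ∀ w w' s z, Valid G w w' s z → w ∉ Q G → w' ∉ Q G → s ∈ X G →
      Q (sw G w w' s z) = Q G ∧ X (sw G w w' s z) = X G)
    (𝒯 : SimpleGraph (Fin n) → Prop) (f1 f2 : ℝ) (hf1 : 0 ≤ f1) (hf2 : 0 ≤ f2)
    (hT1 : ∀ G ∈ Om n d, 𝒯 G → Base Q X v m0 b G →
      ∀ s ∈ X G, f1 ≤ (((nb G s \ nb G v) \ Q G).erase v).card)
    (hT2 : ∀ G ∈ Om n d, 𝒯 G → ∀ w w', w ≠ w' →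
      f2 ≤ (((nb G w \ nb G w').erase v).erase w').card)
    (hk : k0 ≤ k1) (hkm : k1 ≤ m0)
    (hineq : 2 * ((k1 : ℝ) * (n * d)) ≤ (m0 - k1) * b * (f1 * f2)) :
    cnt n d (fun G => Base Q X v m0 b G ∧ (Ys G v (Q G) (X G)).card ≤ k0)
      ≤ (Om n d).card / 2 ^ (k1 - k0) + 2 * cnt n d (fun G => ¬ 𝒯 G) := by
  have hn0 : 0 < n := v.pos
  apply chain_bound (fun k => cnt n d (fun G => Base Q X v m0 b G ∧ (Ys G v (Q G) (X G)).card ≤ k))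
    (Om n d).card (cnt n d (fun G => ¬ 𝒯 G)) k0 k1 hk (fun k => cnt_le_Om) cnt_nonneg
  intro k _ hk1
  set A := ev n d (fun G => (Base Q X v m0 b G ∧ (Ys G v (Q G) (X G)).card ≤ k) ∧ 𝒯 G) with hA
  set B := ev n d (fun G => Base Q X v m0 b G ∧ (Ys G v (Q G) (X G)).card ≤ k + 1) with hB
  have hk1' : (k : ℝ) + 1 ≤ k1 := by exact_mod_cast hk1
  have hkm' : (k1 : ℝ) ≤ m0 := by exact_mod_cast hkm
  have key : (A.card : ℝ) * (((m0 - k) * b) * (f1 * f2)) ≤ B.card * (((k + 1) * 1) * (n * d)) := by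
    refine sw_count A B
      (fun i : (Fin n × Fin n) × (Fin n × Fin n) => (i.1.1, i.2.1, i.1.2, i.2.2))
      (fun G => dp (((nb G v \ Q G) \ Ys G v (Q G) (X G)) ×ˢ X G)
        (fun p => dp (((nb G p.2 \ nb G v) \ Q G).erase v)
          (fun w' => ((nb G p.1 \ nb G w').erase v).erase w')))
      (fun G => (dp (Ys G v (Q G) (X G))
        (fun w => (X G).filter (fun s => ∀ t ∈ X G, G.Adj w t → t = s))).filter
          (fun p => G.Adj p.1 p.2) ×ˢ dp univ (fun w' => nb G w')) ?_ ?_ ?_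
    · rintro G hG ⟨⟨w, s⟩, w', z⟩ hi
      rw [hA, mem_ev] at hG
      obtain ⟨hO, ⟨hb, hY⟩, hT⟩ := hG
      obtain ⟨hvX, hvX', hbX, hm⟩ := hb
      simp only [mem_dp, mem_product, mem_sdiff, mem_nb, mem_erase, mem_Ys] at hi
      obtain ⟨⟨⟨⟨hvw, hwQ⟩, hwY⟩, hs⟩, ⟨hw'v, ⟨hsw', hvw'⟩, hw'Q⟩, hzw', hzv, hwz, hw'z⟩ := hi
      have hwX : ∀ t ∈ X G, ¬ G.Adj w t := fun t ht e => hwY ⟨⟨hvw, hwQ⟩, t, ht, e⟩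
      have hV : Valid G w w' s z :=
        ⟨fun e => hvw' (e ▸ hvw), hsw'.symm, hwX s hs, fun e => hwQ (e ▸ hXQ G hs), hwz, hw'z, hzw'⟩
      obtain ⟨hQ', hX'⟩ := hinv G hO w w' s z hV hwQ hw'Q hs
      have hvw1 : v ≠ w := hvw.ne
      have hvs : v ≠ s := fun e => hvX (e ▸ hs)
      have nbv : nb (sw G w w' s z) v = nb G v :=
        sw_nb_other hvw1 (Ne.symm hw'v) hvs (Ne.symm hzv)
      have adjv : ∀ x, (sw G w w' s z).Adj v x ↔ G.Adj v x := fun x => by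
        rw [← mem_nb, nbv, mem_nb]
      have Ys' : Ys (sw G w w' s z) v (Q (sw G w w' s z)) (X (sw G w w' s z))
          = insert w (Ys G v (Q G) (X G)) := by
        rw [hQ', hX']
        ext x
        rw [mem_insert, mem_Ys, mem_Ys, adjv]
        by_cases hxw : x = w
        · subst hxw
          simp only [true_or, iff_true]
          exact ⟨⟨hvw, hwQ⟩, s, hs, (hV.adj_w s).2 (Or.inl rfl)⟩
        · simp only [hxw, false_or]
          apply and_congr_right
          rintro ⟨hvx, hxQ⟩
          have hxw' : x ≠ w' := fun e => hvw' (e ▸ hvx)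
          have hxs : x ≠ s := fun e => hvX' s hs (e ▸ hvx)
          by_cases hxz : x = z
          · subst hxz
            constructor
            · rintro ⟨t, ht, e⟩
              rw [hV.adj_z] at e
              rcases e with e | e
              · exact absurd (hXQ G ht) (e ▸ hw'Q)
              · exact ⟨t, ht, e.1⟩
            · rintro ⟨t, ht, e⟩
              refine ⟨t, ht, (hV.adj_z t).2 (Or.inr ⟨e, ?_⟩)⟩
              rintro rfl
              exact hwQ (hXQ G ht)
          · constructor
            · rintro ⟨t, ht, e⟩
              exact ⟨t, ht, (sw_adj_other hxw hxw' hxs hxz t).1 e⟩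
            · rintro ⟨t, ht, e⟩
              exact ⟨t, ht, (sw_adj_other hxw hxw' hxs hxz t).2 e⟩
      refine ⟨?_, ?_⟩
      · rw [hB, mem_ev]
        refine ⟨hV.mem_Om hO, ⟨?_, ?_, ?_, ?_⟩, ?_⟩
        · simpa only [hX'] using hvX
        · simp only [hX', adjv]; exact hvX'
        · simpa only [hX'] using hbX
        · simpa only [hQ', nbv] using hm
        · simp only [Ys']
          exact (card_insert_le _ _).trans (by omega)
      · simp only [mem_product, mem_dp, mem_filter, mem_univ, true_and, mem_nb]
        rw [Ys', hX']
        refine ⟨⟨⟨mem_insert_self _ _, hs, ?_⟩, (hV.adj_w s).2 (Or.inl rfl)⟩,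
          (hV.adj_w' z).2 (Or.inl rfl)⟩
        intro t ht e
        rw [hV.adj_w] at e
        rcases e with e | e
        · exact e
        · exact absurd e.1 (hwX t ht)
    · intro G hG
      rw [hA, mem_ev] at hG
      obtain ⟨hO, ⟨hb, hY⟩, hT⟩ := hG
      apply card_dp_ge
      · rw [card_product]
        push_cast
        have h1 : ((m0 : ℝ) - k) ≤ ((nb G v \ Q G) \ Ys G v (Q G) (X G)).card := by
          have h2 := card_sdiff_add_card_inter (nb G v \ Q G) (Ys G v (Q G) (X G))
          have h3 : ((nb G v \ Q G) ∩ (Ys G v (Q G) (X G))).card ≤ k :=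
            (card_le_card inter_subset_right).trans hY
          rw [hb.2.2.2] at h2
          have : m0 ≤ ((nb G v \ Q G) \ Ys G v (Q G) (X G)).card + k := by omega
          have : (m0 : ℝ) ≤ ((nb G v \ Q G) \ Ys G v (Q G) (X G)).card + k := by exact_mod_cast this
          linarith
        have h2 : (b : ℝ) ≤ (X G).card := by exact_mod_cast hb.2.2.1
        gcongr
      · rintro ⟨w, s⟩ hp
        simp only [mem_product, mem_sdiff, mem_nb] at hp
        apply card_dp_ge
        · exact hT1 G hO hT hb s hp.2
        · intro w' hw'
          simp only [mem_erase, mem_sdiff, mem_nb] at hw'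
          exact hT2 G hO hT w w' (fun e => hw'.2.1.2 (e ▸ hp.1.1.1))
        · exact hf2
      · positivity
    · intro G hG
      rw [hB, mem_ev] at hG
      obtain ⟨hO, hb, hY⟩ := hG
      rw [card_product]
      push_cast
      have e1 : ((dp (univ : Finset (Fin n)) (fun w' => nb G w')).card : ℝ) ≤ n * d :=
        card_dp_le (by simp) (fun x _ => by rw [mem_Om.1 hO]) (by positivity)
      have hY' : ((Ys G v (Q G) (X G)).card : ℝ) ≤ k + 1 := by exact_mod_cast hY
      have e2 : (((dp (Ys G v (Q G) (X G))
          (fun w => (X G).filter (fun s => ∀ t ∈ X G, G.Adj w t → t = s))).filter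
          (fun p => G.Adj p.1 p.2)).card : ℝ) ≤ (k + 1) * 1 := by
        rw [mul_one]
        refine le_trans ?_ hY'
        norm_cast
        apply card_le_card_of_injOn (fun p => p.1)
        · rintro ⟨w, s⟩ hp
          simp only [coe_filter, mem_dp, Set.mem_ofPred_eq] at hp
          exact hp.1.1
        · rintro ⟨w, s⟩ hp ⟨w2, s2⟩ hq e
          simp only [coe_filter, mem_dp, Set.mem_ofPred_eq, mem_filter] at hp hq e
          subst e
          rw [hp.1.2.2 s2 hq.1.2.1 hq.2]
      gcongr
  have hcA : cnt n d (fun G => Base Q X v m0 b G ∧ (Ys G v (Q G) (X G)).card ≤ k)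
      - cnt n d (fun G => ¬ 𝒯 G) ≤ A.card := by
    have h1 := cnt_or (n := n) (d := d)
      (P := fun G => (Base Q X v m0 b G ∧ (Ys G v (Q G) (X G)).card ≤ k) ∧ 𝒯 G)
      (Q := fun G => ¬ 𝒯 G)
    have h2 : cnt n d (fun G => Base Q X v m0 b G ∧ (Ys G v (Q G) (X G)).card ≤ k) ≤ _ :=
      (cnt_mono (fun G _ h => by tauto)).trans h1
    have h3 : cnt n d (fun G => (Base Q X v m0 b G ∧ (Ys G v (Q G) (X G)).card ≤ k) ∧ 𝒯 G)
      = A.card := rfl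
    linarith
  have hcB : cnt n d (fun G => Base Q X v m0 b G ∧ (Ys G v (Q G) (X G)).card ≤ k + 1)
      = B.card := rfl
  show 2 * (_ - _) ≤ cnt n d (fun G => Base Q X v m0 b G ∧ (Ys G v (Q G) (X G)).card ≤ k + 1)
  rw [hcB]
  refine le_trans (mul_le_mul_of_nonneg_left hcA (by norm_num)) ?_
  have hnd : (0 : ℝ) < n * d := by
    have : (0 : ℝ) < n := by exact_mod_cast hn0
    have : (0 : ℝ) < d := by exact_mod_cast hd0
    positivity
  have hk0' : (0 : ℝ) ≤ k := by positivity
  set R : ℝ := ((k + 1) * 1) * (n * d) with hR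
  have hRpos : 0 < R := by positivity
  have hF : 2 * R ≤ ((m0 - k) * b) * (f1 * f2) := by
    calc 2 * R ≤ 2 * ((k1 : ℝ) * (n * d)) := by rw [hR, mul_one]; gcongr
      _ ≤ _ := hineq
      _ ≤ _ := by
        have : (0:ℝ) ≤ m0 - k1 := by linarith
        have h2 : (m0 : ℝ) - k1 ≤ m0 - k := by linarith
        gcongr
  have hA0 : (0 : ℝ) ≤ A.card := by positivity
  have : (A.card : ℝ) * (2 * R) ≤ B.card * R := (mul_le_mul_of_nonneg_left hF hA0).trans key
  nlinarith

end ISTProof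


namespace ISTProof
open Finset
open scoped Classical

variable {n : ℕ}

/-- ordered edge pairs between two sets -/
noncomputable def eP (G : SimpleGraph (Fin n)) (A B : Finset (Fin n)) : Finset (Fin n × Fin n) :=
  dp A (fun a => nb G a ∩ B)

lemma mem_eP {G : SimpleGraph (Fin n)} {A B : Finset (Fin n)} {p : Fin n × Fin n} :
    p ∈ eP G A B ↔ p.1 ∈ A ∧ G.Adj p.1 p.2 ∧ p.2 ∈ B := by
  simp [eP, mem_dp, mem_nb]

lemma eP_comm (G : SimpleGraph (Fin n)) (A B : Finset (Fin n)) :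
    (eP G A B).card = (eP G B A).card := by
  apply card_bij (fun p _ => Prod.swap p)
  · intro p hp
    rw [mem_eP] at *
    exact ⟨hp.2.2, hp.2.1.symm, hp.1⟩
  · intro p _ q _ h
    exact Prod.swap_injective h
  · intro p hp
    refine ⟨p.swap, ?_, by simp⟩
    rw [mem_eP] at *
    exact ⟨hp.2.2, hp.2.1.symm, hp.1⟩

lemma card_dp_sdiff {d : ℕ} {G : SimpleGraph (Fin n)} (hG : G ∈ Om n d) (A B : Finset (Fin n)) :
    ((dp A (fun a => nb G a \ B)).card : ℝ) = A.card * d - (eP G A B).card := by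
  unfold eP
  rw [card_dp, card_dp, eq_sub_iff_add_eq, ← sum_add_distrib]
  have : ∀ x ∈ A, ((nb G x \ B).card : ℝ) + ((nb G x ∩ B).card : ℝ) = d := by
    intro x _
    have := card_sdiff_add_card_inter (nb G x) B
    rw [mem_Om.1 hG] at this
    exact_mod_cast this
  rw [sum_congr rfl this]
  simp

lemma joint_step {d : ℕ} {A B : Finset (Fin n)} (hAB : Disjoint A B) (k : ℕ)
    (hkA : (k : ℝ) ≤ A.card * d) (hkB : (k : ℝ) ≤ B.card * d) :
    cnt n d (fun G => (eP G A B).card ≤ k) *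
        ((A.card * d - k) * (B.card * d - k) - A.card * d * (d * d + (d + 1) * d))
      ≤ cnt n d (fun G => (eP G A B).card ≤ k + 2) * ((k + 2) * (n * d)) := by
  have hAB' : ∀ x, x ∈ A → x ∉ B := fun x h1 h2 => (disjoint_left.1 hAB) h1 h2
  refine sw_count (ev n d (fun G => (eP G A B).card ≤ k)) (ev n d (fun G => (eP G A B).card ≤ k + 2))
      (fun i : (Fin n × Fin n) × (Fin n × Fin n) => (i.1.1, i.2.2, i.2.1, i.1.2))
      (fun G => (dp A (fun a => nb G a \ B) ×ˢ dp B (fun b => nb G b \ A)) \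
        (dp (dp A (fun a => nb G a)) (fun p => dp (nb G p.1) (fun b => nb G b)) ∪
         dp (dp A (fun a => nb G a)) (fun p => (dp (insert p.2 (nb G p.2))
            (fun b => nb G b)).image Prod.swap)))
      (fun G => ((eP G A B) ×ˢ dp univ (fun x => nb G x)).image
        (fun p => ((p.1.1, p.2.1), (p.1.2, p.2.2)))) ?_ ?_ ?_
  · rintro G hG ⟨⟨a, x⟩, b, y⟩ hi
    rw [mem_ev] at hG
    simp only [mem_sdiff, mem_product, mem_dp, mem_nb, mem_union, mem_image, mem_insert,
      Prod.exists, Prod.swap_prod_mk, Prod.mk.injEq, not_or, not_and, not_exists] at hi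
    obtain ⟨⟨⟨haA, hax, hxB⟩, hbB, hby, hyA⟩, h1, h2⟩ := hi
    have hab : ¬ G.Adj a b := fun e => h1 ⟨haA, hax⟩ e hby
    have hxy : ¬ (y = x ∨ G.Adj x y) := fun e => h2 ⟨haA, hax⟩ y b ⟨e, hby.symm⟩ rfl rfl
    rw [not_or] at hxy
    have hV : Valid G a y b x :=
      ⟨fun e => hyA (e ▸ haA), hby.symm, hab, fun e => hAB' a haA (e ▸ hbB), hax,
        fun e => hxy.2 e.symm, fun e => hxy.1 e.symm⟩
    refine ⟨?_, ?_⟩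
    · rw [mem_ev]
      refine ⟨hV.mem_Om hG.1, ?_⟩
      have hsub : eP (sw G a y b x) A B ⊆ insert (a, b) (insert (x, y) (eP G A B)) := by
        rintro ⟨p, q⟩ hpq
        rw [mem_eP] at hpq
        simp only [mem_insert, mem_eP, Prod.mk.injEq]
        obtain ⟨hp, ⟨hne, hadj⟩, hq⟩ := hpq
        simp only [swC] at hadj hp hq
        by_cases e : G.Adj p q
        · exact Or.inr (Or.inr ⟨hp, e, hq⟩)
        · have hb2 : b ∉ A := fun h => hAB' b h hbB
          have ha2 := hAB' a haA
          grind
      refine (card_le_card hsub).trans ?_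
      refine (card_insert_le _ _).trans ?_
      have := card_insert_le (x, y) (eP G A B)
      have := hG.2
      omega
    · rw [mem_image]
      refine ⟨((a, b), (x, y)), ?_, rfl⟩
      simp only [mem_product, mem_eP, mem_dp, mem_univ, true_and, mem_nb]
      exact ⟨⟨haA, (hV.adj_w b).2 (Or.inl rfl), hbB⟩, (hV.adj_z y).2 (Or.inl rfl)⟩
  · intro G hG
    rw [mem_ev] at hG
    obtain ⟨hO, hk⟩ := hG
    have hd := mem_Om.1 hO
    have hk' : ((eP G A B).card : ℝ) ≤ k := by exact_mod_cast hk
    have hk2 : ((eP G B A).card : ℝ) ≤ k := by rw [eP_comm]; exact hk'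
    set P := dp A (fun a => nb G a \ B) ×ˢ dp B (fun b => nb G b \ A)
    set B1 := dp (dp A (fun a => nb G a)) (fun p => dp (nb G p.1) (fun b => nb G b))
    set B2 := dp (dp A (fun a => nb G a)) (fun p => (dp (insert p.2 (nb G p.2))
            (fun b => nb G b)).image Prod.swap)
    have hP : ((A.card : ℝ) * d - k) * (B.card * d - k) ≤ P.card := by
      rw [card_product]
      push_cast
      rw [card_dp_sdiff hO, card_dp_sdiff hO]
      gcongr
      linarith
    have hA1 : ((dp A (fun a => nb G a)).card : ℝ) ≤ A.card * d :=
      card_dp_le le_rfl (fun x _ => by rw [hd]) (by positivity)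
    have hB1 : (B1.card : ℝ) ≤ A.card * d * (d * d) :=
      card_dp_le hA1 (fun x _ => card_dp_le (by rw [hd]) (fun x _ => by rw [hd]) (by positivity))
        (by positivity)
    have hB2 : (B2.card : ℝ) ≤ A.card * d * ((d + 1) * d) := by
      refine card_dp_le hA1 (fun x _ => ?_) (by positivity)
      refine le_trans (Nat.cast_le.2 card_image_le) ?_
      refine card_dp_le ?_ (fun x _ => by rw [hd]) (by positivity)
      have := card_insert_le x.2 (nb G x.2)
      rw [hd] at this
      exact_mod_cast this
    have h1 : P.card ≤ (P \ (B1 ∪ B2)).card + (B1.card + B2.card) := by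
      have := card_le_card_sdiff_add_card (s := P) (t := B1 ∪ B2)
      have := card_union_le B1 B2
      omega
    have h2 : (P.card : ℝ) ≤ (P \ (B1 ∪ B2)).card + (B1.card + B2.card) := by exact_mod_cast h1
    nlinarith
  · intro G hG
    rw [mem_ev] at hG
    obtain ⟨hO, hk⟩ := hG
    refine le_trans (Nat.cast_le.2 card_image_le) ?_
    rw [card_product]
    push_cast
    have e1 : ((dp (univ : Finset (Fin n)) (fun w' => nb G w')).card : ℝ) ≤ n * d :=
        card_dp_le (by simp) (fun x _ => by rw [mem_Om.1 hO]) (by positivity)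
    have e2 : ((eP G A B).card : ℝ) ≤ k + 2 := by exact_mod_cast hk
    gcongr

lemma joint_bound {d : ℕ} (hd0 : 0 < d) {A B : Finset (Fin n)} (hAB : Disjoint A B) (b0 : ℝ)
    (hA : b0 ≤ A.card) (hB : b0 ≤ B.card) (hdb : 48 * (d : ℝ) ≤ b0) (j1 : ℕ)
    (hj : 8 * (j1 : ℝ) * n ≤ b0 ^ 2 * d) :
    cnt n d (fun G => ∀ a ∈ A, ∀ b ∈ B, ¬ G.Adj a b) ≤ (Om n d).card / 2 ^ j1 := by
  have hd1 : (1 : ℝ) ≤ d := by exact_mod_cast hd0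
  have hb0 : 0 < b0 := by linarith
  have hAn : (A.card : ℝ) ≤ n := by
    have := card_le_univ A; rw [Fintype.card_fin] at this; exact_mod_cast this
  have hn0 : (0 : ℝ) < n := by linarith
  have h8 : 8 * (j1 : ℝ) ≤ b0 * d := by
    have h1 : 8 * (j1 : ℝ) * b0 ≤ b0 ^ 2 * d := by
      refine le_trans ?_ hj
      have : b0 ≤ n := by linarith
      gcongr
    have h2 : (8 * (j1 : ℝ)) * b0 ≤ (b0 * d) * b0 := by nlinarith
    exact le_of_mul_le_mul_right h2 hb0
  have := chain_bound (fun j => cnt n d (fun G => (eP G A B).card ≤ 2 * j)) (Om n d).card 0 0 j1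
    (by omega) (fun _ => cnt_le_Om) le_rfl ?_
  · simp only [Nat.sub_zero, mul_zero, add_zero] at this
    refine le_trans (cnt_mono ?_) this
    intro G _ h
    rw [Nat.le_zero, card_eq_zero, eq_empty_iff_forall_notMem]
    rintro ⟨a, b⟩ hp
    rw [mem_eP] at hp
    exact h a hp.1 b hp.2.2 hp.2.1
  · intro j _ hj1
    have hj1' : (j : ℝ) + 1 ≤ j1 := by exact_mod_cast hj1
    have hj0 : (0 : ℝ) ≤ j := by positivity
    have hAd : b0 * d ≤ A.card * d := by gcongr
    have hBd : b0 * d ≤ B.card * d := by gcongr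
    have hs := joint_step (d := d) hAB (2 * j) (by push_cast; linarith) (by push_cast; linarith)
    push_cast at hs
    set a : ℝ := (A.card : ℝ)
    set b : ℝ := (B.card : ℝ)
    set E := cnt n d (fun G => (eP G A B).card ≤ 2 * j)
    have hE : 0 ≤ E := cnt_nonneg
    show 2 * (E - 0) ≤ cnt n d (fun G => (eP G A B).card ≤ 2 * j + 2)
    set E' := cnt n d (fun G => (eP G A B).card ≤ 2 * j + 2)
    have hF : 2 * ((2 * (j : ℝ) + 2) * (n * d)) ≤
        (a * d - 2 * j) * (b * d - 2 * j) - a * d * (d * d + (d + 1) * d) := by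
      have e1 : (3 / 4 * (a * d)) * (3 / 4 * (b * d)) ≤ (a * d - 2 * j) * (b * d - 2 * j) := by
        apply mul_le_mul <;> nlinarith
      have e2 : a * d * (d * d + (d + 1) * d) ≤ a * d * (1 / 16 * (b * d)) := by
        have : (d * d + (d + 1) * d : ℝ) ≤ 1 / 16 * (b * d) := by nlinarith
        gcongr
      have e3 : 2 * ((2 * (j : ℝ) + 2) * (n * d)) ≤ (b0 * b0) * d * d / 2 := by
        have : 2 * ((2 * (j : ℝ) + 2) * (n * d)) ≤ (8 * (j1 : ℝ) * n) * d / 2 := by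
          have : (2 * (j : ℝ) + 2) * (n * d) ≤ (2 * j1) * (n * d) := by gcongr; linarith
          linarith
        refine this.trans ?_
        have : (8 * (j1 : ℝ) * n) * d ≤ (b0 ^ 2 * d) * d := by gcongr
        nlinarith
      have e4 : (b0 * b0) * d * d ≤ (a * b) * d * d := by gcongr
      nlinarith
    have h1 : E * (2 * ((2 * (j : ℝ) + 2) * (n * d))) ≤ E' * ((2 * j + 2) * (n * d)) :=
      (mul_le_mul_of_nonneg_left hF hE).trans hs
    have hR : 0 < (2 * (j : ℝ) + 2) * (n * d) := by positivity
    nlinarith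

lemma dens_step {d : ℕ} {Y Z : Finset (Fin n)} (k : ℕ) :
    cnt n d (fun G => k ≤ (eP G Y Z).card) * (k * (n * d - (2 * (Y.card + Z.card) * d + 2 * d * d)))
      ≤ cnt n d (fun G => k ≤ (eP G Y Z).card + 2) * (Y.card * d * (Z.card * d)) := by
  refine sw_count (ev n d (fun G => k ≤ (eP G Y Z).card)) (ev n d (fun G => k ≤ (eP G Y Z).card + 2))
      (fun i : (Fin n × Fin n) × (Fin n × Fin n) => (i.1.1, i.2.2, i.2.1, i.1.2))
      (fun G => dp (eP G Y Z) (fun e => dp univ (fun p => nb G p) \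
        ((dp (Y ∪ Z) (fun p => nb G p) ∪ (dp (Y ∪ Z) (fun p => nb G p)).image Prod.swap) ∪
          (dp (nb G e.1) (fun p => nb G p) ∪ (dp (nb G e.2) (fun p => nb G p)).image Prod.swap))))
      (fun G => ((dp Y (fun y => nb G y)) ×ˢ (dp Z (fun z => nb G z))).image
        (fun p => ((p.1.1, p.2.1), (p.1.2, p.2.2)))) ?_ ?_ ?_
  · rintro G hG ⟨⟨y, z⟩, p, q⟩ hi
    rw [mem_ev] at hG
    simp only [mem_sdiff, mem_dp, mem_nb, mem_union, mem_image, mem_eP, mem_univ, true_and,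
      Prod.exists, Prod.swap_prod_mk, Prod.mk.injEq, not_or, not_and, not_exists] at hi
    obtain ⟨⟨hyY, hyz, hzZ⟩, hpq, ⟨h1, h2⟩, h3, h4⟩ := hi
    have hp : ¬ (p ∈ Y ∨ p ∈ Z) := fun e => h1 e hpq
    have hq : ¬ (q ∈ Y ∨ q ∈ Z) := fun e => h2 q p ⟨e, hpq.symm⟩ rfl rfl
    have hyp : ¬ G.Adj y p := fun e => h3 e hpq
    have hzq : ¬ G.Adj z q := fun e => h4 q p ⟨e, hpq.symm⟩ rfl rfl
    rw [not_or] at hp hq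
    have hV : Valid G y q p z :=
      ⟨fun e => hq.1 (e ▸ hyY), hpq.symm, hyp, fun e => hp.1 (e ▸ hyY), hyz,
        fun e => hzq e.symm, fun e => hq.2 (e ▸ hzZ)⟩
    refine ⟨?_, ?_⟩
    · rw [mem_ev]
      refine ⟨hV.mem_Om hG.1, ?_⟩
      have hsub : eP G Y Z ⊆ insert (y, z) (insert (z, y) (eP (sw G y q p z) Y Z)) := by
        rintro ⟨a, b⟩ hab
        rw [mem_eP] at hab
        simp only [mem_insert, mem_eP, Prod.mk.injEq]
        simp only at hab
        have hne := hab.2.1.ne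
        simp only [sw, swC]
        grind
      show k ≤ (eP (sw G y q p z) Y Z).card + 2
      have h1 := card_le_card hsub
      have h2 := card_insert_le (y, z) (insert (z, y) (eP (sw G y q p z) Y Z))
      have h3 := card_insert_le (z, y) (eP (sw G y q p z) Y Z)
      have := hG.2
      omega
    · rw [mem_image]
      refine ⟨((y, p), (z, q)), ?_, rfl⟩
      simp only [mem_product, mem_dp, mem_nb]
      exact ⟨⟨hyY, (hV.adj_w p).2 (Or.inl rfl)⟩, hzZ, (hV.adj_z q).2 (Or.inl rfl)⟩
  · intro G hG
    rw [mem_ev] at hG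
    obtain ⟨hO, hk⟩ := hG
    have hd := mem_Om.1 hO
    have hk' : (k : ℝ) ≤ ((eP G Y Z).card : ℝ) := by exact_mod_cast hk
    rw [card_dp]
    have hdp : ∀ S : Finset (Fin n), ((dp S (fun p => nb G p)).card : ℝ) = S.card * d := by
      intro S
      rw [card_dp, sum_congr rfl (fun x _ => by rw [hd])]
      simp
    by_cases hneg : (n * d - (2 * (Y.card + Z.card) * d + 2 * d * d) : ℝ) < 0
    · refine le_trans (mul_nonpos_of_nonneg_of_nonpos (by positivity) hneg.le) ?_
      exact sum_nonneg (fun _ _ => by positivity)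
    push Not at hneg
    calc (k : ℝ) * (n * d - (2 * (Y.card + Z.card) * d + 2 * d * d))
        ≤ (eP G Y Z).card * (n * d - (2 * (Y.card + Z.card) * d + 2 * d * d)) := by gcongr
      _ = ∑ e ∈ eP G Y Z, ((n : ℝ) * d - (2 * (Y.card + Z.card) * d + 2 * d * d)) := by
        rw [sum_const, nsmul_eq_mul]
      _ ≤ _ := by
        apply sum_le_sum
        intro e _
        set U := dp univ (fun p => nb G p)
        set S1 := dp (Y ∪ Z) (fun p => nb G p)
        set S3 := dp (nb G e.1) (fun p => nb G p)
        set S4 := dp (nb G e.2) (fun p => nb G p)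
        have c1 : U.card ≤ (U \ ((S1 ∪ S1.image Prod.swap) ∪ (S3 ∪ S4.image Prod.swap))).card
            + ((S1.card + S1.card) + (S3.card + S4.card)) := by
          have a0 := card_le_card_sdiff_add_card
            (t := ((S1 ∪ S1.image Prod.swap) ∪ (S3 ∪ S4.image Prod.swap))) (s := U)
          have a1 := card_union_le (S1 ∪ S1.image Prod.swap) (S3 ∪ S4.image Prod.swap)
          have a2 := card_union_le S1 (S1.image Prod.swap)
          have a3 := card_union_le S3 (S4.image Prod.swap)
          have a4 : (S1.image Prod.swap).card ≤ S1.card := card_image_le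
          have a5 : (S4.image Prod.swap).card ≤ S4.card := card_image_le
          omega
        have c2 : (U.card : ℝ) ≤ (U \ ((S1 ∪ S1.image Prod.swap) ∪ (S3 ∪ S4.image Prod.swap))).card
            + ((S1.card + S1.card) + (S3.card + S4.card)) := by exact_mod_cast c1
        have d1 : (U.card : ℝ) = n * d := by rw [hdp]; simp
        have d2 : (S1.card : ℝ) ≤ (Y.card + Z.card) * d := by
          rw [hdp]
          have : ((Y ∪ Z).card : ℝ) ≤ Y.card + Z.card := by exact_mod_cast card_union_le Y Z
          gcongr
        have d3 : (S3.card : ℝ) = d * d := by rw [hdp, hd]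
        have d4 : (S4.card : ℝ) = d * d := by rw [hdp, hd]
        rw [d1, d3, d4] at c2
        linarith
  · intro G hG
    rw [mem_ev] at hG
    obtain ⟨hO, hk⟩ := hG
    have hd := mem_Om.1 hO
    refine le_trans (Nat.cast_le.2 card_image_le) ?_
    rw [card_product]
    push_cast
    have hdp : ∀ S : Finset (Fin n), ((dp S (fun p => nb G p)).card : ℝ) = S.card * d := by
      intro S
      rw [card_dp, sum_congr rfl (fun x _ => by rw [hd])]
      simp
    rw [hdp, hdp]

lemma dens_bound {d : ℕ} (hd0 : 0 < d) {Y Z : Finset (Fin n)} (hYZ : 8 * (Y.card + Z.card) ≤ n)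
    (hdn : 8 * d ≤ n) (K j1 : ℕ) (hK : 2 * j1 ≤ K) (hZ0 : 0 < Z.card) (hY0 : 0 < Y.card)
    (hj : 4 * (Y.card * Z.card * d : ℝ) ≤ (K - 2 * j1) * n) :
    cnt n d (fun G => K ≤ (eP G Y Z).card) ≤ (Om n d).card / 2 ^ j1 := by
  have := chain_bound (fun j => cnt n d (fun G => K ≤ (eP G Y Z).card + 2 * j)) (Om n d).card 0 0 j1
    (by omega) (fun _ => cnt_le_Om) le_rfl ?_
  · simpa only [Nat.sub_zero, mul_zero, add_zero] using this
  · intro j _ hj1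
    have hs := dens_step (n := n) (d := d) (Y := Y) (Z := Z) (K - 2 * j)
    have e1 : ∀ G : SimpleGraph (Fin n), (K - 2 * j ≤ (eP G Y Z).card) ↔
      K ≤ (eP G Y Z).card + 2 * j := fun G => by omega
    have e2 : ∀ G : SimpleGraph (Fin n), (K - 2 * j ≤ (eP G Y Z).card + 2) ↔
      K ≤ (eP G Y Z).card + 2 * (j + 1) := fun G => by omega
    simp only [e1, e2] at hs
    set E := cnt n d (fun G => K ≤ (eP G Y Z).card + 2 * j)
    set E' := cnt n d (fun G => K ≤ (eP G Y Z).card + 2 * (j + 1))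
    have hE : 0 ≤ E := cnt_nonneg
    show 2 * (E - 0) ≤ E'
    rw [Nat.cast_sub (by omega)] at hs
    push_cast at hs
    have h1 : (j : ℝ) + 1 ≤ j1 := by exact_mod_cast hj1
    have h2 : 8 * ((Y.card : ℝ) + Z.card) ≤ n := by exact_mod_cast hYZ
    have h3 : 8 * (d : ℝ) ≤ n := by exact_mod_cast hdn
    have h4 : (0 : ℝ) < d := by exact_mod_cast hd0
    have h5 : (0 : ℝ) < Y.card := by exact_mod_cast hY0
    have h6 : (0 : ℝ) < Z.card := by exact_mod_cast hZ0
    have h7 : 2 * (j1 : ℝ) ≤ K := by exact_mod_cast hK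
    have hn : (0 : ℝ) < n := by linarith
    set y : ℝ := (Y.card : ℝ)
    set z : ℝ := (Z.card : ℝ)
    have f1 : (n * d : ℝ) / 2 ≤ n * d - (2 * (y + z) * d + 2 * d * d) := by nlinarith
    have f2 : 2 * (y * d * (z * d)) ≤ (K - 2 * j) * (n * d - (2 * (y + z) * d + 2 * d * d)) := by
      have g1 : 2 * (y * d * (z * d)) ≤ ((K - 2 * j1) * n) * (d / 2) := by
        have := mul_le_mul_of_nonneg_right hj (show (0 : ℝ) ≤ d / 2 by positivity)
        nlinarith
      have g2 : ((K - 2 * j1) * n) * (d / 2 : ℝ) ≤ (K - 2 * j) * (n * d / 2) := by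
        have : ((K : ℝ) - 2 * j1) * (n * d / 2) ≤ (K - 2 * j) * (n * d / 2) := by
          gcongr
        linarith
      refine g1.trans (g2.trans ?_)
      have : (0 : ℝ) ≤ K - 2 * j := by linarith
      gcongr
    have h8 : E * (2 * (y * d * (z * d))) ≤ E' * (y * d * (z * d)) :=
      (mul_le_mul_of_nonneg_left f2 hE).trans hs
    have hR : 0 < y * d * (z * d) := by positivity
    nlinarith

end ISTProof


namespace ISTProof
open Finset
open scoped Classical

variable {n : ℕ}

/-- number of elements of `F` with colour `j` -/
noncomputable def colN {q : ℕ} (c : Fin n → Fin q) (F : Finset (Fin n)) (j : Fin q) : ℕ :=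
  (F.filter (fun x => c x = j)).card

lemma col_mgf {q : ℕ} (F : Finset (Fin n)) (j : Fin q) (t : ℝ) :
    ∑ c : Fin n → Fin q, t ^ (colN c F j) = (q - 1 + t) ^ F.card * q ^ (n - F.card) := by
  set g : Fin n → Fin q → ℝ := fun x y => if x ∈ F ∧ y = j then t else 1 with hg
  have h1 : ∀ c : Fin n → Fin q, t ^ (colN c F j) = ∏ x, g x (c x) := by
    intro c
    simp only [hg, colN]
    rw [← Finset.prod_filter, prod_const]
    congr 2
    ext x; simp
  have h3 : ∏ x, ∑ y, g x y = ∑ c : Fin n → Fin q, ∏ x, g x (c x) := by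
    rw [Finset.prod_univ_sum, Fintype.piFinset_univ]
  rw [sum_congr rfl (fun c _ => h1 c), ← h3]
  have h2 : ∀ x, ∑ y, g x y = if x ∈ F then ((q : ℝ) - 1 + t) else q := by
    intro x
    by_cases hx : x ∈ F
    · simp only [hg, hx, true_and, if_true]
      rw [← Finset.add_sum_erase _ _ (mem_univ j)]
      rw [sum_congr rfl (fun y hy => if_neg (ne_of_mem_erase hy))]
      simp only [sum_const, card_erase_of_mem (mem_univ j), card_univ, Fintype.card_fin, if_true,
        nsmul_eq_mul, mul_one]
      rw [Nat.cast_sub (by have := j.pos; omega)]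
      push_cast; ring
    · simp [hg, hx]
  rw [prod_congr rfl (fun x _ => h2 x), prod_ite]
  simp only [prod_const]
  congr 2
  · congr 1; ext x; simp
  · have : (univ.filter (fun x => x ∉ F)) = Fᶜ := by ext x; simp
    rw [this, card_compl, Fintype.card_fin]

/-- colour class of `F` is balanced -/
def Bal {q : ℕ} (c : Fin n → Fin q) (F : Finset (Fin n)) (j : Fin q) : Prop :=
  (F.card : ℝ) / (4 * q) ≤ colN c F j ∧ (colN c F j : ℝ) ≤ 3 * F.card / q

lemma col_bad {q : ℕ} (F : Finset (Fin n)) (j : Fin q) :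
    ((univ.filter (fun c : Fin n → Fin q => ¬ Bal c F j)).card : ℝ)
      ≤ 2 * (q : ℝ) ^ n * Real.exp (-(F.card / (4 * q))) := by
  have hq : (0 : ℝ) < q := by exact_mod_cast j.pos
  have hq1 : (1 : ℝ) ≤ q := by exact_mod_cast j.pos
  have hFn : F.card ≤ n := by
    have := card_le_univ F; rwa [Fintype.card_fin] at this
  set l : ℝ := (F.card : ℝ) with hl
  have hl0 : 0 ≤ l := by positivity
  have gen : ∀ t : ℝ, 0 ≤ q - 1 + t →
      (q - 1 + t) ^ F.card * (q : ℝ) ^ (n - F.card) ≤ q ^ n * Real.exp (l * ((t - 1) / q)) := by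
    intro t ht
    have e1 : q - 1 + t ≤ q * Real.exp ((t - 1) / q) := by
      have := Real.add_one_le_exp ((t - 1) / q)
      calc q - 1 + t = q * ((t - 1) / q + 1) := by field_simp; ring
        _ ≤ _ := by gcongr
    calc (q - 1 + t) ^ F.card * (q : ℝ) ^ (n - F.card)
        ≤ (q * Real.exp ((t - 1) / q)) ^ F.card * (q : ℝ) ^ (n - F.card) := by gcongr
      _ = (q : ℝ) ^ (F.card + (n - F.card)) * (Real.exp ((t - 1) / q)) ^ F.card := by
          rw [mul_pow, pow_add]; ring
      _ = _ := by rw [Nat.add_sub_cancel' hFn, ← Real.exp_nat_mul]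
  have hlow : ((univ.filter (fun c : Fin n → Fin q => (colN c F j : ℝ) < l / (4 * q))).card : ℝ)
      ≤ (q : ℝ) ^ n * Real.exp (-(l / (4 * q))) := by
    have h1 := col_mgf F j (1 / 2)
    have h2 := gen (1 / 2) (by linarith)
    have h3 : ∑ c ∈ univ.filter (fun c : Fin n → Fin q => (colN c F j : ℝ) < l / (4 * q)),
        Real.exp (-(l / (4 * q))) ≤ ∑ c : Fin n → Fin q, (1 / 2 : ℝ) ^ (colN c F j) := by
      refine le_trans (sum_le_sum (g := fun c => (1 / 2 : ℝ) ^ (colN c F j)) ?_)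
        (sum_le_sum_of_subset_of_nonneg (filter_subset _ _) (fun _ _ _ => by positivity))
      intro c hc
      rw [mem_filter] at hc
      have : (1 / 2 : ℝ) ^ (colN c F j) = Real.exp (-(colN c F j * Real.log 2)) := by
        rw [← mul_neg, Real.exp_nat_mul, Real.exp_neg, Real.exp_log (by norm_num)]; norm_num
      rw [this]
      apply Real.exp_le_exp.2
      have hlog : Real.log 2 ≤ 1 := by have := Real.log_two_lt_d9; linarith
      have : (colN c F j : ℝ) * Real.log 2 ≤ colN c F j * 1 := by gcongr
      linarith [hc.2]
    rw [h1] at h3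
    have h4 := h3.trans h2
    rw [sum_const, nsmul_eq_mul] at h4
    have h5 : Real.exp (l * ((1 / 2 - 1) / q)) = Real.exp (-(l / (4 * q))) * Real.exp (-(l / (4 * q))) := by
      rw [← Real.exp_add]; congr 1; field_simp; ring
    rw [h5, ← mul_assoc] at h4
    exact le_of_mul_le_mul_right h4 (Real.exp_pos _)
  have hhigh : ((univ.filter (fun c : Fin n → Fin q => 3 * l / q < (colN c F j : ℝ))).card : ℝ)
      ≤ (q : ℝ) ^ n * Real.exp (-(l / (4 * q))) := by
    have h1 := col_mgf F j 2
    have h2 := gen 2 (by linarith)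
    have h3 : ∑ c ∈ univ.filter (fun c : Fin n → Fin q => 3 * l / q < (colN c F j : ℝ)),
        Real.exp (3 / 2 * l / q) ≤ ∑ c : Fin n → Fin q, (2 : ℝ) ^ (colN c F j) := by
      refine le_trans (sum_le_sum (g := fun c => (2 : ℝ) ^ (colN c F j)) ?_)
        (sum_le_sum_of_subset_of_nonneg (filter_subset _ _) (fun _ _ _ => by positivity))
      intro c hc
      rw [mem_filter] at hc
      have : (2 : ℝ) ^ (colN c F j) = Real.exp (colN c F j * Real.log 2) := by
        rw [Real.exp_nat_mul, Real.exp_log (by norm_num)]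
      rw [this]
      apply Real.exp_le_exp.2
      have hlog : 1 / 2 ≤ Real.log 2 := by have := Real.log_two_gt_d9; linarith
      have : (colN c F j : ℝ) * (1 / 2) ≤ colN c F j * Real.log 2 := by gcongr
      have h7 := hc.2
      have : 3 / 2 * l / q = (3 * l / q) / 2 := by ring
      linarith
    rw [h1] at h3
    have h4 := h3.trans h2
    rw [sum_const, nsmul_eq_mul] at h4
    have h6 : Real.exp (l * ((2 - 1) / q)) ≤ Real.exp (-(l / (4 * q))) * Real.exp (3 / 2 * l / q) := by
      rw [← Real.exp_add]
      apply Real.exp_le_exp.2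
      have : -(l / (4 * q)) + 3 / 2 * l / q - l * ((2 - 1) / q) = (l / q) / 4 := by
        field_simp; ring
      have : 0 ≤ l / q := by positivity
      linarith
    have h7 : (q : ℝ) ^ n * Real.exp (l * ((2 - 1) / q)) ≤
      (q : ℝ) ^ n * (Real.exp (-(l / (4 * q))) * Real.exp (3 / 2 * l / q)) := by gcongr
    have h8 := h4.trans h7
    rw [← mul_assoc] at h8
    exact le_of_mul_le_mul_right h8 (Real.exp_pos _)
  have hsub : (univ.filter (fun c : Fin n → Fin q => ¬ Bal c F j)) ⊆
      (univ.filter (fun c : Fin n → Fin q => (colN c F j : ℝ) < l / (4 * q))) ∪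
      (univ.filter (fun c : Fin n → Fin q => 3 * l / q < (colN c F j : ℝ))) := by
    intro c hc
    simp only [mem_filter, mem_univ, true_and, mem_union, Bal, not_and_or, not_le] at *
    exact hc
  have := (card_le_card hsub).trans (card_union_le _ _)
  have h9 : ((univ.filter (fun c : Fin n → Fin q => ¬ Bal c F j)).card : ℝ) ≤
      ((univ.filter (fun c : Fin n → Fin q => (colN c F j : ℝ) < l / (4 * q))).card : ℝ) +
      ((univ.filter (fun c : Fin n → Fin q => 3 * l / q < (colN c F j : ℝ))).card : ℝ) := by
    exact_mod_cast this
  linarith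

lemma col_exists {q : ℕ} (j : Fin q) {ι : Type*} (I : Finset ι) (F : ι → Finset (Fin n))
    (h : ∑ i ∈ I, 2 * Real.exp (-((F i).card / (4 * q))) < 1) :
    ∃ c : Fin n → Fin q, ∀ i ∈ I, Bal c (F i) j := by
  by_contra hcon
  push Not at hcon
  have hq : (0 : ℝ) < q := by exact_mod_cast j.pos
  have h1 : (univ : Finset (Fin n → Fin q)) ⊆
      I.biUnion (fun i => univ.filter (fun c => ¬ Bal c (F i) j)) := by
    intro c _
    obtain ⟨i, hi, hc⟩ := hcon c
    simp only [mem_biUnion, mem_filter, mem_univ, true_and]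
    exact ⟨i, hi, hc⟩
  have h2 := (card_le_card h1).trans card_biUnion_le
  have h3 : ((univ : Finset (Fin n → Fin q)).card : ℝ) ≤
    ∑ i ∈ I, ((univ.filter (fun c : Fin n → Fin q => ¬ Bal c (F i) j)).card : ℝ) := by
    exact_mod_cast h2
  have h4 : ((univ : Finset (Fin n → Fin q)).card : ℝ) = (q : ℝ) ^ n := by
    simp
  rw [h4] at h3
  have h5 := h3.trans (sum_le_sum (fun i _ => col_bad (F i) j))
  have h6 : ∑ i ∈ I, 2 * (q : ℝ) ^ n * Real.exp (-((F i).card / (4 * q)))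
      = (q : ℝ) ^ n * ∑ i ∈ I, 2 * Real.exp (-((F i).card / (4 * q))) := by
    rw [mul_sum]; apply sum_congr rfl; intros; ring
  rw [h6] at h5
  have : (0 : ℝ) < (q : ℝ) ^ n := by positivity
  nlinarith

lemma col_avg {q d : ℕ} (j1 j2 : Fin q) :
    ∃ c : Fin n → Fin q,
      cnt n d (fun G => ¬ ∀ v, Bal c (nb G v) j1 ∧ Bal c (nb G v) j2)
        ≤ 4 * n * Real.exp (-(d / (4 * q))) * (Om n d).card := by
  have hq : (0 : ℝ) < q := by exact_mod_cast j1.pos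
  haveI : Nonempty (Fin q) := ⟨j1⟩
  set bad : (Fin n → Fin q) → SimpleGraph (Fin n) → Prop :=
    fun c G => ¬ ∀ v, Bal c (nb G v) j1 ∧ Bal c (nb G v) j2 with hbad
  have hswap : ∑ c : Fin n → Fin q, cnt n d (bad c)
      = ∑ G ∈ Om n d, ((univ.filter (fun c => bad c G)).card : ℝ) := by
    have e1 : ∀ c, cnt n d (bad c) = ∑ G ∈ Om n d, (if bad c G then (1:ℝ) else 0) := by
      intro c
      unfold cnt ev
      rw [card_filter]; push_cast; rfl
    rw [sum_congr rfl (fun c _ => e1 c), sum_comm]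
    apply sum_congr rfl
    intro G _
    rw [card_filter]; push_cast; rfl
  have hG : ∀ G ∈ Om n d, ((univ.filter (fun c => bad c G)).card : ℝ) ≤
      4 * n * Real.exp (-(d / (4 * q))) * q ^ n := by
    intro G hG
    have hsub : (univ.filter (fun c => bad c G)) ⊆ univ.biUnion (fun v : Fin n =>
        (univ.filter (fun c : Fin n → Fin q => ¬ Bal c (nb G v) j1)) ∪
        (univ.filter (fun c : Fin n → Fin q => ¬ Bal c (nb G v) j2))) := by
      intro c hc
      simp only [mem_filter, mem_univ, true_and, mem_biUnion, mem_union, hbad] at *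
      push Not at hc
      obtain ⟨v, hv⟩ := hc
      exact ⟨v, by tauto⟩
    have h1 := (card_le_card hsub).trans card_biUnion_le
    have h2 : ((univ.filter (fun c => bad c G)).card : ℝ) ≤ ∑ v : Fin n,
        (((univ.filter (fun c : Fin n → Fin q => ¬ Bal c (nb G v) j1)) ∪
        (univ.filter (fun c : Fin n → Fin q => ¬ Bal c (nb G v) j2))).card : ℝ) := by
      exact_mod_cast h1
    refine h2.trans ?_
    have h3 : ∀ v ∈ (univ : Finset (Fin n)),
        (((univ.filter (fun c : Fin n → Fin q => ¬ Bal c (nb G v) j1)) ∪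
        (univ.filter (fun c : Fin n → Fin q => ¬ Bal c (nb G v) j2))).card : ℝ) ≤
        4 * (q : ℝ) ^ n * Real.exp (-(d / (4 * q))) := by
      intro v _
      have a1 := col_bad (nb G v) j1
      have a2 := col_bad (nb G v) j2
      rw [mem_Om.1 hG v] at a1 a2
      have a3 := card_union_le (univ.filter (fun c : Fin n → Fin q => ¬ Bal c (nb G v) j1))
        (univ.filter (fun c : Fin n → Fin q => ¬ Bal c (nb G v) j2))
      have a4 : (((univ.filter (fun c : Fin n → Fin q => ¬ Bal c (nb G v) j1)) ∪
        (univ.filter (fun c : Fin n → Fin q => ¬ Bal c (nb G v) j2))).card : ℝ) ≤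
        (univ.filter (fun c : Fin n → Fin q => ¬ Bal c (nb G v) j1)).card +
        (univ.filter (fun c : Fin n → Fin q => ¬ Bal c (nb G v) j2)).card := by exact_mod_cast a3
      linarith
    refine (sum_le_sum h3).trans (le_of_eq ?_)
    rw [sum_const, card_univ, Fintype.card_fin, nsmul_eq_mul]
    ring
  have htot : ∑ c : Fin n → Fin q, cnt n d (bad c) ≤
      ∑ c : Fin n → Fin q, (4 * n * Real.exp (-(d / (4 * q))) * (Om n d).card : ℝ) := by
    rw [hswap]
    refine (sum_le_sum hG).trans (le_of_eq ?_)
    rw [sum_const, sum_const, card_univ, nsmul_eq_mul, nsmul_eq_mul]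
    simp only [Fintype.card_fun, Fintype.card_fin]
    push_cast; ring
  obtain ⟨c, -, hc⟩ := exists_le_of_sum_le (univ_nonempty) htot
  exact ⟨c, hc⟩

end ISTProof


namespace ISTProof
open Finset
open scoped Classical

variable {n : ℕ}

lemma restr_mono {G : SimpleGraph (Fin n)} {S T : Finset (Fin n)} (h : S ⊆ T) :
    restr G S ≤ restr G T := by
  intro a b hab
  exact ⟨hab.1, h hab.2.1, h hab.2.2⟩

/-- joint property: edges between any two disjoint large sets -/
def JP (G : SimpleGraph (Fin n)) (m : ℕ) : Prop :=
  ∀ A B : Finset (Fin n), Disjoint A B → m ≤ A.card → m ≤ B.card → ∃ a ∈ A, ∃ b ∈ B, G.Adj a b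

/-- local sparsity property -/
def DP (G : SimpleGraph (Fin n)) (m g : ℕ) : Prop :=
  ∀ Y Z : Finset (Fin n), 0 < Y.card → Y.card ≤ m → Z.card ≤ Y.card →
    (eP G Y Z).card < g * Y.card

/-- connected set -/
def Cn (G : SimpleGraph (Fin n)) (D : Finset (Fin n)) : Prop :=
  ∃ x ∈ D, ∀ y ∈ D, (restr G D).Reachable x y

lemma seg_exists {G : SimpleGraph (Fin n)} {m s : ℕ} (hJ : JP G m) (hs : 1 ≤ s) (hsm : s ≤ m)
    (Rem : Finset (Fin n)) (hR : 3 * m ≤ Rem.card) :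
    ∃ D ⊆ Rem, D.card = s ∧ Cn G D := by
  by_contra hcon
  push Not at hcon
  -- closed sets
  have hclosed : ∀ x ∈ Rem, ∃ D ⊆ Rem, x ∈ D ∧ D.card < s ∧
      ∀ y ∈ D, ∀ z ∈ Rem, z ∉ D → ¬ G.Adj y z := by
    intro x hx
    set fam := Rem.powerset.filter (fun D => x ∈ D ∧ D.card ≤ s ∧
      ∀ y ∈ D, (restr G D).Reachable x y) with hfam
    have hne : fam.Nonempty := by
      refine ⟨{x}, ?_⟩
      rw [hfam, mem_filter]
      refine ⟨by simpa using hx, by simp, by simpa using hs, ?_⟩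
      intro y hy
      rw [mem_singleton] at hy
      subst hy
      exact SimpleGraph.Reachable.refl _
    obtain ⟨D, hD, hmax⟩ := exists_max_image fam Finset.card hne
    rw [hfam, mem_filter, mem_powerset] at hD
    obtain ⟨hDR, hxD, hDs, hDc⟩ := hD
    have hlt : D.card < s := by
      rcases hDs.lt_or_eq with h | h
      · exact h
      · exact absurd ⟨x, hxD, hDc⟩ (hcon D hDR h)
    refine ⟨D, hDR, hxD, hlt, ?_⟩
    intro y hy z hz hzD hyz
    have h1 : insert z D ∈ fam := by
      rw [hfam, mem_filter, mem_powerset]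
      refine ⟨insert_subset hz hDR, mem_insert_of_mem hxD, ?_, ?_⟩
      · rw [card_insert_of_notMem hzD]; omega
      · intro w hw
        have hy' := (hDc y hy).mono (restr_mono (subset_insert z D))
        rw [mem_insert] at hw
        rcases hw with rfl | hw
        · refine hy'.trans (SimpleGraph.Adj.reachable ?_)
          exact ⟨hyz, mem_insert_of_mem hy, mem_insert_self _ _⟩
        · exact (hDc w hw).mono (restr_mono (subset_insert z D))
    have := hmax _ h1
    rw [card_insert_of_notMem hzD] at this
    omega
  set fam := Rem.powerset.filter (fun A => A.card < m ∧
    ∀ y ∈ A, ∀ z ∈ Rem, z ∉ A → ¬ G.Adj y z) with hfam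
  have hne : fam.Nonempty := by
    refine ⟨∅, ?_⟩
    rw [hfam, mem_filter]
    refine ⟨by simp, by simp; omega, by simp⟩
  obtain ⟨A, hA, hmax⟩ := exists_max_image fam Finset.card hne
  rw [hfam, mem_filter, mem_powerset] at hA
  obtain ⟨hAR, hAm, hAc⟩ := hA
  have : ∃ x ∈ Rem, x ∉ A := by
    by_contra h
    push Not at h
    have := card_le_card (show Rem ⊆ A from h)
    omega
  obtain ⟨x, hx, hxA⟩ := this
  obtain ⟨D, hDR, hxD, hDs, hDc⟩ := hclosed x hx
  have hc : ∀ y ∈ A ∪ D, ∀ z ∈ Rem, z ∉ A ∪ D → ¬ G.Adj y z := by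
    intro y hy z hz hzn
    rw [mem_union, not_or] at hzn
    rw [mem_union] at hy
    rcases hy with hy | hy
    · exact hAc y hy z hz hzn.1
    · exact hDc y hy z hz hzn.2
  have hbig : m ≤ (A ∪ D).card := by
    by_contra h
    push Not at h
    have h1 : A ∪ D ∈ fam := by
      rw [hfam, mem_filter, mem_powerset]
      exact ⟨union_subset hAR hDR, h, hc⟩
    have h2 := hmax _ h1
    have h3 : A.card < (A ∪ D).card := by
      apply card_lt_card
      rw [ssubset_iff_of_subset subset_union_left]
      exact ⟨x, mem_union_right _ hxD, hxA⟩
    omega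
  have h4 := card_union_le A D
  have h5 := card_sdiff_add_card_eq_card (union_subset hAR hDR)
  obtain ⟨a, ha, b, hb, hab⟩ := hJ (A ∪ D) (Rem \ (A ∪ D)) disjoint_sdiff hbig (by omega)
  rw [mem_sdiff] at hb
  exact hc a ha b hb.1 hb.2 hab

lemma segs_exist {G : SimpleGraph (Fin n)} {m s : ℕ} (hJ : JP G m) (hs : 1 ≤ s) (hsm : s ≤ m)
    (N : ℕ) (Rem : Finset (Fin n)) (hR : 3 * m + N * s ≤ Rem.card) :
    ∃ T : Fin N → Finset (Fin n), (∀ i, T i ⊆ Rem ∧ (T i).card = s ∧ Cn G (T i)) ∧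
      ∀ i j, i ≠ j → Disjoint (T i) (T j) := by
  induction N generalizing Rem with
  | zero => exact ⟨fun i => i.elim0, fun i => i.elim0, fun i => i.elim0⟩
  | succ N ih =>
    obtain ⟨D, hD, hDs, hDc⟩ := seg_exists hJ hs hsm Rem (by omega)
    have h5 := card_sdiff_add_card_eq_card hD
    have : 3 * m + N * s ≤ (Rem \ D).card := by
      rw [add_mul] at hR; omega
    obtain ⟨T, hT, hdis⟩ := ih (Rem \ D) this
    refine ⟨Fin.cons D T, ?_, ?_⟩
    · intro i
      refine Fin.cases ?_ (fun i => ?_) i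
      · exact ⟨hD, hDs, hDc⟩
      · simp only [Fin.cons_succ]
        exact ⟨(hT i).1.trans sdiff_subset, (hT i).2⟩
    · have h0 : ∀ i, Disjoint D (T i) := fun i =>
        disjoint_of_subset_right (hT i).1 disjoint_sdiff
      intro i j
      refine Fin.cases ?_ (fun i => ?_) i
      · refine Fin.cases ?_ (fun j => ?_) j
        · intro h; exact absurd rfl h
        · intro _; simpa using h0 j
      · refine Fin.cases ?_ (fun j => ?_) j
        · intro _; simpa using (h0 i).symm
        · intro h
          simp only [Fin.cons_succ]
          exact hdis i j (fun e => h (by rw [e]))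

/-- one step of the linking map -/
def stepF {N : ℕ} (f : Fin n → Fin n ⊕ Fin N) : Fin n ⊕ Fin N → Fin n ⊕ Fin N
  | Sum.inl y => f y
  | Sum.inr j => Sum.inr j

lemma link {G : SimpleGraph (Fin n)} {r : Fin n} {N d : ℕ} (A R2 : Finset (Fin n))
    (T : Fin N → Finset (Fin n)) (hA : ∀ a ∈ A, G.Adj r a) (hAd : A.card = d)
    (hAR : Disjoint A R2) (hrR : r ∉ R2)
    (hTc : ∀ j, Cn G (T j)) (hTd : ∀ i j, i ≠ j → Disjoint (T i) (T j)) (hrT : ∀ j, r ∉ T j)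
    (hTS : ∀ j, Disjoint (A ∪ R2) (T j))
    (f : Fin n → Fin n ⊕ Fin N) (hinj : ∀ x ∈ A ∪ R2, ∀ y ∈ A ∪ R2, f x = f y → x = y)
    (hf : ∀ x ∈ A ∪ R2, (∃ y ∈ R2, (y = x ∨ G.Adj x y) ∧ f x = Sum.inl y) ∨
      (∃ j, (∃ u ∈ T j, G.Adj x u) ∧ f x = Sum.inr j)) :
    ∃ D : Fin d → Finset (Fin n), (∀ i j, i ≠ j → Disjoint (D i) (D j)) ∧ (∀ i, r ∉ D i) ∧
      (∀ i, ConnTo G r (D i)) ∧ (∀ i, ∃ j, T j ⊆ D i ∧ D i ⊆ (A ∪ R2) ∪ T j) := by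
  -- orbit
  set o : Fin n → ℕ → Fin n ⊕ Fin N := fun a k => (stepF f)^[k] (Sum.inl a) with ho
  have o0 : ∀ a, o a 0 = Sum.inl a := fun a => rfl
  have os : ∀ a k, o a (k + 1) = stepF f (o a k) := fun a k => Function.iterate_succ_apply' _ _ _
  have inS : ∀ a ∈ A, ∀ k y, o a k = Sum.inl y → y ∈ A ∪ R2 := by
    intro a ha k
    induction k with
    | zero => intro y hy; rw [o0] at hy; cases hy; exact mem_union_left _ ha
    | succ k ih =>
      intro y hy
      rw [os] at hy
      cases hk : o a k with
      | inl x =>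
        rw [hk] at hy
        simp only [stepF] at hy
        rcases hf x (ih x hk) with ⟨y', hy', _, e⟩ | ⟨j, _, e⟩
        · rw [e] at hy; cases hy; exact mem_union_right _ hy'
        · rw [e] at hy; cases hy
      | inr j => rw [hk] at hy; simp [stepF] at hy
  have pred : ∀ a ∈ A, ∀ k y, o a (k + 1) = Sum.inl y → ∃ x ∈ A ∪ R2, o a k = Sum.inl x ∧
      f x = Sum.inl y ∧ y ∈ R2 ∧ (y = x ∨ G.Adj x y) := by
    intro a ha k y hy
    rw [os] at hy
    cases hk : o a k with
    | inl x =>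
      rw [hk] at hy
      simp only [stepF] at hy
      have hx := inS a ha k x hk
      rcases hf x hx with ⟨y', hy', h2, e⟩ | ⟨j, _, e⟩
      · rw [e] at hy; cases hy; exact ⟨x, hx, rfl, e, hy', h2⟩
      · rw [e] at hy; cases hy
    | inr j => rw [hk] at hy; simp [stepF] at hy
  have back : ∀ a ∈ A, ∀ a' ∈ A, ∀ i j y, o a i = Sum.inl y → o a' j = Sum.inl y →
      a = a' ∧ i = j := by
    intro a ha a' ha' i
    induction i with
    | zero =>
      intro j y h1 h2
      rw [o0] at h1
      cases h1
      cases j with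
      | zero => rw [o0] at h2; cases h2; exact ⟨rfl, rfl⟩
      | succ j =>
        obtain ⟨x, _, _, _, h, _⟩ := pred a' ha' j a h2
        exact absurd h (disjoint_left.1 hAR ha)
    | succ i ih =>
      intro j y h1 h2
      obtain ⟨x, hx, hx1, hx2, hx3, _⟩ := pred a ha i y h1
      cases j with
      | zero =>
        rw [o0] at h2; cases h2
        exact absurd hx3 (disjoint_left.1 hAR ha')
      | succ j =>
        obtain ⟨x', hx', hx1', hx2', _⟩ := pred a' ha' j y h2
        have e := hinj x hx x' hx' (hx2.trans hx2'.symm)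
        subst e
        obtain ⟨e1, e2⟩ := ih j x hx1 hx1'
        exact ⟨e1, by rw [e2]⟩
  have term : ∀ a ∈ A, ∃ x ∈ A ∪ R2, ∃ j, (∃ k, o a k = Sum.inl x) ∧ f x = Sum.inr j ∧
      ∃ u ∈ T j, G.Adj x u := by
    intro a ha
    by_contra hcon
    push Not at hcon
    have all : ∀ k, ∃ y, o a k = Sum.inl y := by
      intro k
      induction k with
      | zero => exact ⟨a, o0 a⟩
      | succ k ih =>
        obtain ⟨x, hx⟩ := ih
        have hxS := inS a ha k x hx
        rcases hf x hxS with ⟨y', hy', h2, e⟩ | ⟨j, ⟨u, hu, hxu⟩, e⟩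
        · exact ⟨y', by rw [os, hx]; exact e⟩
        · exact absurd hxu (hcon x hxS j ⟨k, hx⟩ e u hu)
    choose y hy using all
    have : Function.Injective y := by
      intro i j hij
      exact (back a ha a ha i j (y i) (hy i) (by rw [hij]; exact hy j)).2
    exact not_injective_infinite_finite y this
  rcases A.eq_empty_or_nonempty with hAe | ⟨a0, ha0⟩
  · have hd0 : d = 0 := by rw [← hAd, hAe]; rfl
    subst hd0
    exact ⟨fun i => i.elim0, fun i => i.elim0, fun i => i.elim0, fun i => i.elim0,
      fun i => i.elim0⟩
  haveI : Nonempty (Fin N) := by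
    obtain ⟨_, _, j, _⟩ := term a0 ha0
    exact ⟨j⟩
  choose! x hxS j hk hfx hu using term
  set E : Fin n → Finset (Fin n) := fun a =>
    univ.filter (fun y => ∃ k, o a k = Sum.inl y) ∪ T (j a) with hE
  set em := A.equivFinOfCardEq hAd with hem
  refine ⟨fun i => E (em.symm i), ?_, ?_, ?_, ?_⟩
  · intro i i' hii
    have ha := (em.symm i).2
    have ha' := (em.symm i').2
    have hne : ((em.symm i : Fin n)) ≠ (em.symm i') := by
      intro e
      exact hii (em.symm.injective (Subtype.ext e))
    set a := ((em.symm i : Fin n))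
    set a' := ((em.symm i' : Fin n))
    have hjne : j a ≠ j a' := by
      intro e
      have h1 := hinj _ (hxS a ha) _ (hxS a' ha') (by rw [hfx a ha, hfx a' ha', e])
      obtain ⟨k, hk1⟩ := hk a ha
      obtain ⟨k', hk1'⟩ := hk a' ha'
      rw [← h1] at hk1'
      exact hne (back a ha a' ha' k k' _ hk1 hk1').1
    rw [disjoint_left]
    intro y hy hy'
    simp only [hE, mem_union, mem_filter, mem_univ, true_and] at hy hy'
    rcases hy with ⟨k, hk1⟩ | hy <;> rcases hy' with ⟨k', hk1'⟩ | hy'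
    · exact hne (back a ha a' ha' k k' _ hk1 hk1').1
    · exact disjoint_left.1 (hTS _) (inS a ha k y hk1) hy'
    · exact disjoint_left.1 (hTS _) (inS a' ha' k' y hk1') hy
    · exact disjoint_left.1 (hTd _ _ hjne) hy hy'
  · intro i hr
    simp only [hE, mem_union, mem_filter, mem_univ, true_and] at hr
    rcases hr with ⟨k, hk1⟩ | hr
    · have := inS _ (em.symm i).2 k r hk1
      rw [mem_union] at this
      rcases this with h | h
      · exact G.loopless.irrefl r (hA r h)
      · exact hrR h
    · exact hrT _ hr
  · intro i
    have ha := (em.symm i).2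
    set a := ((em.symm i : Fin n))
    have horb : ∀ k y, o a k = Sum.inl y → (restr G (insert r (E a))).Reachable y r := by
      intro k
      induction k with
      | zero =>
        intro y hy
        rw [o0] at hy; cases hy
        apply SimpleGraph.Adj.reachable
        refine ⟨(hA a ha).symm, mem_insert_of_mem ?_, mem_insert_self _ _⟩
        simp only [hE, mem_union, mem_filter, mem_univ, true_and]
        exact Or.inl ⟨0, o0 a⟩
      | succ k ih =>
        intro y hy
        obtain ⟨x', hx', hx1, hx2, hx3, hx4⟩ := pred a ha k y hy
        have h1 := ih x' hx1
        rcases hx4 with rfl | hx4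
        · exact h1
        · refine SimpleGraph.Reachable.trans (SimpleGraph.Adj.reachable ?_) h1
          refine ⟨hx4.symm, mem_insert_of_mem ?_, mem_insert_of_mem ?_⟩
          · simp only [hE, mem_union, mem_filter, mem_univ, true_and]
            exact Or.inl ⟨k + 1, hy⟩
          · simp only [hE, mem_union, mem_filter, mem_univ, true_and]
            exact Or.inl ⟨k, hx1⟩
    intro y hy
    simp only [hE, mem_union, mem_filter, mem_univ, true_and] at hy
    rcases hy with ⟨k, hk1⟩ | hy
    · exact horb k y hk1
    · obtain ⟨k, hk1⟩ := hk a ha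
      have h1 := horb k _ hk1
      obtain ⟨u, huT, hxu⟩ := hu a ha
      obtain ⟨c, hc, hcy⟩ := hTc (j a)
      have hsub : T (j a) ⊆ insert r (E a) := by
        intro z hz
        apply mem_insert_of_mem
        simp only [hE, mem_union]
        exact Or.inr hz
      have h2 := ((hcy y hy).symm.trans (hcy u huT)).mono (restr_mono (G := G) hsub)
      refine h2.trans (SimpleGraph.Reachable.trans (SimpleGraph.Adj.reachable ?_) h1)
      refine ⟨hxu.symm, hsub huT, mem_insert_of_mem ?_⟩
      simp only [hE, mem_union, mem_filter, mem_univ, true_and]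
      exact Or.inl ⟨k, hk1⟩
  · intro i
    have ha := (em.symm i).2
    refine ⟨j (em.symm i), subset_union_right, ?_⟩
    intro y hy
    simp only [hE, mem_union, mem_filter, mem_univ, true_and] at hy
    rw [mem_union]
    rcases hy with ⟨k, hk1⟩ | hy
    · exact Or.inl (inS _ ha k y hk1)
    · exact Or.inr hy

lemma exists_struct {G : SimpleGraph (Fin n)} {r : Fin n} {d m s g : ℕ} (A R1 R2 : Finset (Fin n))
    (hA : ∀ a ∈ A, G.Adj r a) (hAd : A.card = d) (hA1 : Disjoint A R1) (hA2 : Disjoint A R2)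
    (h12 : Disjoint R1 R2) (hr1 : r ∉ R1) (hr2 : r ∉ R2)
    (hJ : JP G m) (hD : DP G m g) (hs : 1 ≤ s) (hsm : s ≤ m) (hds : m ≤ d * s)
    (hR1 : 3 * m + 2 * d * s ≤ R1.card)
    (hg : ∀ y ∈ A ∪ R2, g ≤ (nb G y ∩ R2).card) :
    ∃ D : Fin d → Finset (Fin n), (∀ i j, i ≠ j → Disjoint (D i) (D j)) ∧ (∀ i, r ∉ D i) ∧
      (∀ i, ConnTo G r (D i)) ∧ (∀ i, s ≤ (D i).card) ∧ (∀ i, D i ⊆ A ∪ R1 ∪ R2) := by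
  obtain ⟨T, hT, hTd⟩ := segs_exist hJ hs hsm (2 * d) R1 hR1
  have hTS : ∀ j, Disjoint (A ∪ R2) (T j) := by
    intro j
    rw [disjoint_union_left]
    exact ⟨disjoint_of_subset_right (hT j).1 hA1, (disjoint_of_subset_left (hT j).1 h12).symm⟩
  -- Hall
  set tg : {y // y ∈ A ∪ R2} → Finset (Fin n ⊕ Fin (2 * d)) := fun y =>
    univ.filter (fun w => (∃ z ∈ R2, (z = y.1 ∨ G.Adj y.1 z) ∧ w = Sum.inl z) ∨
      (∃ j, (∃ u ∈ T j, G.Adj y.1 u) ∧ w = Sum.inr j)) with htg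
  have hall : ∀ Y : Finset {y // y ∈ A ∪ R2}, Y.card ≤ (Y.biUnion tg).card := by
    intro Y
    set Y' : Finset (Fin n) := Y.image Subtype.val with hY'
    have hYc : Y'.card = Y.card := card_image_of_injective _ Subtype.val_injective
    have hYS : Y' ⊆ A ∪ R2 := by
      intro y hy
      rw [hY', mem_image] at hy
      obtain ⟨z, _, rfl⟩ := hy
      exact z.2
    set Z : Finset (Fin n) := R2.filter (fun z => ∃ y ∈ Y', z = y ∨ G.Adj y z) with hZ
    set J : Finset (Fin (2 * d)) := univ.filter (fun j => ∃ y ∈ Y', ∃ u ∈ T j, G.Adj y u) with hJd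
    have hZJ : Z.card + J.card ≤ (Y.biUnion tg).card := by
      rw [← card_disjSum]
      apply card_le_card
      intro w hw
      rw [mem_biUnion]
      rw [mem_disjSum] at hw
      rcases hw with ⟨z, hz, rfl⟩ | ⟨j, hj, rfl⟩
      · rw [hZ, mem_filter] at hz
        obtain ⟨hz2, y, hy, hyz⟩ := hz
        rw [hY', mem_image] at hy
        obtain ⟨y', hy', rfl⟩ := hy
        refine ⟨y', hy', ?_⟩
        simp only [htg, mem_filter, mem_univ, true_and]
        exact Or.inl ⟨z, hz2, hyz, rfl⟩
      · rw [hJd, mem_filter] at hj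
        obtain ⟨_, y, hy, hyz⟩ := hj
        rw [hY', mem_image] at hy
        obtain ⟨y', hy', rfl⟩ := hy
        refine ⟨y', hy', ?_⟩
        simp only [htg, mem_filter, mem_univ, true_and]
        exact Or.inr ⟨j, hyz, rfl⟩
    by_cases hYm : Y'.card ≤ m
    · by_contra hlt
      push Not at hlt
      have hZlt : Z.card ≤ Y'.card := by omega
      have h1 := hD Y' Z (by omega) hYm hZlt
      have h2 : g * Y'.card ≤ (eP G Y' Z).card := by
        have h3 : (g : ℝ) * Y'.card ≤ (eP G Y' Z).card := by
          unfold eP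
          rw [mul_comm]
          apply card_dp_ge le_rfl _ (by positivity)
          intro y hy
          have h4 := hg y (hYS hy)
          have h5 : nb G y ∩ R2 ⊆ nb G y ∩ Z := by
            intro z hz
            rw [mem_inter] at *
            refine ⟨hz.1, ?_⟩
            rw [hZ, mem_filter]
            exact ⟨hz.2, y, hy, Or.inr (mem_nb.1 hz.1)⟩
          exact_mod_cast h4.trans (card_le_card h5)
        exact_mod_cast h3
      omega
    · push Not at hYm
      have hZ1 : Y'.card ≤ Z.card + d := by
        have h1 : Y' ⊆ Z ∪ A := by
          intro y hy
          have := hYS hy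
          rw [mem_union] at *
          rcases this with h | h
          · exact Or.inr h
          · left
            rw [hZ, mem_filter]
            exact ⟨h, y, hy, Or.inl rfl⟩
        have := (card_le_card h1).trans (card_union_le _ _)
        omega
      have hJ1 : d ≤ J.card := by
        by_contra hlt
        push Not at hlt
        set W := Jᶜ.biUnion T with hW
        have hWc : W.card = Jᶜ.card * s := by
          rw [hW, card_biUnion (fun i _ j _ h => hTd i j h)]
          rw [sum_congr rfl (fun i _ => (hT i).2.1)]
          simp
        have hJc : d ≤ Jᶜ.card := by
          rw [card_compl, Fintype.card_fin]; omega
        have hWm : m ≤ W.card := by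
          rw [hWc]; exact hds.trans (Nat.mul_le_mul_right s hJc)
        have hdisj : Disjoint Y' W := by
          rw [disjoint_left]
          intro y hy hyW
          rw [hW, mem_biUnion] at hyW
          obtain ⟨j, _, hj⟩ := hyW
          exact disjoint_left.1 (hTS j) (hYS hy) hj
        obtain ⟨a, ha, b, hb, hab⟩ := hJ Y' W hdisj hYm.le hWm
        rw [hW, mem_biUnion] at hb
        obtain ⟨j, hj, hbj⟩ := hb
        rw [mem_compl] at hj
        apply hj
        rw [hJd, mem_filter]
        exact ⟨mem_univ _, a, ha, b, hbj, hab⟩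
      omega
  obtain ⟨f, hfi, hft⟩ := (all_card_le_biUnion_card_iff_exists_injective tg).1 hall
  set f' : Fin n → Fin n ⊕ Fin (2 * d) := fun y =>
    if h : y ∈ A ∪ R2 then f ⟨y, h⟩ else Sum.inl y with hf'
  obtain ⟨D, h1, h2, h3, h4⟩ := link (G := G) (r := r) A R2 T hA hAd hA2 hr2 (fun j => (hT j).2.2) hTd
    (fun j h => hr1 ((hT j).1 h)) hTS f'
    (by
      intro x hx y hy e
      simp only [hf', hx, hy, dif_pos] at e
      have := hfi e
      simpa using this)
    (by
      intro x hx
      have := hft ⟨x, hx⟩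
      simp only [htg, mem_filter, mem_univ, true_and] at this
      simpa only [hf', hx, dif_pos] using this)
  refine ⟨D, h1, h2, h3, ?_, ?_⟩
  · intro i
    obtain ⟨j, hj, _⟩ := h4 i
    rw [← (hT j).2.1]
    exact card_le_card hj
  · intro i
    obtain ⟨j, _, hj⟩ := h4 i
    refine hj.trans ?_
    have := (hT j).1
    intro y hy
    simp only [mem_union] at *
    rcases hy with (h | h) | h
    · exact Or.inl (Or.inl h)
    · exact Or.inr h
    · exact Or.inl (Or.inr (this h))

end ISTProof

namespace ISTProof
open Finset
open scoped Classical
variable {n : ℕ}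

lemma exp_small {x : ℝ} (hn : 0 < n) (B : ℕ) (h : B * Real.log n ≤ x) :
    Real.exp (-x) ≤ 1 / (n : ℝ) ^ B := by
  have hn' : (0 : ℝ) < n := by exact_mod_cast hn
  calc Real.exp (-x) ≤ Real.exp (-(B * Real.log n)) := Real.exp_le_exp.2 (by linarith)
    _ = 1 / (n : ℝ) ^ B := by
      rw [Real.exp_neg, mul_comm, Real.exp_mul, Real.exp_log hn', one_div, Real.rpow_natCast]

lemma two_pow_small {L : ℕ} (hn : 0 < n) (B : ℕ) (h : 2 * B * Real.log n ≤ L) :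
    1 / (2 : ℝ) ^ L ≤ 1 / (n : ℝ) ^ B := by
  have h1 : 1 / (2 : ℝ) ^ L = Real.exp (-(L * Real.log 2)) := by
    rw [Real.exp_neg, mul_comm, Real.exp_mul, Real.exp_log (by norm_num), one_div,
      Real.rpow_natCast]
  rw [h1]
  apply exp_small hn
  have := Real.log_two_gt_d9
  have hL : (0 : ℝ) ≤ L := Nat.cast_nonneg _
  nlinarith

/-- Independent trees whose cores are single vertices. -/
lemma hasISTs_singles (G : SimpleGraph (Fin n)) (r : Fin n) {d t : ℕ} (K : ℕ)
    (hG : ∀ v, (nb G v).card = d) (T : Finset (Fin n)) (hT : T ⊆ nb G r) (ht : T.card = t)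
    (ha : ∀ v, v ≠ r → ∀ u ∈ T, v ≠ u → ¬ G.Adj v u →
      K ≤ ((nb G v ∩ nb G u) \ insert r T).card)
    (hb : ∀ v, v ≠ r → ∀ S ⊆ T, S.card = K → v ∉ S → (∀ u ∈ S, ¬ G.Adj v u) →
      ((nb G v).filter (fun w => ∀ u ∈ S, ¬ G.Adj w u)).card + 1 + t ≤ d) :
    HasISTs G r t := by
  set e := T.equivFinOfCardEq ht with he
  set u : Fin t → Fin n := fun i => (e.symm i : Fin n) with hu
  have huT : ∀ i, u i ∈ T := fun i => (e.symm i).2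
  have huinj : Function.Injective u := by
    intro i j hij
    exact e.symm.injective (Subtype.ext hij)
  have husurj : ∀ x ∈ T, ∃ i, u i = x := fun x hx => ⟨e ⟨x, hx⟩, by simp [hu]⟩
  have hru : ∀ i, r ≠ u i := by
    intro i h
    have := hT (huT i)
    rw [mem_nb] at this
    rw [← h] at this
    exact G.irrefl this
  refine hasISTs_of_hall G r (fun i => {u i}) ?_ ?_ ?_ K (fun v => nb G v \ insert r T) ?_ ?_ ?_
  · intro i j hij
    simp only [disjoint_singleton]
    exact fun h => hij (huinj h)
  · intro i
    simpa using hru i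
  · intro i x hx
    rw [mem_singleton] at hx
    subst hx
    apply SimpleGraph.Adj.reachable
    have := hT (huT i)
    rw [mem_nb] at this
    simp [restr, this.symm]
  · intro v hv w hw
    simp only [mem_sdiff, mem_nb, mem_insert, not_or] at hw
    refine ⟨hw.1, hw.2.1, fun j hj => hw.2.2 ?_⟩
    rw [mem_singleton] at hj
    rw [hj]; exact huT j
  · intro v hv i hm
    obtain ⟨h1, h2⟩ := hm
    refine (ha v hv (u i) (huT i) (by simpa using h1) (h2 _ (by simp))).trans (card_le_card ?_)
    intro w hw
    simp only [mem_sdiff, mem_inter, mem_nb, mem_filter, mem_singleton, exists_eq_left] at hw ⊢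
    exact ⟨⟨hw.1.1, hw.2⟩, hw.1.2.symm⟩
  · intro v hv S hS hm
    have h := hb v hv (S.image u) (by intro x hx; obtain ⟨i, _, rfl⟩ := mem_image.1 hx; exact huT i)
      (by rw [card_image_of_injective _ huinj, hS])
      (by
        intro hx; obtain ⟨i, hi, e⟩ := mem_image.1 hx
        exact (hm i hi).1 (by simp [e]))
      (by
        intro x hx; obtain ⟨i, hi, rfl⟩ := mem_image.1 hx
        exact (hm i hi).2 _ (by simp))
    -- missing count
    have m1 : (univ.filter (fun i => Missing G (fun i => {u i}) v i)).card
        + (T ∩ nb G v).card ≤ t := by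
      have : (univ.filter (fun i => Missing G (fun i => {u i}) v i)).card ≤ (T \ nb G v).card := by
        rw [← card_image_of_injective _ huinj]
        apply card_le_card
        intro x hx
        obtain ⟨i, hi, rfl⟩ := mem_image.1 hx
        simp only [mem_filter, mem_univ, true_and] at hi
        rw [mem_sdiff, mem_nb]
        exact ⟨huT i, hi.2 _ (by simp)⟩
      have h2 := card_sdiff_add_card_inter T (nb G v)
      omega
    have m2 : (nb G v).card ≤ (T ∩ nb G v).card + 1 +
        ((nb G v).filter (fun w => ∀ u' ∈ S.image u, ¬ G.Adj w u')).card +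
        ((nb G v \ insert r T).filter
          (fun w => ∃ i ∈ S, ∃ u' ∈ ({u i} : Finset (Fin n)), G.Adj w u')).card := by
      have hsub : nb G v ⊆ (((T ∩ nb G v) ∪ {r}) ∪
        ((nb G v).filter (fun w => ∀ u' ∈ S.image u, ¬ G.Adj w u'))) ∪
        ((nb G v \ insert r T).filter
          (fun w => ∃ i ∈ S, ∃ u' ∈ ({u i} : Finset (Fin n)), G.Adj w u')) := by
        intro w hw
        by_cases hwr : w = r
        · simp [hwr]
        by_cases hwT : w ∈ T
        · simp [hwT, hw]
        by_cases hall : ∀ u' ∈ S.image u, ¬ G.Adj w u'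
        · apply mem_union_left
          apply mem_union_right
          exact mem_filter.2 ⟨hw, hall⟩
        · apply mem_union_right
          push Not at hall
          obtain ⟨u', hu', hadj⟩ := hall
          obtain ⟨i, hi, rfl⟩ := mem_image.1 hu'
          refine mem_filter.2 ⟨?_, i, hi, u i, by simp, hadj⟩
          simp [hw, hwr, hwT]
      refine (card_le_card hsub).trans ?_
      refine (card_union_le _ _).trans ?_
      gcongr
      refine (card_union_le _ _).trans ?_
      gcongr
      refine (card_union_le _ _).trans ?_
      simp
    rw [hG v] at m2
    omega

lemma regimeIII (G : SimpleGraph (Fin n)) (r : Fin n) {d t : ℕ}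
    (hG : ∀ v, (nb G v).card = d) (ht : t + 1 + n ≤ 2 * d) (hdn : d < n) :
    HasISTs G r t := by
  have htd : t ≤ (nb G r).card := by rw [hG]; omega
  obtain ⟨T, hT, hTc⟩ := exists_subset_card_eq htd
  have key : ∀ u (A : Finset (Fin n)), A.card ≤ (A ∩ nb G u).card + (n - d) := by
    intro u A
    have h1 := card_sdiff_add_card_inter A (nb G u)
    have h2 : (A \ nb G u).card ≤ (univ \ nb G u).card :=
      card_le_card (sdiff_subset_sdiff (subset_univ _) (le_refl _))
    have h3 : (univ \ nb G u).card = n - d := by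
      rw [card_sdiff_of_subset (subset_univ _), hG, card_univ, Fintype.card_fin]
    omega
  refine hasISTs_singles G r 1 hG T hT hTc ?_ ?_
  · intro v hv u hu hvu hadj
    have k := key u (nb G v \ insert r T)
    have h1 : (nb G v \ insert r T) ∩ nb G u = (nb G v ∩ nb G u) \ insert r T := by
      ext x; simp only [mem_inter, mem_sdiff]; tauto
    rw [h1] at k
    have h2 := card_sdiff_add_card_inter (nb G v) (insert r T)
    rw [hG] at h2
    have h3 : (nb G v ∩ insert r T).card ≤ (insert r (T.erase u)).card := by
      apply card_le_card
      intro x hx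
      simp only [mem_inter, mem_nb, mem_insert, mem_erase] at hx ⊢
      rcases hx.2 with h | h
      · exact Or.inl h
      · refine Or.inr ⟨?_, h⟩
        rintro rfl
        exact hadj hx.1
    have h4 := card_insert_le r (T.erase u)
    have h5 := card_erase_of_mem hu
    have h6 := card_pos.2 ⟨u, hu⟩
    omega
  · intro v hv S hST hS hvS hadj
    obtain ⟨u, rfl⟩ := card_eq_one.1 hS
    have hvu : v ≠ u := by simpa using hvS
    have k : ((nb G v).filter (fun w => ∀ u' ∈ ({u} : Finset (Fin n)), ¬ G.Adj w u')).card
        ≤ ((univ \ nb G u).erase v).card + 0 := by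
      rw [Nat.add_zero]
      apply card_le_card
      intro x hx
      simp only [mem_filter, mem_singleton, forall_eq, mem_nb, mem_erase, mem_sdiff, mem_univ,
        true_and] at hx ⊢
      exact ⟨fun h => G.irrefl (h ▸ hx.1), fun h => hx.2 h.symm⟩
    have h3 : (univ \ nb G u).card = n - d := by
      rw [card_sdiff_of_subset (subset_univ _), hG, card_univ, Fintype.card_fin]
    have h4 : ((univ \ nb G u).erase v).card ≤ n - d := by
      rw [← h3]; exact card_erase_le
    omega

end ISTProof

namespace ISTProof
open Finset
open scoped Classical
variable {n : ℕ}

lemma codeg_all {d : ℕ} (k0 L B : ℕ) (hn : 0 < n) (hdn : d < n)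
    (hk : ∀ k : ℕ, k0 ≤ k → k < d →
      2 * ((d : ℝ) - k) ^ 2 ≤ (k + 1) * (n - 2 * d + k - 1))
    (hL : 2 * ((B + 3 : ℕ) : ℝ) * Real.log n ≤ L) :
    cnt n d (fun G => ¬ ∀ u v, u ≠ v → codeg G u v < k0 + L) ≤ (Om n d).card / (n : ℝ) ^ B := by
  have hn' : (0 : ℝ) < n := by exact_mod_cast hn
  have h1 : cnt n d (fun G => ¬ ∀ u v, u ≠ v → codeg G u v < k0 + L) ≤
      cnt n d (fun G => ∃ p ∈ (univ.filter (fun p : Fin n × Fin n => p.1 ≠ p.2)),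
        k0 + L ≤ codeg G p.1 p.2) := by
    apply cnt_mono
    intro G _ h
    push Not at h
    obtain ⟨u, v, huv, h⟩ := h
    exact ⟨(u, v), by simp [huv], h⟩
  refine h1.trans ((cnt_exists _ _).trans ?_)
  have h2 : ∀ p ∈ (univ.filter (fun p : Fin n × Fin n => p.1 ≠ p.2)),
      cnt n d (fun G => k0 + L ≤ codeg G p.1 p.2) ≤ n * ((Om n d).card * (1 / (n : ℝ) ^ (B + 3))) := by
    intro p hp
    simp only [mem_filter, mem_univ, true_and] at hp
    refine (codeg_tail hp k0 L hdn hk).trans ?_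
    have := two_pow_small hn (B + 3) hL
    rw [div_eq_mul_one_div]
    gcongr
  refine (sum_le_sum h2).trans ?_
  rw [sum_const, nsmul_eq_mul]
  have h3 : (((univ.filter (fun p : Fin n × Fin n => p.1 ≠ p.2)).card : ℕ) : ℝ) ≤ n * n := by
    have : (univ.filter (fun p : Fin n × Fin n => p.1 ≠ p.2)).card ≤ n * n := by
      refine (card_le_univ _).trans ?_
      simp
    exact_mod_cast this
  calc _ ≤ (n * n : ℝ) * (n * ((Om n d).card * (1 / (n : ℝ) ^ (B + 3)))) := by gcongr
    _ = (Om n d).card / (n : ℝ) ^ B := by field_simp; ring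

/-- switching bound for a constant set -/
lemma sw_const {d : ℕ} (hd0 : 0 < d) (v : Fin n) (X : Finset (Fin n)) (k0 k1 : ℕ) (f k2 : ℝ)
    (hf0 : 0 ≤ f) (hf : f + k2 + X.card + 2 ≤ d)
    (hk : k0 ≤ k1) (hkm : k1 ≤ d)
    (hineq : 2 * ((k1 : ℝ) * (n * d)) ≤ (d - k1) * X.card * (f * f)) :
    cnt n d (fun G => v ∉ X ∧ (∀ s ∈ X, ¬ G.Adj v s) ∧ (Ys G v X X).card ≤ k0)
      ≤ (Om n d).card / 2 ^ (k1 - k0) +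
        2 * cnt n d (fun G => ¬ ∀ u v, u ≠ v → (codeg G u v : ℝ) ≤ k2) := by
  have hcd : ∀ G ∈ Om n d, ∀ w w' : Fin n, (d : ℝ) ≤ (nb G w \ nb G w').card + codeg G w w' := by
    intro G hG w w'
    have h1 := card_sdiff_add_card_inter (nb G w) (nb G w')
    rw [mem_Om.1 hG] at h1
    unfold codeg
    exact_mod_cast h1.ge
  have hX0 : (0 : ℝ) ≤ X.card := Nat.cast_nonneg _
  refine (cnt_mono ?_).trans (main_switch hd0 (fun _ => X) (fun _ => X) v d X.card k0 k1
    (fun _ => le_refl _) (fun _ _ _ _ _ _ _ _ _ _ => ⟨rfl, rfl⟩)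
    (fun G => ∀ u v, u ≠ v → (codeg G u v : ℝ) ≤ k2) f f hf0 hf0 ?_ ?_ hk hkm hineq)
  · intro G hG h
    refine ⟨⟨h.1, h.2.1, le_refl _, ?_⟩, h.2.2⟩
    rw [sdiff_eq_self_of_disjoint, mem_Om.1 hG]
    rw [disjoint_left]
    intro a ha hX
    exact h.2.1 a hX (by rwa [mem_nb] at ha)
  · intro G hG hT hB s hs
    have hsv : s ≠ v := fun h => hB.1 (h ▸ hs)
    have h1 := hcd G hG s v
    have h2 := hT s v hsv
    have h3 : ((nb G s \ nb G v).card : ℝ) ≤ ((nb G s \ nb G v) \ X).card + X.card := by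
      have h := card_le_card_sdiff_add_card (s := nb G s \ nb G v) (t := X)
      exact_mod_cast h
    have h4 : (((nb G s \ nb G v) \ X).card : ℝ) ≤ (((nb G s \ nb G v) \ X).erase v).card + 1 := by
      have := pred_card_le_card_erase (s := (nb G s \ nb G v) \ X) (a := v)
      have : ((nb G s \ nb G v) \ X).card ≤ (((nb G s \ nb G v) \ X).erase v).card + 1 := by omega
      exact_mod_cast this
    linarith
  · intro G hG hT w w' hww
    have h1 := hcd G hG w w'
    have h2 := hT w w' hww
    have h4 : ((nb G w \ nb G w').card : ℝ) ≤ (((nb G w \ nb G w').erase v).erase w').card + 2 := by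
      have a1 := pred_card_le_card_erase (s := (nb G w \ nb G w')) (a := v)
      have a2 := pred_card_le_card_erase (s := (nb G w \ nb G w').erase v) (a := w')
      have : (nb G w \ nb G w').card ≤ (((nb G w \ nb G w').erase v).erase w').card + 2 := by omega
      exact_mod_cast this
    linarith

end ISTProof

namespace ISTProof
open Finset
open scoped Classical
variable {n : ℕ}

lemma detII (G : SimpleGraph (Fin n)) (r : Fin n) {d t K q : ℕ} (j : Fin q) (η : ℝ)
    (hG : ∀ v, (nb G v).card = d) (hη1 : η ≤ 1)
    (hcod : ∀ u v, u ≠ v → ¬ G.Adj u v → η * d ≤ codeg G u v)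
    (hK : (K + 1 : ℝ) ≤ η * d / (4 * q))
    (hn : 3 ≤ n) (hlog : 3 * Real.log n ≤ η * d / (4 * q))
    (ht : (t : ℝ) + 3 * d / q ≤ d)
    (hb : ∀ v, ∀ S : Finset (Fin n), S.card = K → v ∉ S → (∀ u ∈ S, ¬ G.Adj v u) →
      ((nb G v).filter (fun w => ∀ u ∈ S, ¬ G.Adj w u)).card + 1 + t ≤ d) :
    HasISTs G r t := by
  have hq : (0 : ℝ) < q := by exact_mod_cast j.pos
  have hcard : ∀ p : Fin n × Fin n, ¬ G.Adj p.1 p.2 → η * d ≤ (nb G p.1 ∩ nb G p.2).card := by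
    rintro ⟨u, v⟩ h
    by_cases huv : u = v
    · subst huv
      simp only [inter_self, hG]
      have : (0 : ℝ) ≤ d := Nat.cast_nonneg _
      nlinarith
    · exact hcod u v huv h
  have hn' : (3 : ℝ) ≤ n := by exact_mod_cast hn
  obtain ⟨c, hc⟩ := col_exists j (univ.filter (fun p : Fin n × Fin n => ¬ G.Adj p.1 p.2))
    (fun p => nb G p.1 ∩ nb G p.2) (by
      have h1 : ∀ p ∈ (univ.filter (fun p : Fin n × Fin n => ¬ G.Adj p.1 p.2)),
          2 * Real.exp (-(((nb G p.1 ∩ nb G p.2).card : ℝ) / (4 * q))) ≤ 2 * (1 / (n : ℝ) ^ 3) := by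
        intro p hp
        simp only [mem_filter, mem_univ, true_and] at hp
        have := exp_small (n := n) (x := ((nb G p.1 ∩ nb G p.2).card : ℝ) / (4 * q)) (by omega) 3 (by
          push_cast
          refine le_trans hlog ?_
          have := hcard p hp
          gcongr)
        linarith
      refine (sum_le_sum h1).trans_lt ?_
      rw [sum_const, nsmul_eq_mul]
      have h3 : (((univ.filter (fun p : Fin n × Fin n => ¬ G.Adj p.1 p.2)).card : ℕ) : ℝ) ≤ n * n := by
        have : (univ.filter (fun p : Fin n × Fin n => ¬ G.Adj p.1 p.2)).card ≤ n * n := by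
          refine (card_le_univ _).trans ?_
          simp
        exact_mod_cast this
      calc _ ≤ (n * n : ℝ) * (2 * (1 / (n : ℝ) ^ 3)) := by gcongr
        _ = 2 / n := by field_simp
        _ < 1 := by rw [div_lt_one (by linarith)]; linarith)
  set B : Finset (Fin n) := univ.filter (fun x => c x = j) with hB
  have hcol : ∀ F : Finset (Fin n), colN c F j = (F ∩ B).card := by
    intro F
    unfold colN
    congr 1
    ext x; simp [hB]
  have hT0 : t ≤ (nb G r \ B).card := by
    have h1 := (hc (r, r) (by simp)).2
    simp only [inter_self, hcol, hG] at h1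
    have h2 := card_sdiff_add_card_inter (nb G r) B
    rw [hG] at h2
    have h2' : ((nb G r \ B).card : ℝ) + (nb G r ∩ B).card = d := by exact_mod_cast h2
    have : (t : ℝ) ≤ (nb G r \ B).card := by linarith
    exact_mod_cast this
  obtain ⟨T, hT, hTc⟩ := exists_subset_card_eq hT0
  refine hasISTs_singles G r K hG T (hT.trans sdiff_subset) hTc ?_ ?_
  · intro v hv u hu hvu hadj
    have h1 := (hc (v, u) (by simp [hadj])).1
    simp only [hcol] at h1
    have h2 := hcard (v, u) hadj
    simp only at h2
    have h3 : (K + 1 : ℝ) ≤ ((nb G v ∩ nb G u) ∩ B).card := by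
      refine hK.trans (le_trans ?_ h1)
      gcongr
    have h3' : K + 1 ≤ ((nb G v ∩ nb G u) ∩ B).card := by exact_mod_cast h3
    have h4 : (((nb G v ∩ nb G u) ∩ B).erase r).card ≤ ((nb G v ∩ nb G u) \ insert r T).card := by
      apply card_le_card
      intro x hx
      simp only [mem_erase, mem_inter, mem_sdiff, mem_insert, not_or] at hx ⊢
      refine ⟨hx.2.1, hx.1, fun hxT => ?_⟩
      have := hT hxT
      rw [mem_sdiff] at this
      exact this.2 hx.2.2
    have h5 := pred_card_le_card_erase (s := (nb G v ∩ nb G u) ∩ B) (a := r)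
    omega
  · intro v _ S _ hS hvS hadj
    exact hb v S hS hvS hadj

lemma codegII {d B : ℕ} {c ε1 l : ℝ} (hn : 3 ≤ n) (hdn : d < n) (hl : l = Real.log n) (hl1 : 1 ≤ l)
    (hε1 : 0 < ε1) (hε1' : ε1 ≤ 1) (hc : c = ε1 / 8)
    (hdε : (d : ℝ) ≤ (1 - ε1) * n) (g2 : (2 * B + 10) * l ≤ c * d) :
    cnt n d (fun G => ¬ ∀ u v, u ≠ v → (codeg G u v : ℝ) ≤ d - c * d)
      ≤ (Om n d).card / (n : ℝ) ^ B := by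
  have hc0 : 0 < c := by rw [hc]; positivity
  have hc1 : c ≤ 1 / 8 := by rw [hc]; linarith
  have hdn' : (d : ℝ) ≤ n := by exact_mod_cast hdn.le
  have hd0 : (0 : ℝ) ≤ d := Nat.cast_nonneg _
  have hB0 : (0 : ℝ) ≤ B := Nat.cast_nonneg _
  obtain ⟨a, ha⟩ : ∃ a : ℕ, a = ⌈d - 2 * c * d⌉₊ := ⟨_, rfl⟩
  obtain ⟨L, hL⟩ : ∃ L : ℕ, L = ⌊c * d⌋₊ := ⟨_, rfl⟩
  have hx0 : (0 : ℝ) ≤ d - 2 * c * d := by nlinarith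
  have a1 : (d : ℝ) - 2 * c * d ≤ a := by rw [ha]; exact Nat.le_ceil _
  have a2 : (a : ℝ) < d - 2 * c * d + 1 := by rw [ha]; exact Nat.ceil_lt_add_one hx0
  have L1 : (L : ℝ) ≤ c * d := by rw [hL]; exact Nat.floor_le (by positivity)
  have L2 : c * d < L + 1 := by rw [hL]; exact Nat.lt_floor_add_one _
  have h10 : 10 ≤ c * d := by nlinarith
  refine (cnt_mono ?_).trans (codeg_all a L B (by omega) hdn ?_ ?_)
  · intro G _ hG h
    apply hG
    intro u v huv
    have h1 := h u v huv
    have h2 : (codeg G u v : ℝ) + 1 ≤ a + L := by exact_mod_cast h1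
    linarith
  · intro k hk hkd
    have hk' : (a : ℝ) ≤ k := by exact_mod_cast hk
    have hkd' : (k : ℝ) ≤ d := by exact_mod_cast hkd.le
    have b1 : (d : ℝ) - k ≤ 2 * c * d := by linarith
    have b2 : (d : ℝ) / 2 ≤ k + 1 := by nlinarith
    have b3 : ε1 * n / 4 ≤ (n : ℝ) - 2 * d + k - 1 := by
      have e1 : c * d ≤ ε1 / 8 * n := by rw [hc]; gcongr
      linarith
    calc 2 * ((d : ℝ) - k) ^ 2 ≤ 2 * (2 * c * d) ^ 2 := by
          have : (0 : ℝ) ≤ d - k := by linarith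
          gcongr
      _ = ε1 * d * (ε1 * d) / 8 := by rw [hc]; ring
      _ ≤ ε1 * d * n / 8 := by
          have e1 : ε1 * d ≤ n := by nlinarith
          gcongr
      _ = (d / 2) * (ε1 * n / 4) := by ring
      _ ≤ _ := by
          apply mul_le_mul b2 b3 (by positivity) (by positivity)
  · rw [← hl]
    push_cast
    linarith

lemma swII {d B K : ℕ} {c f : ℝ} (hn : 3 ≤ n) (hd0 : 0 < d) (k0 k1 : ℕ)
    (hco : cnt n d (fun G => ¬ ∀ u v, u ≠ v → (codeg G u v : ℝ) ≤ d - c * d)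
      ≤ (Om n d).card / (n : ℝ) ^ B)
    (hf : f = c * d / 2) (hf0 : 0 ≤ f) (hfK : K + 2 ≤ f) (hk : k0 ≤ k1) (hkm : k1 ≤ d)
    (hineq : 2 * ((k1 : ℝ) * (n * d)) ≤ (d - k1) * K * (f * f))
    (hL : 2 * B * Real.log n ≤ (k1 - k0 : ℕ)) (v : Fin n) (S : Finset (Fin n)) (hS : S.card = K) :
    cnt n d (fun G => v ∉ S ∧ (∀ s ∈ S, ¬ G.Adj v s) ∧ (Ys G v S S).card ≤ k0)
      ≤ 3 * ((Om n d).card / (n : ℝ) ^ B) := by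
  refine (sw_const hd0 v S k0 k1 f (d - c * d) hf0 ?_ hk hkm ?_).trans ?_
  · rw [hS]; linarith
  · rw [hS]; exact hineq
  · have hp := two_pow_small (n := n) (L := k1 - k0) (by omega) B hL
    have : ((Om n d).card : ℝ) / 2 ^ (k1 - k0) ≤ (Om n d).card / (n : ℝ) ^ B := by
      rw [div_eq_mul_one_div, div_eq_mul_one_div _ ((n : ℝ) ^ B)]
      gcongr
    linarith

set_option maxHeartbeats 1600000 in
lemma coreII {d B K q : ℕ} {c ε1 ε δ1 h η l : ℝ} (hn : 3 ≤ n) (hdn : d < n) (hl : l = Real.log n)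
    (hl1 : 1 ≤ l) (hB : B = K + 2)
    (hε : 0 < ε) (hε' : ε < 1) (hδ : 0 < δ1) (hδ' : δ1 ≤ 1)
    (hε1 : 0 < ε1) (hε1' : ε1 ≤ 1) (hc : c = ε1 / 8)
    (hh : h = c ^ 2 * δ1 / 32) (hη : η = h / 4) (hq : 0 < q) (hq1 : 3 ≤ ε * q)
    (hK : 128 ≤ K * (ε * δ1 * c ^ 2)) (hK1 : 1 ≤ K)
    (hδd : δ1 * n ≤ d)
    (hdε : (d : ℝ) ≤ (1 - ε1) * n) (g2 : (2 * B + 10) * l ≤ c * d) (g3 : B * 2 * l ≤ η * d / (4 * q))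
    (g4 : B * 64 * l ≤ ε * d) (g5 : B * 16 * l ≤ h * d) :
    cnt n d (fun G => ¬ ∀ r, HasISTs G r ⌊(1 - ε) * (d : ℝ)⌋₊) ≤ 10 / n * (Om n d).card := by
  have hc0 : 0 < c := by rw [hc]; positivity
  have hc1 : c ≤ 1 / 8 := by rw [hc]; linarith
  have hh0 : 0 < h := by rw [hh]; positivity
  have hdn' : (d : ℝ) ≤ n := by exact_mod_cast hdn.le
  have hn' : (3 : ℝ) ≤ n := by exact_mod_cast hn
  have hBK : (B : ℝ) = K + 2 := by rw [hB]; push_cast; ring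
  have hK1' : (1 : ℝ) ≤ K := by exact_mod_cast hK1
  have hcd0 : 0 < c * d := by nlinarith
  have hdp : (0 : ℝ) < d := pos_of_mul_pos_right hcd0 hc0.le
  have hd0 : 0 < d := by exact_mod_cast hdp
  have hc2 : c ^ 2 ≤ 1 := by nlinarith
  have hh1 : h ≤ 1 / 32 := by rw [hh]; nlinarith [mul_le_one₀ hc2 hδ.le hδ']
  have hBl : (B : ℝ) ≤ B * l := by nlinarith
  have hco := codegII hn hdn hl hl1 hε1 hε1' hc hdε g2
  obtain ⟨f, hf⟩ : ∃ f : ℝ, f = c * d / 2 := ⟨_, rfl⟩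
  have hfK : (K : ℝ) + 2 ≤ f := by rw [hf]; nlinarith
  obtain ⟨k1, hk1⟩ : ∃ k : ℕ, k = ⌊h * d⌋₊ := ⟨_, rfl⟩
  have k1a : (k1 : ℝ) ≤ h * d := by rw [hk1]; exact Nat.floor_le (by positivity)
  have k1b : h * d < k1 + 1 := by rw [hk1]; exact Nat.lt_floor_add_one _
  have hh32 : h * d ≤ 1 / 32 * d := by gcongr
  have hk1d : k1 ≤ d := by
    have : (k1 : ℝ) ≤ d := by linarith
    exact_mod_cast this
  have hA : ∀ v u : Fin n, cnt n d (fun G => v ∉ ({u} : Finset (Fin n)) ∧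
      (∀ s ∈ ({u} : Finset (Fin n)), ¬ G.Adj v s) ∧ (Ys G v {u} {u}).card ≤ k1 / 2)
      ≤ 3 * ((Om n d).card / (n : ℝ) ^ B) := by
    intro v u
    refine swII (K := 1) hn hd0 (k1 / 2) k1 hco hf (by linarith) (by push_cast; linarith) (by omega)
      hk1d ?_ ?_ v {u} (by simp)
    · rw [hf]
      have e1 : (d : ℝ) / 2 ≤ d - k1 := by linarith
      have e2 : (k1 : ℝ) * n ≤ c ^ 2 / 32 * d * d := by
        calc (k1 : ℝ) * n ≤ h * d * n := by gcongr
          _ = c ^ 2 / 32 * d * (δ1 * n) := by rw [hh]; ring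
          _ ≤ _ := by gcongr
      have p3 : 0 ≤ c ^ 2 * (d : ℝ) ^ 3 := by positivity
      calc 2 * ((k1 : ℝ) * (n * d)) = 2 * (k1 * n) * d := by ring
        _ ≤ 2 * (c ^ 2 / 32 * d * d) * d := by gcongr
        _ ≤ (d / 2) * (1 : ℕ) * (c * d / 2 * (c * d / 2)) := by push_cast; linarith
        _ ≤ _ := by gcongr
    · have : k1 ≤ 2 * (k1 - k1 / 2) := by omega
      have : (k1 : ℝ) ≤ 2 * ((k1 - k1 / 2 : ℕ) : ℝ) := by exact_mod_cast this
      rw [← hl]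
      linarith
  obtain ⟨e, he⟩ : ∃ e : ℕ, e = ⌊ε * d / 8⌋₊ := ⟨_, rfl⟩
  have e1 : (e : ℝ) ≤ ε * d / 8 := by rw [he]; exact Nat.floor_le (by positivity)
  have e2 : ε * d / 8 < e + 1 := by rw [he]; exact Nat.lt_floor_add_one _
  have he16 : ε * d / 16 ≤ e := by linarith
  have hed : 4 * e ≤ d := by
    have : 4 * (e : ℝ) ≤ d := by nlinarith
    exact_mod_cast this
  have hBb : ∀ v : Fin n, ∀ S : Finset (Fin n), S.card = K → cnt n d (fun G => v ∉ S ∧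
      (∀ s ∈ S, ¬ G.Adj v s) ∧ (Ys G v S S).card ≤ d - 2 * e)
      ≤ 3 * ((Om n d).card / (n : ℝ) ^ B) := by
    refine swII hn hd0 (d - 2 * e) (d - e) hco hf (by linarith) hfK (by omega) (by omega) ?_ ?_
    · rw [Nat.cast_sub (by omega), hf]
      have e4 : ε * δ1 * n / 16 ≤ e := by
        refine le_trans ?_ he16
        rw [mul_assoc]; gcongr
      have e5 : 8 * (n : ℝ) ≤ e * K * c ^ 2 := by
        calc 8 * (n : ℝ) = 128 * n / 16 := by ring
          _ ≤ K * (ε * δ1 * c ^ 2) * n / 16 := by gcongr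
          _ = (ε * δ1 * n / 16) * K * c ^ 2 := by ring
          _ ≤ _ := by gcongr
      have e6 : (0 : ℝ) ≤ e := Nat.cast_nonneg _
      calc 2 * (((d : ℝ) - e) * (n * d)) ≤ 2 * (d * (n * d)) := by gcongr; linarith
        _ = 8 * n * (d ^ 2 / 4) := by ring
        _ ≤ e * K * c ^ 2 * (d ^ 2 / 4) := by gcongr
        _ = _ := by ring
    · have : (d - e) - (d - 2 * e) = e := by omega
      rw [this, ← hl]
      linarith
  -- union
  have hbad : cnt n d (fun G => ¬ ∀ r, HasISTs G r ⌊(1 - ε) * (d : ℝ)⌋₊) ≤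
      cnt n d (fun G => (∃ p ∈ (univ : Finset (Fin n × Fin n)),
        (p.1 ∉ ({p.2} : Finset (Fin n)) ∧
      (∀ s ∈ ({p.2} : Finset (Fin n)), ¬ G.Adj p.1 s) ∧ (Ys G p.1 {p.2} {p.2}).card ≤ k1 / 2)) ∨
      (∃ p ∈ (univ : Finset (Fin n)) ×ˢ (univ : Finset (Fin n)).powersetCard K,
        (p.1 ∉ p.2 ∧ (∀ s ∈ p.2, ¬ G.Adj p.1 s) ∧ (Ys G p.1 p.2 p.2).card ≤ d - 2 * e))) := by
    apply cnt_mono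
    intro G hG hno
    by_contra hcon
    push Not at hcon
    obtain ⟨c1, c2⟩ := hcon
    apply hno
    intro r
    have hG' := mem_Om.1 hG
    have htd : ((⌊(1 - ε) * (d : ℝ)⌋₊ : ℕ) : ℝ) ≤ (1 - ε) * d :=
      Nat.floor_le (by apply mul_nonneg <;> linarith)
    refine detII (d := d) (K := K) (q := q) G r ⟨0, hq⟩ η hG' (by linarith) ?_ ?_ hn ?_ ?_ ?_
    · intro u v huv hadj
      have h1 := c1 (u, v) (mem_univ _) (by simpa using huv) (by simpa using hadj)
      simp only at h1
      have h2 : (Ys G u {v} {v}).card ≤ codeg G u v := by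
        unfold codeg
        apply card_le_card
        intro x hx
        rw [mem_Ys] at hx
        simp only [mem_singleton, exists_eq_left] at hx
        rw [mem_inter, mem_nb, mem_nb]
        exact ⟨hx.1.1, hx.2.symm⟩
      have h3 : k1 ≤ 2 * codeg G u v := by omega
      have h3' : (k1 : ℝ) ≤ 2 * codeg G u v := by exact_mod_cast h3
      rw [hη]
      linarith
    · linarith
    · rw [← hl]
      nlinarith
    · have hq' : (0 : ℝ) < q := by exact_mod_cast hq
      have : 3 * (d : ℝ) / q ≤ ε * d := by
        rw [div_le_iff₀ hq']
        nlinarith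
      linarith
    · intro v S hS hvS hadj
      have h1 := c2 (v, S) (by simp [mem_powersetCard, hS]) hvS hadj
      simp only at h1
      have h2 : ((nb G v).filter (fun w => ∀ u ∈ S, ¬ G.Adj w u)).card + (Ys G v S S).card = d := by
        rw [← hG' v]
        have : Ys G v S S = (nb G v).filter (fun w => ¬ ∀ u ∈ S, ¬ G.Adj w u) := by
          ext x
          rw [mem_Ys, mem_filter, mem_nb]
          push Not
          constructor
          · rintro ⟨⟨h1, _⟩, h2⟩; exact ⟨h1, h2⟩
          · rintro ⟨h1, h2⟩; exact ⟨⟨h1, fun hx => hadj x hx h1⟩, h2⟩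
        rw [this]
        exact card_filter_add_card_filter_not _
      have h3 : ((nb G v).filter (fun w => ∀ u ∈ S, ¬ G.Adj w u)).card ≤ 2 * e := by omega
      have h3' : (((nb G v).filter (fun w => ∀ u ∈ S, ¬ G.Adj w u)).card : ℝ) ≤ 2 * e := by
        exact_mod_cast h3
      have : (((nb G v).filter (fun w => ∀ u ∈ S, ¬ G.Adj w u)).card : ℝ) + 1 +
        ((⌊(1 - ε) * (d : ℝ)⌋₊ : ℕ) : ℝ) ≤ d := by linarith
      exact_mod_cast this
  refine hbad.trans (cnt_or.trans ?_)
  have u1 := (cnt_exists (n := n) (d := d) (univ : Finset (Fin n × Fin n)) (fun p G =>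
        (p.1 ∉ ({p.2} : Finset (Fin n)) ∧
      (∀ s ∈ ({p.2} : Finset (Fin n)), ¬ G.Adj p.1 s) ∧ (Ys G p.1 {p.2} {p.2}).card ≤ k1 / 2))).trans
      (sum_le_sum (fun p _ => hA p.1 p.2))
  have u2 := (cnt_exists (n := n) (d := d) ((univ : Finset (Fin n)) ×ˢ (univ : Finset (Fin n)).powersetCard K)
      (fun p G =>
        (p.1 ∉ p.2 ∧ (∀ s ∈ p.2, ¬ G.Adj p.1 s) ∧ (Ys G p.1 p.2 p.2).card ≤ d - 2 * e))).trans
      (sum_le_sum (fun p hp => hBb p.1 p.2 (by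
        rw [mem_product, mem_powersetCard] at hp; exact hp.2.2)))
  rw [sum_const, nsmul_eq_mul] at u1 u2
  have hcn : ((Nat.choose n K : ℕ) : ℝ) ≤ (n : ℝ) ^ K := by exact_mod_cast Nat.choose_le_pow n K
  simp only [card_univ, Fintype.card_prod, Fintype.card_fin, card_product, card_powersetCard] at u1 u2
  push_cast at u1 u2
  have hn1 : (1 : ℝ) ≤ n := by linarith
  have hpos : (0 : ℝ) ≤ (Om n d).card := Nat.cast_nonneg _
  have v1 : (n * n : ℝ) * (3 * ((Om n d).card / (n : ℝ) ^ B)) ≤ 3 / n * (Om n d).card := by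
    have : (n : ℝ) ^ 3 ≤ (n : ℝ) ^ B := pow_le_pow_right₀ hn1 (by omega)
    calc (n * n : ℝ) * (3 * ((Om n d).card / (n : ℝ) ^ B))
        ≤ (n * n : ℝ) * (3 * ((Om n d).card / (n : ℝ) ^ 3)) := by gcongr
      _ = _ := by field_simp
  have v2 : (n * (Nat.choose n K) : ℝ) * (3 * ((Om n d).card / (n : ℝ) ^ B)) ≤ 3 / n * (Om n d).card := by
    calc (n * (Nat.choose n K) : ℝ) * (3 * ((Om n d).card / (n : ℝ) ^ B))
        ≤ (n * (n : ℝ) ^ K) * (3 * ((Om n d).card / (n : ℝ) ^ B)) := by gcongr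
      _ = _ := by rw [hB, pow_add]; field_simp
  have v3 : 10 / (n : ℝ) * (Om n d).card = 3 / n * (Om n d).card + 3 / n * (Om n d).card +
    4 / n * (Om n d).card := by ring
  have v4 : 0 ≤ 4 / (n : ℝ) * (Om n d).card := by positivity
  linarith

lemma getC {x l d C y : ℝ} (hy : 0 < y) (hl : 0 ≤ l) (hx : x / y ≤ C) (h : C * l ≤ d) :
    x * l ≤ y * d := by
  have h1 : x / y * l ≤ d := le_trans (by gcongr) h
  calc x * l = y * (x / y * l) := by field_simp
    _ ≤ y * d := by gcongr

lemma log_ge_one (hn : 3 ≤ n) : 1 ≤ Real.log n := by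
  have hn' : (3 : ℝ) ≤ n := by exact_mod_cast hn
  rw [Real.le_log_iff_exp_le (by linarith)]
  linarith [Real.exp_one_lt_d9]

theorem regimeII (ε δ1 ε1 : ℝ) (hε : 0 < ε) (hε' : ε < 1) (hδ : 0 < δ1) (hδ' : δ1 ≤ 1)
    (hε1 : 0 < ε1) (hε1' : ε1 ≤ 1) :
    ∃ C : ℝ, 0 < C ∧ ∀ n d : ℕ, 3 ≤ n → d < n → C * Real.log n ≤ d → δ1 * n ≤ d →
      (d : ℝ) ≤ (1 - ε1) * n →
      cnt n d (fun G => ¬ ∀ r, HasISTs G r ⌊(1 - ε) * (d : ℝ)⌋₊) ≤ 10 / n * (Om n d).card := by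
  obtain ⟨c, hc⟩ : ∃ c, c = ε1 / 8 := ⟨_, rfl⟩
  have hc0 : 0 < c := by rw [hc]; positivity
  obtain ⟨q, hq⟩ := exists_nat_gt (3 / ε)
  have hq0 : (0 : ℝ) < q := lt_trans (by positivity) hq
  have hqn : 0 < q := by exact_mod_cast hq0
  obtain ⟨K, hK⟩ := exists_nat_gt (128 / (ε * δ1 * c ^ 2))
  have hK0 : (0 : ℝ) < K := lt_trans (by positivity) hK
  have hKn : 1 ≤ K := by exact_mod_cast hK0
  obtain ⟨h, hh⟩ : ∃ h, h = c ^ 2 * δ1 / 32 := ⟨_, rfl⟩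
  have hh0 : 0 < h := by rw [hh]; positivity
  obtain ⟨η, hη⟩ : ∃ η, η = h / 4 := ⟨_, rfl⟩
  have hη0 : 0 < η := by rw [hη]; positivity
  obtain ⟨B, hB⟩ : ∃ B, B = K + 2 := ⟨_, rfl⟩
  have p2 : 0 ≤ (2 * B + 10) / c := by positivity
  have p3 : 0 ≤ (B * 2 * (4 * q)) / η := by positivity
  have p4 : 0 ≤ B * 64 / ε := by positivity
  have p5 : 0 ≤ B * 16 / h := by positivity
  refine ⟨1 + (2 * B + 10) / c + (B * 2 * (4 * q)) / η + B * 64 / ε + B * 16 / h, by positivity, ?_⟩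
  intro n d hn hdn hlog hδd hdε
  have hl1 := log_ge_one hn
  have hl0 : 0 ≤ Real.log n := by linarith
  refine coreII hn hdn rfl hl1 hB hε hε' hδ hδ' hε1 hε1' hc hh hη hqn ?_ ?_ hKn hδd hdε
    (getC hc0 hl0 (by linarith) hlog) ?_ (getC hε hl0 (by linarith) hlog)
    (getC hh0 hl0 (by linarith) hlog)
  · rw [div_lt_iff₀ hε] at hq; linarith
  · rw [div_lt_iff₀ (by positivity)] at hK; linarith
  · have := getC hη0 hl0 (x := B * 2 * (4 * q)) (by linarith) hlog
    rw [le_div_iff₀ (by positivity)]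
    linarith

end ISTProof

namespace ISTProof
open Finset
open scoped Classical
variable {n : ℕ}

lemma JP_all {d m : ℕ} (hd0 : 0 < d) (hn : 0 < n) (h48 : 48 * (d : ℝ) ≤ m)
    (h32 : 32 * (n : ℝ) * n ≤ (m : ℝ) ^ 2 * d) :
    cnt n d (fun G => ¬ JP G m) ≤ 1 / n * (Om n d).card := by
  have hn' : (0 : ℝ) < n := by exact_mod_cast hn
  have h1 : cnt n d (fun G => ¬ JP G m) ≤ cnt n d (fun G => ∃ p ∈
      (univ.filter (fun p : Finset (Fin n) × Finset (Fin n) => Disjoint p.1 p.2 ∧ m ≤ p.1.card ∧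
        m ≤ p.2.card)), ∀ a ∈ p.1, ∀ b ∈ p.2, ¬ G.Adj a b) := by
    apply cnt_mono
    intro G _ h
    unfold JP at h
    push Not at h
    obtain ⟨A, B, hAB, hA, hB, h⟩ := h
    exact ⟨(A, B), by simp [hAB, hA, hB], h⟩
  refine h1.trans ((cnt_exists _ _).trans ?_)
  have h2 : ∀ p ∈ (univ.filter (fun p : Finset (Fin n) × Finset (Fin n) => Disjoint p.1 p.2 ∧
      m ≤ p.1.card ∧ m ≤ p.2.card)), cnt n d (fun G => ∀ a ∈ p.1, ∀ b ∈ p.2, ¬ G.Adj a b) ≤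
      (Om n d).card / 2 ^ (4 * n) := by
    intro p hp
    simp only [mem_filter, mem_univ, true_and] at hp
    refine joint_bound hd0 hp.1 m (by exact_mod_cast hp.2.1) (by exact_mod_cast hp.2.2) h48 _ ?_
    push_cast
    linarith
  refine (sum_le_sum h2).trans ?_
  rw [sum_const, nsmul_eq_mul]
  have h3 : (((univ.filter (fun p : Finset (Fin n) × Finset (Fin n) => Disjoint p.1 p.2 ∧
      m ≤ p.1.card ∧ m ≤ p.2.card)).card : ℕ) : ℝ) ≤ 2 ^ n * 2 ^ n := by
    have : (univ.filter (fun p : Finset (Fin n) × Finset (Fin n) => Disjoint p.1 p.2 ∧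
      m ≤ p.1.card ∧ m ≤ p.2.card)).card ≤ 2 ^ n * 2 ^ n := by
      refine (card_le_univ _).trans ?_
      simp
    exact_mod_cast this
  have h4 : (n : ℝ) ≤ 2 ^ n * 2 ^ n := by
    have h5 : (n : ℝ) ≤ 2 ^ n := by exact_mod_cast Nat.lt_two_pow_self.le
    have h6 : (1 : ℝ) ≤ 2 ^ n := one_le_pow₀ (by norm_num)
    nlinarith
  calc _ ≤ (2 ^ n * 2 ^ n : ℝ) * ((Om n d).card / 2 ^ (4 * n)) := by gcongr
    _ = 1 / (2 ^ n * 2 ^ n) * (Om n d).card := by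
      rw [show 4 * n = n + n + (n + n) by ring, pow_add, pow_add]
      field_simp
    _ ≤ _ := by gcongr

lemma DP_all {d m g : ℕ} (hd0 : 0 < d) (hn : 3 ≤ n) (h16 : 16 * m ≤ n) (h8 : 8 * d ≤ n)
    (hg : 8 * m * d ≤ g * n) (hgl : 96 * Real.log n ≤ g) :
    cnt n d (fun G => ¬ DP G m g) ≤ 1 / n * (Om n d).card := by
  have hn' : (3 : ℝ) ≤ n := by exact_mod_cast hn
  have hl := log_ge_one hn
  have hg8 : (96 : ℝ) ≤ g := by linarith
  have hg8' : 96 ≤ g := by exact_mod_cast hg8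
  obtain ⟨I, hI⟩ : ∃ I, I = (univ.filter (fun p : Finset (Fin n) × Finset (Fin n) =>
    (0 < p.1.card ∧ p.1.card ≤ m) ∧ 0 < p.2.card ∧ p.2.card ≤ p.1.card)) := ⟨_, rfl⟩
  have h1 : cnt n d (fun G => ¬ DP G m g) ≤ cnt n d (fun G => ∃ p ∈ I,
      g * p.1.card ≤ (eP G p.1 p.2).card) := by
    apply cnt_mono
    intro G _ h
    unfold DP at h
    push Not at h
    obtain ⟨Y, Z, hY0, hYm, hZY, h⟩ := h
    refine ⟨(Y, Z), ?_, h⟩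
    have hZ : 0 < Z.card := by
      by_contra h0
      have : Z = ∅ := card_eq_zero.1 (by omega)
      subst this
      have e0 : (eP G Y ∅).card = 0 := by
        rw [card_eq_zero, eq_empty_iff_forall_notMem]
        intro x hx
        rw [mem_eP] at hx
        simp at hx
      rw [e0] at h
      have : 0 < g * Y.card := by positivity
      omega
    rw [hI]
    simp [hYm, hZY]
    exact ⟨card_pos.1 hY0, card_pos.1 hZ⟩
  refine h1.trans ((cnt_exists _ _).trans ?_)
  obtain ⟨a, ha⟩ : ∃ a : ℝ, a = 1 / (n : ℝ) ^ 3 := ⟨_, rfl⟩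
  have ha0 : 0 ≤ a := by rw [ha]; positivity
  have h2 : ∀ p ∈ I, cnt n d (fun G => g * p.1.card ≤ (eP G p.1 p.2).card) ≤
      (Om n d).card * (a ^ p.1.card * a ^ p.2.card) := by
    rintro ⟨Y, Z⟩ hp
    rw [hI] at hp
    simp only [mem_filter, mem_univ, true_and] at hp
    obtain ⟨⟨hY0, hYm⟩, hZ0, hZY⟩ := hp
    refine (dens_bound hd0 (by omega) h8 (g * Y.card) (g * Y.card / 4) (by omega) hZ0 hY0 ?_).trans ?_
    · have e1 : ((g * Y.card / 4 : ℕ) : ℝ) ≤ g * Y.card / 4 := by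
        have := Nat.cast_div_le (α := ℝ) (m := g * Y.card) (n := 4)
        push_cast at this; exact this
      have hZm : (Z.card : ℝ) ≤ m := by exact_mod_cast hZY.trans hYm
      have hg' : 8 * (m : ℝ) * d ≤ g * n := by exact_mod_cast hg
      have hYp : (0 : ℝ) ≤ Y.card := Nat.cast_nonneg _
      calc 4 * (Y.card * Z.card * d : ℝ) ≤ 4 * (Y.card * m * d) := by gcongr
        _ = Y.card / 2 * (8 * m * d) := by ring
        _ ≤ Y.card / 2 * (g * n) := by gcongr
        _ = (g * Y.card / 2) * n := by ring
        _ ≤ _ := by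
          gcongr
          push_cast
          linarith
    · have e1 : g * Y.card ≤ 8 * (g * Y.card / 4) := by
        have : 96 ≤ g * Y.card := by nlinarith
        omega
      have e1' : (g : ℝ) * Y.card ≤ 8 * ((g * Y.card / 4 : ℕ) : ℝ) := by exact_mod_cast e1
      have e2 : (96 * Real.log n) * (Y.card : ℝ) ≤ g * Y.card := by gcongr
      have hp := two_pow_small (n := n) (L := g * Y.card / 4) (by omega) (6 * Y.card) (by
        push_cast at e1' ⊢
        linarith)
      rw [div_eq_mul_one_div]
      gcongr
      refine hp.trans ?_
      have ha1 : a ≤ 1 := by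
        rw [ha, div_le_one (by positivity)]
        exact one_le_pow₀ (by linarith)
      calc 1 / (n : ℝ) ^ (6 * Y.card) = a ^ Y.card * a ^ Y.card := by
            rw [ha, ← pow_add, div_pow, one_pow, ← pow_mul]
            congr 2; ring
        _ ≤ a ^ Y.card * a ^ Z.card := by
            gcongr a ^ Y.card * ?_
            exact pow_le_pow_of_le_one ha0 ha1 hZY
  refine (sum_le_sum h2).trans ?_
  rw [← mul_sum]
  have h3 : ∑ p ∈ I, a ^ p.1.card * a ^ p.2.card ≤
      (∑ Y ∈ univ.filter (fun Y : Finset (Fin n) => 0 < Y.card), a ^ Y.card) *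
      (∑ Y ∈ univ.filter (fun Y : Finset (Fin n) => 0 < Y.card), a ^ Y.card) := by
    rw [sum_mul_sum, ← sum_product']
    apply sum_le_sum_of_subset_of_nonneg
    · intro p hp
      rw [hI] at hp
      simp only [mem_filter, mem_univ, true_and, mem_product] at hp ⊢
      exact ⟨hp.1.1, hp.2.1⟩
    · intro p _ _
      positivity
  have h4 : ∑ Y ∈ univ.filter (fun Y : Finset (Fin n) => 0 < Y.card), a ^ Y.card = (a + 1) ^ n - 1 := by
    have e := Fintype.sum_pow_mul_eq_add_pow (Fin n) a 1
    simp only [one_pow, mul_one, Fintype.card_fin] at e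
    rw [← e, ← sum_filter_add_sum_filter_not univ (fun Y : Finset (Fin n) => 0 < Y.card)]
    have : (univ.filter (fun Y : Finset (Fin n) => ¬ 0 < Y.card)) = {∅} := by
      ext Y; simp
    rw [this]; simp
  have h5 : (a + 1) ^ n - 1 ≤ 2 / (n : ℝ) ^ 2 := by
    have e1 : (a + 1) ^ n ≤ Real.exp (n * a) := by
      rw [Real.exp_nat_mul]
      gcongr
      exact Real.add_one_le_exp a
    have e2 : n * a = 1 / (n : ℝ) ^ 2 := by rw [ha]; field_simp
    have e3 : (n : ℝ) * a ≤ 1 := by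
      rw [e2, div_le_one (by positivity)]
      exact one_le_pow₀ (by linarith)
    have e4 := Real.abs_exp_sub_one_le (x := n * a) (by rw [abs_of_nonneg (by positivity)]; exact e3)
    have e5 := (le_abs_self _).trans e4
    rw [abs_of_nonneg (by positivity)] at e5
    have e6 : 2 / (n : ℝ) ^ 2 = 2 * (n * a) := by rw [e2]; ring
    linarith
  have h50 : 0 ≤ (a + 1) ^ n - 1 := by
    have : (1 : ℝ) ≤ (a + 1) ^ n := one_le_pow₀ (by linarith)
    linarith
  rw [h4] at h3
  have h6 : ((a + 1) ^ n - 1) * ((a + 1) ^ n - 1) ≤ 1 / n := by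
    calc _ ≤ 2 / (n : ℝ) ^ 2 * (2 / (n : ℝ) ^ 2) := by gcongr
      _ ≤ 1 / n := by
        rw [div_mul_div_comm, div_le_div_iff₀ (by positivity) (by positivity)]
        have : (3 : ℝ) ^ 3 ≤ (n : ℝ) ^ 3 := by gcongr
        nlinarith
  rw [mul_comm]
  gcongr
  exact h3.trans h6

end ISTProof

namespace ISTProof
open Finset
open scoped Classical
variable {n : ℕ}

/-- the explored set -/
noncomputable def QQ (P : Finset (Fin n)) (r : Fin n) (G : SimpleGraph (Fin n)) : Finset (Fin n) :=
  insert r (P ∪ nb G r)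

/-- a system of cores -/
def Struct (r : Fin n) (d s : ℕ) (Q : Finset (Fin n)) (H : SimpleGraph (Fin n))
    (D : Fin d → Finset (Fin n)) : Prop :=
  (∀ i j, i ≠ j → Disjoint (D i) (D j)) ∧ (∀ i, r ∉ D i) ∧ (∀ i, ConnTo H r (D i)) ∧
    (∀ i, s ≤ (D i).card) ∧ (∀ i, D i ⊆ Q)

/-- chosen cores -/
noncomputable def Dch (r : Fin n) (d s : ℕ) (Q : Finset (Fin n)) (H : SimpleGraph (Fin n)) :
    Fin d → Finset (Fin n) :=
  if h : ∃ D, Struct r d s Q H D then h.choose else fun _ => ∅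

/-- chosen cores of a graph -/
noncomputable def DD (P : Finset (Fin n)) (r : Fin n) (d s : ℕ) (G : SimpleGraph (Fin n)) :
    Fin d → Finset (Fin n) :=
  Dch r d s (QQ P r G) (restr G (QQ P r G))

lemma DD_struct {P : Finset (Fin n)} {r : Fin n} {d s : ℕ} {G : SimpleGraph (Fin n)}
    (h : ∃ D, Struct r d s (QQ P r G) (restr G (QQ P r G)) D) :
    Struct r d s (QQ P r G) (restr G (QQ P r G)) (DD P r d s G) := by
  unfold DD Dch
  rw [dif_pos h]
  exact h.choose_spec

lemma DD_sub (P : Finset (Fin n)) (r : Fin n) (d s : ℕ) (G : SimpleGraph (Fin n)) (i : Fin d) :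
    DD P r d s G i ⊆ QQ P r G ∧ r ∉ DD P r d s G i := by
  by_cases h : ∃ D, Struct r d s (QQ P r G) (restr G (QQ P r G)) D
  · exact ⟨(DD_struct h).2.2.2.2 i, (DD_struct h).2.1 i⟩
  · unfold DD Dch
    rw [dif_neg h]
    simp

lemma QQ_inv {P : Finset (Fin n)} {r : Fin n} {G : SimpleGraph (Fin n)} {w w' s z : Fin n}
    (hV : Valid G w w' s z) (hw : w ∉ QQ P r G) (hw' : w' ∉ QQ P r G) (hs : s ≠ r) :
    QQ P r (sw G w w' s z) = QQ P r G ∧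
      restr (sw G w w' s z) (QQ P r G) = restr G (QQ P r G) := by
  have hr : r ∈ QQ P r G := by simp [QQ]
  have h1 : r ≠ w := fun h => hw (h ▸ hr)
  have h2 : r ≠ w' := fun h => hw' (h ▸ hr)
  have h4 : r ≠ z := by
    rintro rfl
    apply hw
    simp only [QQ, mem_insert, mem_union, mem_nb]
    exact Or.inr (Or.inr hV.zw.symm)
  constructor
  · unfold QQ
    rw [sw_nb_other h1 h2 hs.symm h4]
  · ext a b
    simp only [restr]
    constructor
    · rintro ⟨h, ha, hb⟩
      refine ⟨(sw_adj_same ?_).1 h, ha, hb⟩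
      rintro (⟨rfl | rfl, _⟩ | ⟨rfl | rfl, _⟩) <;> contradiction
    · rintro ⟨h, ha, hb⟩
      refine ⟨(sw_adj_same ?_).2 h, ha, hb⟩
      rintro (⟨rfl | rfl, _⟩ | ⟨rfl | rfl, _⟩) <;> contradiction

lemma DD_inv {P : Finset (Fin n)} {r : Fin n} {d s' : ℕ} {G : SimpleGraph (Fin n)} {w w' s z : Fin n}
    (hV : Valid G w w' s z) (hw : w ∉ QQ P r G) (hw' : w' ∉ QQ P r G) (hs : s ≠ r) :
    DD P r d s' (sw G w w' s z) = DD P r d s' G := by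
  obtain ⟨h1, h2⟩ := QQ_inv hV hw hw' hs
  unfold DD
  rw [h1, h2]

lemma connTo_restr {G : SimpleGraph (Fin n)} {r : Fin n} {D Q : Finset (Fin n)} (hD : D ⊆ Q)
    (hr : r ∈ Q) : ConnTo (restr G Q) r D ↔ ConnTo G r D := by
  have : restr (restr G Q) (insert r D) = restr G (insert r D) := by
    ext a b
    simp only [restr]
    constructor
    · rintro ⟨⟨h, _⟩, h2⟩; exact ⟨h, h2⟩
    · rintro ⟨h, h2⟩
      exact ⟨⟨h, insert_subset hr hD h2.1, insert_subset hr hD h2.2⟩, h2⟩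
  unfold ConnTo
  rw [this]

lemma struct_ex {G : SimpleGraph (Fin n)} {r : Fin n} {d m s g : ℕ} {R1 R2 : Finset (Fin n)}
    (hG : ∀ v, (nb G v).card = d) (h12 : Disjoint R1 R2)
    (hJ : JP G m) (hD : DP G m g) (hs : 1 ≤ s) (hsm : s ≤ m) (hds : m ≤ d * s)
    (hR1 : 3 * m + 2 * d * s + d + 1 ≤ R1.card)
    (hg : ∀ y, y ≠ r → g + codeg G y r + 1 ≤ (nb G y ∩ R2).card) :
    ∃ D, Struct r d s (QQ (R1 ∪ R2) r G) (restr G (QQ (R1 ∪ R2) r G)) D := by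
  have hdd : ∀ R : Finset (Fin n), Disjoint (nb G r) (R \ insert r (nb G r)) := by
    intro R
    rw [disjoint_left]
    intro a ha h
    simp [ha] at h
  obtain ⟨D, d1, d2, d3, d4, d5⟩ := exists_struct (nb G r) (R1 \ insert r (nb G r))
    (R2 \ insert r (nb G r)) (fun a ha => by rwa [mem_nb] at ha) (hG r) (hdd _) (hdd _)
    (disjoint_of_subset_left sdiff_subset (disjoint_of_subset_right sdiff_subset h12))
    (by simp) (by simp) hJ hD hs hsm hds
    (by
      have h1 := card_le_card_sdiff_add_card (s := R1) (t := insert r (nb G r))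
      have h2 := card_insert_le r (nb G r)
      rw [hG] at h2
      omega)
    (by
      intro y hy
      have hyr : y ≠ r := by
        rintro rfl
        simp [mem_nb] at hy
      have h1 := hg y hyr
      have h2 : nb G y ∩ R2 ⊆ (nb G y ∩ (R2 \ insert r (nb G r))) ∪ (nb G y ∩ nb G r) ∪ {r} := by
        intro x hx
        simp only [mem_inter, mem_union, mem_sdiff, mem_insert, mem_singleton] at hx ⊢
        tauto
      have h3 := card_le_card h2
      have h4 := card_union_le ((nb G y ∩ (R2 \ insert r (nb G r))) ∪ (nb G y ∩ nb G r)) {r}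
      have h5 := card_union_le (nb G y ∩ (R2 \ insert r (nb G r))) (nb G y ∩ nb G r)
      rw [card_singleton] at h4
      unfold codeg at h1
      omega)
  have hsub : ∀ i, D i ⊆ QQ (R1 ∪ R2) r G := by
    intro i x hx
    have := d5 i hx
    simp only [QQ, mem_union, mem_sdiff, mem_insert] at this ⊢
    tauto
  exact ⟨D, d1, d2, fun i => (connTo_restr (hsub i) (by simp [QQ])).2 (d3 i), d4, hsub⟩

lemma card_nb_QQ {G : SimpleGraph (Fin n)} {d : ℕ} (P : Finset (Fin n)) (r y : Fin n) :
    (nb G y ∩ QQ P r G).card ≤ (nb G y ∩ P).card + codeg G y r + 1 := by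
  have h2 : nb G y ∩ QQ P r G ⊆ (nb G y ∩ P) ∪ (nb G y ∩ nb G r) ∪ {r} := by
    intro x hx
    simp only [QQ, mem_inter, mem_union, mem_insert, mem_singleton] at hx ⊢
    tauto
  have h3 := card_le_card h2
  have h4 := card_union_le ((nb G y ∩ P) ∪ (nb G y ∩ nb G r)) {r}
  have h5 := card_union_le (nb G y ∩ P) (nb G y ∩ nb G r)
  rw [card_singleton] at h4
  unfold codeg
  omega

lemma swI {d s : ℕ} (hd : 20 ≤ d) (P : Finset (Fin n)) (r v : Fin n) (S : Finset (Fin d))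
    (m0 k0 k1 : ℕ) (𝒯 : SimpleGraph (Fin n) → Prop)
    (hT1 : ∀ G ∈ Om n d, 𝒯 G → ∀ u v, u ≠ v → (codeg G u v : ℝ) ≤ d / 100)
    (hT2 : ∀ G ∈ Om n d, 𝒯 G → ∀ v, ((nb G v ∩ P).card : ℝ) ≤ d / 10)
    (hk : k0 ≤ k1) (hkm : k1 ≤ m0)
    (hineq : 8 * ((k1 : ℝ) * n) ≤ (m0 - k1) * (S.card * s) * d) :
    cnt n d (fun G => Base (QQ P r) (fun G => S.biUnion (DD P r d s G)) v m0 (S.card * s) G ∧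
      (Ys G v (QQ P r G) (S.biUnion (DD P r d s G))).card ≤ k0)
      ≤ (Om n d).card / 2 ^ (k1 - k0) + 2 * cnt n d (fun G => ¬ 𝒯 G) := by
  have hcd : ∀ G ∈ Om n d, ∀ w w' : Fin n, (d : ℝ) ≤ (nb G w \ nb G w').card + codeg G w w' := by
    intro G hG w w'
    have h1 := card_sdiff_add_card_inter (nb G w) (nb G w')
    rw [mem_Om.1 hG] at h1
    unfold codeg
    exact_mod_cast h1.ge
  have hd' : (20 : ℝ) ≤ d := by exact_mod_cast hd
  have hXr : ∀ G, ∀ x ∈ S.biUnion (DD P r d s G), x ∈ QQ P r G ∧ x ≠ r := by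
    intro G x hx
    obtain ⟨i, _, hi⟩ := mem_biUnion.1 hx
    exact ⟨(DD_sub P r d s G i).1 hi, fun h => (DD_sub P r d s G i).2 (h ▸ hi)⟩
  refine main_switch (by omega) (QQ P r) (fun G => S.biUnion (DD P r d s G)) v m0 (S.card * s) k0 k1
    (fun G x hx => (hXr G x hx).1) ?_ 𝒯 (d / 2) (d / 2) (by positivity) (by positivity) ?_ ?_ hk hkm ?_
  · intro G hG w w' s' z hV hw hw' hs
    have hsr := (hXr G s' hs).2
    exact ⟨(QQ_inv hV hw hw' hsr).1, by rw [DD_inv hV hw hw' hsr]⟩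
  · intro G hG hT hB x hx
    have hxv : x ≠ v := fun h => hB.1 (h ▸ hx)
    have hxr := (hXr G x hx).2
    have h1 := hcd G hG x v
    have h2 := hT1 G hG hT x v hxv
    have h3 := hT1 G hG hT x r hxr
    have h4 := hT2 G hG hT x
    have h5 : ((nb G x ∩ QQ P r G).card : ℝ) ≤ (nb G x ∩ P).card + codeg G x r + 1 := by
      exact_mod_cast card_nb_QQ (d := d) P r x
    have h6 : ((nb G x \ nb G v).card : ℝ) ≤ (((nb G x \ nb G v) \ QQ P r G).erase v).card + 1 +
        (nb G x ∩ QQ P r G).card := by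
      have a1 := card_sdiff_add_card_inter (nb G x \ nb G v) (QQ P r G)
      have a2 := pred_card_le_card_erase (s := (nb G x \ nb G v) \ QQ P r G) (a := v)
      have a3 : ((nb G x \ nb G v) ∩ QQ P r G).card ≤ (nb G x ∩ QQ P r G).card :=
        card_le_card (inter_subset_inter sdiff_subset (le_refl _))
      have : (nb G x \ nb G v).card ≤ (((nb G x \ nb G v) \ QQ P r G).erase v).card + 1 +
        (nb G x ∩ QQ P r G).card := by omega
      exact_mod_cast this
    linarith
  · intro G hG hT w w' hww
    have h1 := hcd G hG w w'
    have h2 := hT1 G hG hT w w' hww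
    have h4 : ((nb G w \ nb G w').card : ℝ) ≤ (((nb G w \ nb G w').erase v).erase w').card + 2 := by
      have a1 := pred_card_le_card_erase (s := (nb G w \ nb G w')) (a := v)
      have a2 := pred_card_le_card_erase (s := (nb G w \ nb G w').erase v) (a := w')
      have : (nb G w \ nb G w').card ≤ (((nb G w \ nb G w').erase v).erase w').card + 2 := by omega
      exact_mod_cast this
    linarith
  · push_cast
    calc 2 * ((k1 : ℝ) * (n * d)) = (8 * (k1 * n)) * (d / 4) := by ring
      _ ≤ ((m0 - k1) * (S.card * s) * d) * (d / 4) := by gcongr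
      _ = _ := by ring

/-- deterministic conclusion in the sparse regime -/
lemma detI {G : SimpleGraph (Fin n)} {r : Fin n} {d s t K : ℕ} {P : Finset (Fin n)}
    (hK : 1 ≤ K) (htd : t ≤ d)
    (hex : ∃ D, Struct r d s (QQ P r G) (restr G (QQ P r G)) D)
    (ha : ∀ v, v ≠ r → ∀ i, v ∉ DD P r d s G i → (∀ u ∈ DD P r d s G i, ¬ G.Adj v u) →
      K ≤ (Ys G v (QQ P r G) (DD P r d s G i)).card)
    (hb : ∀ v, v ≠ r → ∀ S : Finset (Fin d), S.card = K → v ∉ S.biUnion (DD P r d s G) →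
      (∀ u ∈ S.biUnion (DD P r d s G), ¬ G.Adj v u) →
      t ≤ (Ys G v (QQ P r G) (S.biUnion (DD P r d s G))).card) :
    HasISTs G r t := by
  obtain ⟨d1, d2, d3, d4, d5⟩ := DD_struct hex
  have hrQ : r ∈ QQ P r G := by simp [QQ]
  set D' : Fin t → Finset (Fin n) := fun i => DD P r d s G (Fin.castLE htd i) with hD'
  refine hasISTs_of_hall G r D' ?_ (fun i => d2 _) ?_ K (fun v => nb G v \ QQ P r G) ?_ ?_ ?_
  · intro i j hij
    apply d1
    intro h
    exact hij (Fin.castLE_injective htd h)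
  · intro i
    exact (connTo_restr (d5 _) hrQ).1 (d3 _)
  · intro v _ w hw
    rw [mem_sdiff, mem_nb] at hw
    exact ⟨hw.1, fun h => hw.2 (h ▸ hrQ), fun j hj => hw.2 (d5 _ hj)⟩
  · intro v hv i hm
    exact ha v hv _ hm.1 hm.2
  · intro v hv S hS hm
    have h := hb v hv (S.map (Fin.castLEEmb htd)) (by rw [card_map, hS])
      (by
        simp only [mem_biUnion, mem_map, not_exists, not_and]
        rintro _ ⟨i, hi, rfl⟩
        exact (hm i hi).1)
      (by
        simp only [mem_biUnion, mem_map]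
        rintro u ⟨_, ⟨i, hi, rfl⟩, hu⟩
        exact (hm i hi).2 u hu)
    have h2 : (univ.filter (fun i => Missing G D' v i)).card ≤ t := by
      refine (card_le_univ _).trans ?_
      simp
    refine h2.trans (h.trans (card_le_card ?_))
    intro w hw
    rw [mem_Ys] at hw
    rw [mem_filter, mem_sdiff, mem_nb]
    refine ⟨hw.1, ?_⟩
    obtain ⟨u, hu, hwu⟩ := hw.2
    simp only [mem_biUnion, mem_map] at hu
    obtain ⟨_, ⟨i, hi, rfl⟩, hu⟩ := hu
    exact ⟨i, hi, u, hu, hwu⟩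

end ISTProof

namespace ISTProof
open Finset
open scoped Classical
variable {n : ℕ}

/-- typical graphs -/
def TT {q : ℕ} (d : ℕ) (c : Fin n → Fin q) (j0 j1 : Fin q) (G : SimpleGraph (Fin n)) : Prop :=
  (∀ u v, u ≠ v → (codeg G u v : ℝ) ≤ d / (16 * q)) ∧
    ∀ v, Bal c (nb G v) j0 ∧ Bal c (nb G v) j1

/-- colour class -/
noncomputable def cls {q : ℕ} (c : Fin n → Fin q) (j : Fin q) : Finset (Fin n) :=
  univ.filter (fun x => c x = j)

lemma colN_cls {q : ℕ} (c : Fin n → Fin q) (j : Fin q) (F : Finset (Fin n)) :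
    colN c F j = (F ∩ cls c j).card := by
  unfold colN cls
  congr 1
  ext x; simp

lemma cls_card {q d : ℕ} {c : Fin n → Fin q} {j : Fin q} {G : SimpleGraph (Fin n)} (hd : 0 < d)
    (hG : ∀ v, (nb G v).card = d) (hB : ∀ v, Bal c (nb G v) j) :
    (n : ℝ) / (4 * q) ≤ (cls c j).card := by
  have h1 : ∑ v : Fin n, (nb G v ∩ cls c j).card = (cls c j).card * d := by
    have e1 : ∀ v, (nb G v ∩ cls c j).card = ∑ x ∈ cls c j, if G.Adj v x then 1 else 0 := by
      intro v
      rw [sum_boole, Nat.cast_id]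
      congr 1
      ext x; simp only [mem_inter, mem_nb, mem_filter]; tauto
    have e2 : ∀ x, (nb G x).card = ∑ v : Fin n, if G.Adj v x then 1 else 0 := by
      intro x
      rw [sum_boole, Nat.cast_id]
      congr 1
      ext v; simp only [mem_nb, mem_filter, mem_univ, true_and]
      exact G.adj_comm x v
    rw [sum_congr rfl (fun v _ => e1 v), sum_comm, ← sum_congr rfl (fun x _ => e2 x)]
    simp [hG]
  have h2 : ∑ v : Fin n, (d : ℝ) / (4 * q) ≤ ∑ v : Fin n, ((nb G v ∩ cls c j).card : ℝ) := by
    apply sum_le_sum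
    intro v _
    have := (hB v).1
    rw [hG, colN_cls] at this
    exact this
  rw [sum_const, card_univ, Fintype.card_fin, nsmul_eq_mul] at h2
  have h3 : ∑ v : Fin n, ((nb G v ∩ cls c j).card : ℝ) = (cls c j).card * d := by exact_mod_cast h1
  rw [h3] at h2
  have hd' : (0 : ℝ) < d := by exact_mod_cast hd
  have h4 : (n : ℝ) / (4 * q) * d ≤ (cls c j).card * d := by
    refine le_trans (le_of_eq ?_) h2
    ring
  exact le_of_mul_le_mul_right h4 hd'

lemma probT {q d B : ℕ} {l : ℝ} (j0 j1 : Fin q) (hn : 3 ≤ n) (hdn : d < n) (hl : l = Real.log n) (hl1 : 1 ≤ l)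
    (hnd : 20000 * (q : ℝ) * d ≤ n) (hd1 : 1 ≤ d)
    (hbig : (2 * B + 10) * l ≤ d / (32 * q)) :
    ∃ c : Fin n → Fin q, cnt n d (fun G => ¬ TT d c j0 j1 G) ≤ (Om n d).card / (n : ℝ) ^ B := by
  have hq0 : (0 : ℝ) < q := by exact_mod_cast j0.pos
  have hq1 : (1 : ℝ) ≤ q := by exact_mod_cast j0.pos
  have hn' : (3 : ℝ) ≤ n := by exact_mod_cast hn
  have hd1' : (1 : ℝ) ≤ d := by exact_mod_cast hd1
  have hB0 : (0 : ℝ) ≤ B := Nat.cast_nonneg _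
  have hqd : (d : ℝ) ≤ q * d := by nlinarith
  obtain ⟨c, hc⟩ := col_avg (n := n) (d := d) j0 j1
  refine ⟨c, ?_⟩
  obtain ⟨x, hx⟩ : ∃ x : ℝ, x = d / (32 * q) := ⟨_, rfl⟩
  have hx0 : 0 ≤ x := by rw [hx]; positivity
  obtain ⟨a, ha⟩ : ∃ a : ℕ, a = ⌈x⌉₊ := ⟨_, rfl⟩
  obtain ⟨L, hL⟩ : ∃ L : ℕ, L = ⌊x⌋₊ := ⟨_, rfl⟩
  have a1 : x ≤ a := by rw [ha]; exact Nat.le_ceil _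
  have a2 : (a : ℝ) < x + 1 := by rw [ha]; exact Nat.ceil_lt_add_one hx0
  have L1 : (L : ℝ) ≤ x := by rw [hL]; exact Nat.floor_le hx0
  have L2 : x < L + 1 := by rw [hL]; exact Nat.lt_floor_add_one _
  rw [← hx] at hbig
  have hx2 : (d : ℝ) / (16 * q) = 2 * x := by rw [hx]; field_simp; norm_num
  have hx8 : (d : ℝ) / (4 * q) = 8 * x := by rw [hx]; field_simp; norm_num
  have hxd : x * (64 * q * d) = 2 * d ^ 2 := by rw [hx]; field_simp; norm_num
  have hco := codeg_all (n := n) (d := d) a L (B + 1) (by omega) hdn (by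
    intro k hk hkd
    have hk' : (a : ℝ) ≤ k := by exact_mod_cast hk
    have hkd' : (k : ℝ) ≤ d := by exact_mod_cast hkd.le
    calc 2 * ((d : ℝ) - k) ^ 2 ≤ 2 * d ^ 2 := by
          have : (0 : ℝ) ≤ d - k := by linarith
          have h0 : (0 : ℝ) ≤ k := Nat.cast_nonneg _
          gcongr
          linarith
      _ = x * (64 * q * d) := hxd.symm
      _ ≤ (k + 1) * (n - 2 * d + k - 1) := by
          have h0 : (0 : ℝ) ≤ k := Nat.cast_nonneg _
          apply mul_le_mul (by linarith) (by linarith) (by positivity) (by linarith)) (by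
    rw [← hl]; push_cast; linarith)
  have hex := exp_small (n := n) (x := d / (4 * q)) (by omega) (B + 4) (by
    rw [← hl, hx8]; push_cast; nlinarith)
  have hW : (0 : ℝ) ≤ (Om n d).card := Nat.cast_nonneg _
  have hc2 : 4 * (n : ℝ) * Real.exp (-(d / (4 * q))) * (Om n d).card ≤
      (Om n d).card / (n : ℝ) ^ (B + 1) := by
    calc 4 * (n : ℝ) * Real.exp (-(d / (4 * q))) * (Om n d).card
        ≤ 4 * n * (1 / (n : ℝ) ^ (B + 4)) * (Om n d).card := by gcongr
      _ = (4 / (n : ℝ) ^ 2) * ((Om n d).card / (n : ℝ) ^ (B + 1)) := by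
          rw [show B + 4 = (B + 1) + 3 by ring, pow_add _ (B + 1) 3]
          field_simp
      _ ≤ 1 * ((Om n d).card / (n : ℝ) ^ (B + 1)) := by
          gcongr
          rw [div_le_one (by positivity)]
          nlinarith
      _ = _ := one_mul _
  have hsplit : cnt n d (fun G => ¬ TT d c j0 j1 G) ≤
      cnt n d (fun G => (¬ ∀ u v, u ≠ v → codeg G u v < a + L) ∨
        ¬ ∀ v, Bal c (nb G v) j0 ∧ Bal c (nb G v) j1) := by
    apply cnt_mono
    intro G _ h
    by_contra hcon
    rw [not_or, not_not, not_not] at hcon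
    apply h
    refine ⟨fun u v huv => ?_, hcon.2⟩
    have h1 := hcon.1 u v huv
    have h2 : (codeg G u v : ℝ) + 1 ≤ a + L := by exact_mod_cast h1
    rw [hx2]; linarith
  refine hsplit.trans (cnt_or.trans ?_)
  have e : (Om n d).card / (n : ℝ) ^ (B + 1) + (Om n d).card / (n : ℝ) ^ (B + 1) ≤
      (Om n d).card / (n : ℝ) ^ B := by
    rw [pow_succ, ← add_div, div_le_div_iff₀ (by positivity) (by positivity)]
    have : (0 : ℝ) ≤ (Om n d).card * (n : ℝ) ^ B := by positivity
    nlinarith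
  linarith [hc.trans hc2]

lemma unionI {d s B K : ℕ} (hn : 3 ≤ n) (hdn : d < n) (hd : 20 ≤ d) (P : Finset (Fin n))
    (K' : ℕ) (hK' : K' ≤ K) (hB : B = K + 5) (k0 k1 : ℕ → ℕ) (𝒯 : SimpleGraph (Fin n) → Prop)
    (hprob : cnt n d (fun G => ¬ 𝒯 G) ≤ (Om n d).card / (n : ℝ) ^ B)
    (hT1 : ∀ G ∈ Om n d, 𝒯 G → ∀ u v, u ≠ v → (codeg G u v : ℝ) ≤ d / 100)
    (hT2 : ∀ G ∈ Om n d, 𝒯 G → ∀ v, ((nb G v ∩ P).card : ℝ) ≤ d / 10)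
    (hk : ∀ m0, 3 * d ≤ 4 * m0 → m0 ≤ d → k0 m0 ≤ k1 m0 ∧ k1 m0 ≤ m0 ∧
      8 * ((k1 m0 : ℝ) * n) ≤ (m0 - k1 m0) * (K' * s) * d ∧
      2 * B * Real.log n ≤ (k1 m0 - k0 m0 : ℕ)) :
    cnt n d (fun G => ∃ p ∈ ((univ : Finset (Fin n)) ×ˢ (univ : Finset (Fin n))) ×ˢ
        (((range n).filter (fun m0 => 3 * d ≤ 4 * m0 ∧ m0 ≤ d)) ×ˢ
          (univ : Finset (Fin d)).powersetCard K'),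
      Base (QQ P p.1.1) (fun G => p.2.2.biUnion (DD P p.1.1 d s G)) p.1.2 p.2.1 (p.2.2.card * s) G ∧
      (Ys G p.1.2 (QQ P p.1.1 G) (p.2.2.biUnion (DD P p.1.1 d s G))).card ≤ k0 p.2.1)
      ≤ 3 / n * (Om n d).card := by
  have hn' : (3 : ℝ) ≤ n := by exact_mod_cast hn
  have hW : (0 : ℝ) ≤ (Om n d).card := Nat.cast_nonneg _
  refine (cnt_exists _ _).trans ?_
  refine (sum_le_sum (g := fun _ => 3 * ((Om n d).card / (n : ℝ) ^ B)) ?_).trans ?_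
  · rintro ⟨⟨r, v⟩, m0, S⟩ hp
    simp only [mem_product, mem_univ, mem_filter, mem_range, mem_powersetCard, true_and,
      subset_univ] at hp
    obtain ⟨⟨_, hm1, hm2⟩, hS⟩ := hp
    obtain ⟨h1, h2, h3, h4⟩ := hk m0 hm1 hm2
    refine (swI (s := s) hd P r v S m0 (k0 m0) (k1 m0) 𝒯 hT1 hT2 h1 h2 (by rw [hS]; exact h3)).trans ?_
    have hp := two_pow_small (n := n) (L := k1 m0 - k0 m0) (by omega) B h4
    have : ((Om n d).card : ℝ) / 2 ^ (k1 m0 - k0 m0) ≤ (Om n d).card / (n : ℝ) ^ B := by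
      rw [div_eq_mul_one_div, div_eq_mul_one_div _ ((n : ℝ) ^ B)]
      gcongr
    linarith
  · rw [sum_const, nsmul_eq_mul]
    simp only [card_product, card_univ, Fintype.card_fin, card_powersetCard]
    have e1 : ((range n).filter (fun m0 => 3 * d ≤ 4 * m0 ∧ m0 ≤ d)).card ≤ n := by
      refine (card_filter_le _ _).trans ?_
      simp
    have e2 : Nat.choose d K' ≤ n ^ K := by
      refine (Nat.choose_le_pow d K').trans ?_
      refine (Nat.pow_le_pow_left hdn.le K').trans ?_
      exact Nat.pow_le_pow_right (by omega) hK'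
    have e3 : ((n * n * (((range n).filter (fun m0 => 3 * d ≤ 4 * m0 ∧ m0 ≤ d)).card *
        Nat.choose d K') : ℕ) : ℝ) ≤ n * n * (n * (n : ℝ) ^ K) := by
      have : n * n * (((range n).filter (fun m0 => 3 * d ≤ 4 * m0 ∧ m0 ≤ d)).card *
        Nat.choose d K') ≤ n * n * (n * n ^ K) := by gcongr
      exact_mod_cast this
    have e5 : 3 / (n : ℝ) ^ 2 ≤ 3 / n := by
      gcongr
      nlinarith
    calc _ ≤ (n * n * (n * (n : ℝ) ^ K)) * (3 * ((Om n d).card / (n : ℝ) ^ B)) := by gcongr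
      _ = 3 / (n : ℝ) ^ 2 * (Om n d).card := by rw [hB, pow_add]; field_simp
      _ ≤ _ := by gcongr

end ISTProof

namespace ISTProof
open Finset
open scoped Classical
variable {n : ℕ}

lemma cls_disj {q : ℕ} (c : Fin n → Fin q) {j0 j1 : Fin q} (h : j0 ≠ j1) :
    Disjoint (cls c j0) (cls c j1) := by
  rw [disjoint_left]
  intro x hx hx'
  simp only [cls, mem_filter, mem_univ, true_and] at hx hx'
  exact h (hx.symm.trans hx')

lemma nbP_card {q d : ℕ} {c : Fin n → Fin q} {j0 j1 : Fin q} {G : SimpleGraph (Fin n)}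
    (hG : ∀ v, (nb G v).card = d) (hT : TT d c j0 j1 G) (v : Fin n) :
    ((nb G v ∩ (cls c j0 ∪ cls c j1)).card : ℝ) ≤ 3 * d / q + 3 * d / q := by
  have h1 := (hT.2 v).1.2
  have h2 := (hT.2 v).2.2
  rw [colN_cls, hG] at h1 h2
  have h3 : (nb G v ∩ (cls c j0 ∪ cls c j1)).card ≤
      (nb G v ∩ cls c j0).card + (nb G v ∩ cls c j1).card := by
    rw [inter_union_distrib_left]
    exact card_union_le _ _
  have h3' : ((nb G v ∩ (cls c j0 ∪ cls c j1)).card : ℝ) ≤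
      (nb G v ∩ cls c j0).card + (nb G v ∩ cls c j1).card := by exact_mod_cast h3
  linarith

/-- deterministic part of the sparse regime -/
lemma detcoreI {q d m s g K t e k : ℕ} {c : Fin n → Fin q} {j0 j1 : Fin q} {y z : ℝ}
    {G : SimpleGraph (Fin n)} (r : Fin n) (hG : ∀ v, (nb G v).card = d) (hdn : d < n) (hd0 : 0 < d)
    (hj : j0 ≠ j1)
    (hy : 16 * y = d / (16 * q)) (hy4 : 64 * y = d / (4 * q)) (hy3 : 768 * y = 3 * d / q)
    (hz4 : 64 * z = n / (4 * q)) (hy100 : 100 ≤ y) (hyd : 6400 * y ≤ d / 4)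
    (hT : TT d c j0 j1 G) (hJ : JP G m) (hD : DP G m g)
    (hs1 : 1 ≤ s) (hsm : s ≤ m) (hms : m ≤ d * s)
    (hR : ((3 * m + 2 * d * s + d + 1 : ℕ) : ℝ) ≤ 64 * z) (hg : (g : ℝ) ≤ 32 * y)
    (hK : 1 ≤ K) (hKk : K ≤ k + 1) (htd : t ≤ d) (he8 : 8 * e ≤ d)
    (hte : (t : ℝ) ≤ d - 1600 * y - 2 * e)
    (hA : ¬ ∃ p ∈ ((univ : Finset (Fin n)) ×ˢ (univ : Finset (Fin n))) ×ˢ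
        (((range n).filter (fun m0 => 3 * d ≤ 4 * m0 ∧ m0 ≤ d)) ×ˢ
          (univ : Finset (Fin d)).powersetCard 1),
      Base (QQ (cls c j0 ∪ cls c j1) p.1.1) (fun G => p.2.2.biUnion
        (DD (cls c j0 ∪ cls c j1) p.1.1 d s G)) p.1.2 p.2.1 (p.2.2.card * s) G ∧
      (Ys G p.1.2 (QQ (cls c j0 ∪ cls c j1) p.1.1 G) (p.2.2.biUnion
        (DD (cls c j0 ∪ cls c j1) p.1.1 d s G))).card ≤ (fun _ : ℕ => k) p.2.1)
    (hB : ¬ ∃ p ∈ ((univ : Finset (Fin n)) ×ˢ (univ : Finset (Fin n))) ×ˢ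
        (((range n).filter (fun m0 => 3 * d ≤ 4 * m0 ∧ m0 ≤ d)) ×ˢ
          (univ : Finset (Fin d)).powersetCard K),
      Base (QQ (cls c j0 ∪ cls c j1) p.1.1) (fun G => p.2.2.biUnion
        (DD (cls c j0 ∪ cls c j1) p.1.1 d s G)) p.1.2 p.2.1 (p.2.2.card * s) G ∧
      (Ys G p.1.2 (QQ (cls c j0 ∪ cls c j1) p.1.1 G) (p.2.2.biUnion
        (DD (cls c j0 ∪ cls c j1) p.1.1 d s G))).card ≤ (fun m0 : ℕ => m0 - 2 * e) p.2.1) :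
    HasISTs G r t := by
  obtain ⟨P, hP⟩ : ∃ P, P = cls c j0 ∪ cls c j1 := ⟨_, rfl⟩
  have hex : ∃ D, Struct r d s (QQ P r G) (restr G (QQ P r G)) D := by
    rw [hP]
    refine struct_ex (m := m) (g := g) hG (cls_disj c hj) hJ hD hs1 hsm hms ?_ ?_
    · have h1 := cls_card hd0 hG (fun v => (hT.2 v).1)
      rw [← hz4] at h1
      exact_mod_cast hR.trans h1
    · intro x hx
      have h1 := hT.1 x r hx
      have h2 := (hT.2 x).2.1
      rw [colN_cls, hG, ← hy4] at h2
      rw [← hy] at h1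
      have : ((g + codeg G x r + 1 : ℕ) : ℝ) ≤ (nb G x ∩ cls c j1).card := by
        push_cast; linarith
      exact_mod_cast this
  have hm0 : ∀ v, v ≠ r → (d : ℝ) - 1600 * y ≤ (nb G v \ QQ P r G).card := by
    intro v hv
    have h1 := hT.1 v r hv
    rw [← hy] at h1
    have h2 := nbP_card hG hT v
    rw [← hP, ← hy3] at h2
    have h3 := card_nb_QQ (G := G) (d := d) P r v
    have h4 : (nb G v \ QQ P r G).card + (nb G v ∩ QQ P r G).card = d := by
      rw [← hG v]; exact card_sdiff_add_card_inter _ _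
    have h3' : ((nb G v ∩ QQ P r G).card : ℝ) ≤ (nb G v ∩ P).card + codeg G v r + 1 := by
      exact_mod_cast h3
    have h4' : ((nb G v \ QQ P r G).card : ℝ) + (nb G v ∩ QQ P r G).card = d := by
      exact_mod_cast h4
    linarith
  have hm1 : ∀ v, (nb G v \ QQ P r G).card ≤ d := by
    intro v
    rw [← hG v]; exact card_le_card sdiff_subset
  have hm2 : ∀ v, v ≠ r → 3 * d ≤ 4 * (nb G v \ QQ P r G).card := by
    intro v hv
    have := hm0 v hv
    have : 3 * (d : ℝ) ≤ 4 * (nb G v \ QQ P r G).card := by linarith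
    exact_mod_cast this
  obtain ⟨s1, s2, s3, s4, s5⟩ := DD_struct hex
  rw [← hP] at hA hB
  have hcard : ∀ S : Finset (Fin d), S.card * s ≤ (S.biUnion (DD P r d s G)).card := by
    intro S
    rw [card_biUnion (fun i _ j _ hij => s1 i j hij)]
    calc S.card * s = ∑ i ∈ S, s := by simp
      _ ≤ _ := sum_le_sum (fun i _ => s4 i)
  refine detI (K := K) (P := P) (s := s) hK htd hex ?_ ?_
  · intro v hv i h1 h2
    by_contra hcon
    apply hA
    refine ⟨((r, v), ((nb G v \ QQ P r G).card, {i})), ?_, ?_, ?_⟩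
    · simp only [mem_product, mem_univ, mem_filter, mem_range, mem_powersetCard, true_and,
        subset_univ, card_singleton, and_true]
      exact ⟨lt_of_le_of_lt (hm1 v) hdn, hm2 v hv, hm1 v⟩
    · refine ⟨?_, ?_, ?_, rfl⟩
      · simpa using h1
      · simpa using h2
      · exact hcard {i}
    · simp only [singleton_biUnion]
      omega
  · intro v hv S hS h1 h2
    by_contra hcon
    apply hB
    refine ⟨((r, v), ((nb G v \ QQ P r G).card, S)), ?_, ?_, ?_⟩
    · simp only [mem_product, mem_univ, mem_filter, mem_range, mem_powersetCard, true_and,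
        subset_univ]
      exact ⟨⟨lt_of_le_of_lt (hm1 v) hdn, hm2 v hv, hm1 v⟩, hS⟩
    · exact ⟨h1, h2, hcard S, rfl⟩
    · simp only
      have h3 := hm0 v hv
      have h4 : (t : ℝ) ≤ (nb G v \ QQ P r G).card - 2 * e := by linarith
      have h5 : (t : ℝ) + 2 * e ≤ (nb G v \ QQ P r G).card := by linarith
      have h6 : t + 2 * e ≤ (nb G v \ QQ P r G).card := by exact_mod_cast h5
      omega

set_option maxHeartbeats 1600000 in
lemma coreI {d B K q : ℕ} {ε l y z : ℝ} (hn : 3 ≤ n) (hdn : d < n) (hl : l = Real.log n)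
    (hl1 : 1 ≤ l) (hB : B = K + 5) (hε : 0 < ε) (hε' : ε < 1) (hq : 100 ≤ q)
    (hεq : 100 ≤ ε * q) (hεK : 2048 * q ≤ ε * K) (hK1 : 1 ≤ K)
    (hyd : (d : ℝ) = 256 * q * y) (hzn : (n : ℝ) = 256 * q * z)
    (hbig : 8192 * q * (B * l) ≤ y) (hzd : 78 * (d : ℝ) ≤ z) (hnd : 20000 * (q : ℝ) * d ≤ n) :
    cnt n d (fun G => ¬ ∀ r, HasISTs G r ⌊(1 - ε) * (d : ℝ)⌋₊) ≤ 10 / n * (Om n d).card := by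
  have hq' : (100 : ℝ) ≤ q := by exact_mod_cast hq
  have hn' : (3 : ℝ) ≤ n := by exact_mod_cast hn
  have hBK : (B : ℝ) = K + 5 := by rw [hB]; push_cast; ring
  have hK1' : (1 : ℝ) ≤ K := by exact_mod_cast hK1
  have hBl : (B : ℝ) ≤ B * l := by nlinarith
  have hlB : l ≤ B * l := by nlinarith
  have hy1 : 819200 * (B * l) ≤ y := by
    have : 0 ≤ (B : ℝ) * l := by linarith
    nlinarith
  have hyq : 8192 * (q : ℝ) ≤ y := by nlinarith
  have hy0 : 819200 ≤ y := by linarith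
  have hyq1 : 100 * y ≤ q * y := by gcongr
  have hd1 : 25600 * y ≤ d := by rw [hyd]; linarith
  have hdp : (0 : ℝ) < d := by linarith
  have hd0 : 0 < d := by exact_mod_cast hdp
  have hdq : 2097152 * (q : ℝ) ^ 2 ≤ d := by
    rw [hyd]; nlinarith
  have hz0 : 0 < z := by linarith
  have hqz : 100 * z ≤ q * z := by gcongr
  have h0q : (0 : ℝ) < q := by linarith
  have hyA : 16 * y = d / (16 * q) := by rw [hyd]; field_simp; norm_num
  have hyB : 64 * y = d / (4 * q) := by rw [hyd]; field_simp; norm_num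
  have hyC : 768 * y = 3 * d / q := by rw [hyd]; field_simp; norm_num
  have hyD : 8 * y = d / (32 * q) := by rw [hyd]; field_simp; norm_num
  have hzA : 64 * z = n / (4 * q) := by rw [hzn]; field_simp; norm_num
  have hεd : 25600 * y ≤ ε * d := by
    rw [hyd]
    have : 100 * y ≤ ε * q * y := by gcongr
    linarith
  have hεdd : ε * d ≤ d := by nlinarith
  -- parameters
  obtain ⟨m, hm⟩ : ∃ m : ℕ, m = ⌊2 * z⌋₊ := ⟨_, rfl⟩
  have m1 : (m : ℝ) ≤ 2 * z := by rw [hm]; exact Nat.floor_le (by positivity)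
  have m2 : 2 * z < m + 1 := by rw [hm]; exact Nat.lt_floor_add_one _
  obtain ⟨g, hg⟩ : ∃ g : ℕ, g = ⌊32 * y⌋₊ := ⟨_, rfl⟩
  have g1 : (g : ℝ) ≤ 32 * y := by rw [hg]; exact Nat.floor_le (by linarith)
  have g2 : 32 * y < g + 1 := by rw [hg]; exact Nat.lt_floor_add_one _
  obtain ⟨s, hs⟩ : ∃ s : ℕ, s = ⌈16 * z / d⌉₊ := ⟨_, rfl⟩
  have s1 : 16 * z / d ≤ s := by rw [hs]; exact Nat.le_ceil _
  have s2 : (s : ℝ) < 16 * z / d + 1 := by rw [hs]; exact Nat.ceil_lt_add_one (by positivity)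
  have s3 : 16 * z ≤ s * d := by rwa [div_le_iff₀ hdp] at s1
  have s4 : (s : ℝ) * d ≤ 16 * z + d := by
    calc (s : ℝ) * d ≤ (16 * z / d + 1) * d := by gcongr
      _ = _ := by field_simp
  have hspos : (0 : ℝ) < s := by
    have : 0 < 16 * z / d := by positivity
    linarith
  have hs1 : 1 ≤ s := by
    have : 0 < s := by exact_mod_cast hspos
    omega
  have hszm : (s : ℝ) ≤ m := by
    have : 16 * z / d ≤ z / 2 := by
      rw [div_le_iff₀ hdp]
      have : z * 32 ≤ z * d := by gcongr; linarith
      linarith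
    linarith
  obtain ⟨k1, hk1⟩ : ∃ k : ℕ, k = ⌊y⌋₊ := ⟨_, rfl⟩
  have k1a : (k1 : ℝ) ≤ y := by rw [hk1]; exact Nat.floor_le (by linarith)
  have k1b : y < k1 + 1 := by rw [hk1]; exact Nat.lt_floor_add_one _
  have hkh : k1 ≤ 2 * (k1 - k1 / 2) := by omega
  have hkh' : (k1 : ℝ) ≤ 2 * ((k1 - k1 / 2 : ℕ) : ℝ) := by exact_mod_cast hkh
  obtain ⟨e, he⟩ : ∃ e : ℕ, e = ⌊ε * d / 8⌋₊ := ⟨_, rfl⟩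
  have e1 : (e : ℝ) ≤ ε * d / 8 := by rw [he]; exact Nat.floor_le (by positivity)
  have e2 : ε * d / 8 < e + 1 := by rw [he]; exact Nat.lt_floor_add_one _
  have he16 : ε * d / 16 ≤ e := by linarith
  have he8 : 8 * e ≤ d := by
    have : 8 * (e : ℝ) ≤ d := by linarith
    exact_mod_cast this
  have j01 : (⟨0, by omega⟩ : Fin q) ≠ ⟨1, by omega⟩ := by simp
  obtain ⟨j0, hj0⟩ : ∃ j : Fin q, j = ⟨0, by omega⟩ := ⟨_, rfl⟩
  obtain ⟨j1, hj1⟩ : ∃ j : Fin q, j = ⟨1, by omega⟩ := ⟨_, rfl⟩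
  rw [← hj0, ← hj1] at j01
  obtain ⟨c, hc⟩ := probT (B := B) j0 j1 hn hdn hl hl1 hnd hd0 (by rw [← hyD]; linarith)
  have hT1 : ∀ G ∈ Om n d, TT d c j0 j1 G → ∀ u v, u ≠ v → (codeg G u v : ℝ) ≤ d / 100 := by
    intro G _ hT u v huv
    have := hT.1 u v huv
    rw [← hyA] at this
    linarith
  have hT2 : ∀ G ∈ Om n d, TT d c j0 j1 G → ∀ v,
      ((nb G v ∩ (cls c j0 ∪ cls c j1)).card : ℝ) ≤ d / 10 := by
    intro G hG hT v
    have := nbP_card (mem_Om.1 hG) hT v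
    rw [← hyC] at this
    linarith
  have hd20 : 20 ≤ d := by
    have : (20 : ℝ) ≤ d := by linarith
    exact_mod_cast this
  have hUA := unionI (s := s) hn hdn hd20 (cls c j0 ∪ cls c j1) 1 hK1 hB (fun _ => k1 / 2)
    (fun _ => k1) (TT d c j0 j1) hc hT1 hT2 (by
      intro m0 h1 h2
      have h1' : 3 * (d : ℝ) ≤ 4 * m0 := by exact_mod_cast h1
      have hkm : (k1 : ℝ) ≤ m0 := by linarith
      refine ⟨by omega, by exact_mod_cast hkm, ?_, ?_⟩
      · have q1 : (d : ℝ) / 2 ≤ m0 - k1 := by linarith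
        calc 8 * ((k1 : ℝ) * n) ≤ 8 * (y * n) := by gcongr
          _ = (d / 2) * (16 * z) := by rw [hyd, hzn]; ring
          _ ≤ (m0 - k1) * (s * d) := by gcongr
          _ = _ := by push_cast; ring
      · rw [← hl]; linarith)
  have hUB := unionI (s := s) hn hdn hd20 (cls c j0 ∪ cls c j1) K le_rfl hB
    (fun m0 => m0 - 2 * e) (fun m0 => m0 - e) (TT d c j0 j1) hc hT1 hT2 (by
      intro m0 h1 h2
      have h2' : (m0 : ℝ) ≤ d := by exact_mod_cast h2
      have e0 : (0 : ℝ) ≤ e := Nat.cast_nonneg _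
      refine ⟨by omega, by omega, ?_, ?_⟩
      · rw [Nat.cast_sub (by omega)]
        calc 8 * (((m0 : ℝ) - e) * n) ≤ 8 * (d * n) := by gcongr; linarith
          _ = (2048 * q) * (d * z) := by rw [hzn]; ring
          _ ≤ (ε * K) * (d * z) := by gcongr
          _ = ε * d / 16 * K * (16 * z) := by ring
          _ ≤ e * K * (s * d) := by gcongr
          _ = _ := by ring
      · have : (m0 - e) - (m0 - 2 * e) = e := by omega
        rw [this, ← hl]
        linarith)
  have hJ := JP_all (n := n) (d := d) (m := m) hd0 (by omega) (by linarith) (by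
    have q1 : z ≤ m := by linarith
    calc 32 * (n : ℝ) * n = z ^ 2 * (2097152 * q ^ 2) := by rw [hzn]; ring
      _ ≤ (m : ℝ) ^ 2 * d := by gcongr)
  have hDP := DP_all (n := n) (d := d) (m := m) (g := g) hd0 hn (by
      have : 16 * (m : ℝ) ≤ n := by rw [hzn]; linarith
      exact_mod_cast this) (by
      have : 8 * (d : ℝ) ≤ n := by rw [hzn]; linarith
      exact_mod_cast this) (by
      have : 8 * (m : ℝ) * d ≤ g * n := by
        calc 8 * (m : ℝ) * d ≤ 8 * (2 * z) * d := by gcongr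
          _ = 16 * y * n := by rw [hyd, hzn]; ring
          _ ≤ g * n := by gcongr; linarith
      exact_mod_cast this) (by rw [← hl]; linarith)
  have hTn : cnt n d (fun G => ¬ TT d c j0 j1 G) ≤ 1 / n * (Om n d).card := by
    refine hc.trans ?_
    rw [div_eq_mul_one_div, mul_comm]
    gcongr
    have : (n : ℝ) ^ 1 ≤ (n : ℝ) ^ B := pow_le_pow_right₀ (by linarith) (by omega)
    simpa using this
  refine (cnt_mono (Q := fun G => (¬ TT d c j0 j1 G) ∨ (¬ JP G m) ∨ (¬ DP G m g) ∨ _ ∨ _) ?_).trans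
    ((cnt_or.trans (add_le_add hTn (cnt_or.trans (add_le_add hJ (cnt_or.trans
      (add_le_add hDP (cnt_or.trans (add_le_add hUA hUB)))))))).trans ?_)
  · intro G hG hno
    by_contra hcon
    simp only [not_or, not_not] at hcon
    obtain ⟨c1, c2, c3, c4, c5⟩ := hcon
    apply hno
    intro r
    have htd : ((⌊(1 - ε) * (d : ℝ)⌋₊ : ℕ) : ℝ) ≤ (1 - ε) * d :=
      Nat.floor_le (by apply mul_nonneg <;> linarith)
    refine detcoreI (K := K) (e := e) (k := k1 / 2) (m := m) (g := g) (s := s) (y := y) (z := z) r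
      (mem_Om.1 hG) hdn hd0 j01 hyA hyB hyC hzA (by linarith) (by linarith) c1 c2 c3 hs1
      (by exact_mod_cast hszm) ?_ ?_ g1 hK1 ?_ ?_ he8 ?_ c4 c5
    · have : (m : ℝ) ≤ d * s := by linarith
      exact_mod_cast this
    · push_cast
      linarith
    · have : K ≤ k1 / 2 := by
        have : 2 * (K : ℝ) ≤ k1 := by linarith
        have : 2 * K ≤ k1 := by exact_mod_cast this
        omega
      omega
    · have : ((⌊(1 - ε) * (d : ℝ)⌋₊ : ℕ) : ℝ) ≤ d := by
        have : 0 ≤ ε * d := by positivity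
        linarith
      exact_mod_cast this
    · linarith
  · have hx : 0 ≤ 1 / (n : ℝ) * (Om n d).card := by positivity
    have h3 : 3 / (n : ℝ) * (Om n d).card = 3 * (1 / n * (Om n d).card) := by ring
    have h10 : 10 / (n : ℝ) * (Om n d).card = 10 * (1 / n * (Om n d).card) := by ring
    linarith

theorem regimeI (ε : ℝ) (hε : 0 < ε) (hε' : ε < 1) : ∃ C δ1 : ℝ, 0 < C ∧ 0 < δ1 ∧ δ1 ≤ 1 ∧
    ∀ n d : ℕ, 3 ≤ n → d < n → C * Real.log n ≤ d → (d : ℝ) ≤ δ1 * n →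
      cnt n d (fun G => ¬ ∀ r, HasISTs G r ⌊(1 - ε) * (d : ℝ)⌋₊) ≤ 10 / n * (Om n d).card := by
  obtain ⟨q, hq⟩ := exists_nat_gt (100 / ε + 100)
  have hq0 : 0 < 100 / ε := by positivity
  have hq100 : (100 : ℝ) ≤ q := by linarith
  have hqp : (0 : ℝ) < q := by linarith
  obtain ⟨K, hK⟩ := exists_nat_gt (2048 * q / ε + 1)
  have hK0 : 0 < 2048 * q / ε := by positivity
  have hK1 : (1 : ℝ) ≤ K := by linarith
  obtain ⟨B, hB⟩ : ∃ B, B = K + 5 := ⟨_, rfl⟩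
  refine ⟨2097152 * q ^ 2 * B, 1 / (20000 * q), ?_, by positivity, ?_, ?_⟩
  · have : (0 : ℝ) < B := by rw [hB]; positivity
    positivity
  · rw [div_le_one (by positivity)]; linarith
  intro n d hn hdn hlog hd
  have hd' : 20000 * (q : ℝ) * d ≤ n := by
    rw [one_div, inv_mul_eq_div, le_div_iff₀ (by positivity)] at hd
    linarith
  refine coreI (q := q) (K := K) (B := B) (y := d / (256 * q)) (z := n / (256 * q)) hn hdn rfl
    (log_ge_one hn) hB hε hε' (by exact_mod_cast hq100) ?_ ?_ (by exact_mod_cast hK1)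
    (by field_simp) (by field_simp) ?_ ?_ hd'
  · have : 100 / ε < q := by linarith
    rw [div_lt_iff₀ hε] at this; linarith
  · have : 2048 * q / ε < K := by linarith
    rw [div_lt_iff₀ hε] at this; linarith
  · rw [le_div_iff₀ (by positivity)]; linarith
  · rw [le_div_iff₀ (by positivity)]; nlinarith [(Nat.cast_nonneg d : (0:ℝ) ≤ d)]

end ISTProof

namespace ISTProof
open Finset
open scoped Classical
variable {n : ℕ}

lemma Om_nonempty {n d : ℕ} (hdn : d < n) (he : Even (n * d)) : 0 < (Om n d).card := by
  have hn0 : NeZero n := ⟨by omega⟩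
  obtain ⟨k, hk⟩ : ∃ k, k = d / 2 := ⟨_, rfl⟩
  have hodd : d % 2 = 1 → n % 2 = 0 := by
    intro h
    rw [Nat.even_mul] at he
    rcases he with he | he
    · exact Nat.even_iff.1 he
    · rw [Nat.even_iff] at he; omega
  obtain ⟨p, hp⟩ : ∃ p : ℕ → Prop, p = fun x => (1 ≤ x ∧ x ≤ k) ∨ (n - k ≤ x ∧ x < n) ∨
    (d % 2 = 1 ∧ 2 * x = n) := ⟨_, rfl⟩
  have hcard : ((univ : Finset (Fin n)).filter (fun x => p x.val)).card = d := by
    have h1 : ((univ : Finset (Fin n)).filter (fun x => p x.val)).card =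
        ((range n).filter p).card := by
      rw [← card_map Fin.valEmbedding]
      congr 1
      ext x
      simp only [mem_map, mem_filter, mem_univ, true_and, Fin.valEmbedding_apply, mem_range]
      constructor
      · rintro ⟨a, ha, rfl⟩; exact ⟨a.2, ha⟩
      · rintro ⟨hx, h⟩; exact ⟨⟨x, hx⟩, h, rfl⟩
    rw [h1]
    rcases Nat.mod_two_eq_zero_or_one d with h | h
    · have h2 : (range n).filter p = Icc 1 k ∪ Ico (n - k) n := by
        ext x
        simp only [hp, mem_filter, mem_range, mem_union, mem_Icc, mem_Ico]
        omega
      rw [h2, card_union_of_disjoint]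
      · simp only [Nat.card_Icc, Nat.card_Ico]; omega
      · rw [disjoint_left]; intro x; simp only [mem_Icc, mem_Ico]; omega
    · have h3 := hodd h
      have h2 : (range n).filter p = insert (n / 2) (Icc 1 k ∪ Ico (n - k) n) := by
        ext x
        simp only [hp, mem_filter, mem_range, mem_union, mem_Icc, mem_Ico, mem_insert]
        omega
      rw [h2, card_insert_of_notMem, card_union_of_disjoint]
      · simp only [Nat.card_Icc, Nat.card_Ico]; omega
      · rw [disjoint_left]; intro x; simp only [mem_Icc, mem_Ico]; omega
      · simp only [mem_union, mem_Icc, mem_Ico]; omega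
  have hp0 : ¬ p 0 := by rw [hp]; simp only; omega
  have hneg : ∀ x : Fin n, p x.val → p (-x).val := by
    intro x hx
    have hx0 : x.val ≠ 0 := by
      intro h; rw [h] at hx; exact hp0 hx
    have hxn := x.2
    have : (-x).val = n - x.val := by
      rw [Fin.val_neg']
      exact Nat.mod_eq_of_lt (by omega)
    rw [this]
    rw [hp] at hx ⊢
    simp only at hx ⊢
    omega
  rw [card_pos]
  refine ⟨⟨fun u v => p (v - u).val, ⟨fun u v h => ?_⟩, ⟨fun u h => ?_⟩⟩, mem_Om.2 fun u => ?_⟩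
  · have := hneg _ h
    rwa [neg_sub] at this
  · simp only [sub_self] at h
    exact hp0 h
  · rw [← hcard]
    have : nb (⟨fun u v => p (v - u).val, ⟨fun u v h => by
        have := hneg _ h
        rwa [neg_sub] at this⟩, ⟨fun u h => by
          simp only [sub_self] at h
          exact hp0 h⟩⟩ : SimpleGraph (Fin n)) u =
        ((univ : Finset (Fin n)).filter (fun x => p x.val)).map (addLeftEmbedding u) := by
      ext v
      simp only [mem_nb, mem_map, mem_filter, mem_univ, true_and, addLeftEmbedding_apply]
      constructor
      · intro h; exact ⟨v - u, h, by simp⟩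
      · rintro ⟨a, ha, rfl⟩; simpa using ha
    rw [this, card_map]

lemma regProb_eq {n d : ℕ} (A : SimpleGraph (Fin n) → Prop) (h : 0 < (Om n d).card) :
    regProb n d A = 1 - cnt n d (fun G => ¬ A G) / (Om n d).card := by
  have hc : ∀ (G : SimpleGraph (Fin n)) v, Nat.card (G.neighborSet v) = (nb G v).card := by
    intro G v
    rw [Nat.card_coe_set_eq, ← Set.ncard_coe_finset]
    congr 1
    ext x
    simp [mem_nb]
  have h2 : (univ.filter (fun G : SimpleGraph (Fin n) =>
      ∀ v, Nat.card (G.neighborSet v) = d)) = Om n d := by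
    ext G; simp only [mem_Om, hc, mem_filter, mem_univ, true_and]
  have h1 : (univ.filter (fun G : SimpleGraph (Fin n) =>
      (∀ v, Nat.card (G.neighborSet v) = d) ∧ A G)) = (Om n d).filter A := by
    ext G; simp only [mem_Om, hc, mem_filter, mem_univ, true_and]
  have h3 : ((Om n d).filter A).card + ((Om n d).filter (fun G => ¬ A G)).card = (Om n d).card :=
    card_filter_add_card_filter_not _
  have h3' : (((Om n d).filter A).card : ℝ) + ((Om n d).filter (fun G => ¬ A G)).card
    = (Om n d).card := by exact_mod_cast h3
  have h4 : cnt n d (fun G => ¬ A G) = ((Om n d).filter (fun G => ¬ A G)).card := by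
    unfold cnt ev
    congr 2
    ext G; simp only [mem_filter]
  have hpos : (0 : ℝ) < (Om n d).card := by exact_mod_cast h
  unfold regProb
  rw [h1, h2, h4]
  field_simp
  linarith

lemma bad_zero {n d t : ℕ} (h : ∀ G ∈ Om n d, ∀ r, HasISTs G r t) :
    cnt n d (fun G => ¬ ∀ r, HasISTs G r t) ≤ 10 / n * (Om n d).card := by
  have : cnt n d (fun G => ¬ ∀ r, HasISTs G r t) = 0 := by
    unfold cnt
    have : ev n d (fun G => ¬ ∀ r, HasISTs G r t) = ∅ := by
      rw [eq_empty_iff_forall_notMem]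
      intro G hG
      unfold ev at hG
      simp only [mem_filter] at hG
      exact hG.2 (h G hG.1)
    rw [this]; simp
  rw [this]; positivity

theorem main_bound (ε : ℝ) (hε : 0 < ε) : ∃ C : ℝ, 0 < C ∧
    ∀ n d : ℕ, 3 ≤ n → d < n → C * Real.log n ≤ d →
      cnt n d (fun G => ¬ ∀ r, HasISTs G r ⌊(1 - ε) * (d : ℝ)⌋₊) ≤ 10 / n * (Om n d).card := by
  rcases le_or_gt 1 ε with h1 | h1
  · refine ⟨1, one_pos, fun n d _ _ _ => bad_zero ?_⟩
    intro G _ r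
    have : ⌊(1 - ε) * (d : ℝ)⌋₊ = 0 := by
      apply Nat.floor_of_nonpos
      apply mul_nonpos_of_nonpos_of_nonneg
      · linarith
      · positivity
    rw [this]
    exact ⟨Fin.elim0, fun i => i.elim0, fun v _ i => i.elim0⟩
  · obtain ⟨C1, δ1, hC1, hδ, hδ', H1⟩ := regimeI ε hε h1
    obtain ⟨C2, hC2, H2⟩ := regimeII ε δ1 (ε / 4) hε h1 hδ hδ' (by linarith) (by linarith)
    refine ⟨C1 + C2 + 4 / ε, by positivity, ?_⟩
    intro n d hn hdn hlog
    have hl := log_ge_one hn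
    have a1 : 0 ≤ C1 * Real.log n := by positivity
    have a2 : 0 ≤ C2 * Real.log n := by positivity
    have a3 : 0 ≤ 4 / ε * Real.log n := by positivity
    have a4 : 4 / ε ≤ 4 / ε * Real.log n := le_mul_of_one_le_right (by positivity) hl
    have hb : C1 * Real.log n + C2 * Real.log n + 4 / ε * Real.log n ≤ d := by linarith
    rcases le_or_gt (d : ℝ) (δ1 * n) with h2 | h2
    · exact H1 n d hn hdn (by linarith) h2
    rcases le_or_gt (d : ℝ) ((1 - ε / 4) * n) with h3 | h3
    · exact H2 n d hn hdn (by linarith) h2.le h3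
    · apply bad_zero
      intro G hG r
      refine regimeIII G r (mem_Om.1 hG) ?_ hdn
      have hd4 : 4 ≤ ε * d := by
        have : 4 / ε ≤ d := by linarith
        rw [div_le_iff₀ hε] at this; linarith
      have htd : ((⌊(1 - ε) * (d : ℝ)⌋₊ : ℕ) : ℝ) ≤ (1 - ε) * d :=
        Nat.floor_le (by apply mul_nonneg; linarith; positivity)
      have hn' : (3 : ℝ) ≤ n := by exact_mod_cast hn
      have e1 : ε / 4 * n ≤ 1 / 4 * n := by gcongr
      have e2 : ε * (3 / 4 * n) ≤ ε * d := by gcongr; linarith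
      have : ((⌊(1 - ε) * (d : ℝ)⌋₊ : ℕ) : ℝ) + 1 + n ≤ 2 * d := by linarith
      exact_mod_cast this

end ISTProof

/-- For `d(n) ≤ n-1` with `d(n)/log n → ∞` and every `ε > 0`, with high probability
(along those `n` with `n·d(n)` even) the random `d(n)`-regular graph has, for every
vertex `r`, at least `⌊(1-ε) d(n)⌋` independent spanning trees rooted at `r`. -/
theorem stmt2 (d : ℕ → ℕ)
    (hd : ∀ᶠ n : ℕ in Filter.atTop, d n ≤ n - 1)
    (hgrow : Filter.Tendsto (fun n : ℕ => (d n : ℝ) / Real.log n) Filter.atTop Filter.atTop)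
    (ε : ℝ) (hε : 0 < ε) :
    Filter.Tendsto
      (fun n : ℕ => regProb n (d n)
        (fun G => ∀ r : Fin n, HasISTs G r ⌊(1 - ε) * (d n : ℝ)⌋₊))
      (Filter.atTop ⊓ Filter.principal {n : ℕ | Even (n * d n)}) (nhds 1) := by
  obtain ⟨C, hC, H⟩ := ISTProof.main_bound ε hε
  have hlow : Filter.Tendsto (fun n : ℕ => (1 : ℝ) - 10 / n)
      (Filter.atTop ⊓ Filter.principal {n : ℕ | Even (n * d n)}) (nhds 1) := by
    have h1 : Filter.Tendsto (fun n : ℕ => (1 : ℝ) - 10 / n) Filter.atTop (nhds (1 - 0)) :=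
      tendsto_const_nhds.sub (tendsto_const_div_atTop_nhds_zero_nat 10)
    rw [sub_zero] at h1
    exact h1.mono_left inf_le_left
  have hev : ∀ᶠ n : ℕ in Filter.atTop ⊓ Filter.principal {n : ℕ | Even (n * d n)},
      (1 : ℝ) - 10 / n ≤ regProb n (d n)
        (fun G => ∀ r : Fin n, HasISTs G r ⌊(1 - ε) * (d n : ℝ)⌋₊) ∧
      regProb n (d n) (fun G => ∀ r : Fin n, HasISTs G r ⌊(1 - ε) * (d n : ℝ)⌋₊) ≤ 1 := by
    rw [Filter.eventually_inf_principal]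
    filter_upwards [hd, hgrow.eventually_ge_atTop C, Filter.eventually_ge_atTop 3]
      with n h1 h2 h3 h4
    have hdn : d n < n := by omega
    have hl := ISTProof.log_ge_one h3
    rw [le_div_iff₀ (by linarith)] at h2
    have hpos := ISTProof.Om_nonempty hdn h4
    have hpos' : (0 : ℝ) < (ISTProof.Om n (d n)).card := by exact_mod_cast hpos
    have hb := H n (d n) h3 hdn h2
    rw [ISTProof.regProb_eq _ hpos]
    constructor
    · have : ISTProof.cnt n (d n) (fun G => ¬ ∀ r, HasISTs G r ⌊(1 - ε) * (d n : ℝ)⌋₊) /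
          (ISTProof.Om n (d n)).card ≤ 10 / n := by
        rw [div_le_iff₀ hpos']; exact hb
      linarith
    · have : 0 ≤ ISTProof.cnt n (d n) (fun G => ¬ ∀ r, HasISTs G r ⌊(1 - ε) * (d n : ℝ)⌋₊) /
          (ISTProof.Om n (d n)).card := div_nonneg ISTProof.cnt_nonneg hpos'.le
      linarith
  exact tendsto_of_tendsto_of_tendsto_of_le_of_le' hlow tendsto_const_nhds
    (hev.mono fun _ h => h.1) (hev.mono fun _ h => h.2)
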